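/- Let n > 2. Assume f satisfies (f1), (f2), (f5): s ↦ s·f'(s)/f(s) is nonincreasing on [β,∞), and (f6): β·f'(β)/f(β) ≤ n/(n−2). Then the problem u''(r) + ((n−1)/r)u'(r) + f(u(r)) = 0 on (0,∞), u'(0) = 0, lim_{r→∞} u(r) = 0, has at most one solution u with u(0) > 0 having exactly one sign change in (0,∞); i.e., if u₁ and u₂ are two such solutions, then u₁(0) = u₂(0) and u₁ ≡ u₂. -/

import Mathlib

open Set Filter MeasureTheory

namespace Paper

noncomputable section

/-- `F s = ∫₀ˢ f t dt`. -/
def Fint (f : ℝ → ℝ) (s : ℝ) : ℝ := ∫ t in (0:ℝ)..s, f t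

/-- Hypothesis (f1): `f` is odd, `f 0 = 0`, there are `β > b > 0` with `f > 0` on `(b,∞)`,
`f ≤ 0`, `f ≢ 0` on `[0,b]`, and `F β = 0`. -/
def Hf1 (f : ℝ → ℝ) (b β : ℝ) : Prop :=
  (∀ s, f (-s) = -f s) ∧ f 0 = 0 ∧ 0 < b ∧ b < β ∧
    (∀ s, b < s → 0 < f s) ∧ (∀ s ∈ Icc (0:ℝ) b, f s ≤ 0) ∧
    (∃ s ∈ Icc (0:ℝ) b, f s ≠ 0) ∧ Fint f β = 0

/-- Hypothesis (f2): `f` continuous on `[0,∞)`, C¹ on `(0,∞)`, `f' ∈ L¹(0,1)`. -/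
def Hf2 (f : ℝ → ℝ) : Prop :=
  ContinuousOn f (Ici 0) ∧ (∀ s : ℝ, 0 < s → DifferentiableAt ℝ f s) ∧
    ContinuousOn (deriv f) (Ioi 0) ∧ IntegrableOn (deriv f) (Ioo 0 1)

/-- Hypothesis (f3): `f s ≥ f' s * (s - β)` for `s ≥ β`. -/
def Hf3 (f : ℝ → ℝ) (β : ℝ) : Prop := ∀ s, β ≤ s → deriv f s * (s - β) ≤ f s

/-- Hypothesis (f4): `(F/f)' s ≥ (n-2)/(2n)` for `s > β`. -/
def Hf4 (n : ℕ) (f : ℝ → ℝ) (β : ℝ) : Prop :=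
  ∀ s, β < s → ((n : ℝ) - 2) / (2 * (n : ℝ)) ≤ deriv (fun t => Fint f t / f t) s

/-- Hypothesis (f4'): `(F/f)' s ≥ (n-2)/2` for `s > β`. -/
def Hf4' (n : ℕ) (f : ℝ → ℝ) (β : ℝ) : Prop :=
  ∀ s, β < s → ((n : ℝ) - 2) / 2 ≤ deriv (fun t => Fint f t / f t) s

/-- Hypothesis (f5): `s ↦ s f' s / f s` is nonincreasing on `[β,∞)`. -/
def Hf5 (f : ℝ → ℝ) (β : ℝ) : Prop := AntitoneOn (fun s => s * deriv f s / f s) (Ici β)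

/-- Hypothesis (f6): `β f' β / f β ≤ n/(n-2)`. -/
def Hf6 (n : ℕ) (f : ℝ → ℝ) (β : ℝ) : Prop := β * deriv f β / f β ≤ (n : ℝ) / ((n : ℝ) - 2)

/-- Hypothesis (f1'): `f 0 = 0` and `s f s > 0` for `s > 0`. -/
def Hf1' (f : ℝ → ℝ) : Prop := f 0 = 0 ∧ ∀ s : ℝ, 0 < s → 0 < s * f s

/-- Hypothesis (f3'): `f s ≥ s f' s` for `s > 0`, with strict inequality at points
arbitrarily close to `0`. -/
def Hf3' (f : ℝ → ℝ) : Prop :=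
  (∀ s : ℝ, 0 < s → s * deriv f s ≤ f s) ∧
    ∀ ε : ℝ, 0 < ε → ∃ s ∈ Ioo (0:ℝ) ε, s * deriv f s < f s

/-- `v` is a C² solution of (E) on `(0,∞)`, continuous on `[0,∞)`,
with `v 0 = α` and `v' 0 = 0`. -/
def IVPsol (n : ℕ) (f : ℝ → ℝ) (α : ℝ) (v : ℝ → ℝ) : Prop :=
  v 0 = α ∧ deriv v 0 = 0 ∧ ContinuousOn v (Ici 0) ∧
    (∀ r : ℝ, 0 < r → DifferentiableAt ℝ v r ∧ DifferentiableAt ℝ (deriv v) r) ∧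
    (∀ r : ℝ, 0 < r → deriv (deriv v) r + ((n : ℝ) - 1) / r * deriv v r + f (v r) = 0)

/-- The family `α ↦ u α` of solutions of the IVP, with `u α r` and `u' α r`
continuous in `(α, r)`. -/
def Family (n : ℕ) (f : ℝ → ℝ) (u : ℝ → ℝ → ℝ) : Prop :=
  (∀ α : ℝ, 0 < α → IVPsol n f α (u α)) ∧
    ContinuousOn (fun p : ℝ × ℝ => u p.1 p.2) (Ioi 0 ×ˢ Ici 0) ∧
    ContinuousOn (fun p : ℝ × ℝ => deriv (u p.1) p.2) (Ioi 0 ×ˢ Ici 0)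

/-- The set whose supremum is `Z_k α`, given `T = T_{k-1} α`. -/
def ZsetAux (u : ℝ → ℝ → ℝ) (k : ℕ) (T α : ℝ) : Set ℝ :=
  {r | T < r ∧ ∀ s ∈ Ioo T r, (-1 : ℝ) ^ k * u α s < 0 ∧ 0 < (-1 : ℝ) ^ k * deriv (u α) s}

/-- The pair `(Z_k, T_k)`, with `T₀ = 0`;
`Z_k α = sup {r > T_{k-1} α | (-1)^k u < 0, (-1)^k u' > 0 on (T_{k-1} α, r)}` and
`T_k α = inf {r > Z_k α | u'(r, α) = 0}`. -/
def ZT (u : ℝ → ℝ → ℝ) : ℕ → (ℝ → ℝ) × (ℝ → ℝ)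
  | 0 => (fun _ => 0, fun _ => 0)
  | k + 1 =>
    let Z : ℝ → ℝ := fun α => sSup (ZsetAux u (k + 1) ((ZT u k).2 α) α)
    (Z, fun α => sInf {r | Z α < r ∧ deriv (u α) r = 0})

/-- `Z_k α` (as a real number; the genuine value when the defining set is bounded above). -/
def Zk (u : ℝ → ℝ → ℝ) (k : ℕ) (α : ℝ) : ℝ := (ZT u k).1 α

/-- `T_k α`, with `T₀ = 0`. -/
def Tk (u : ℝ → ℝ → ℝ) (k : ℕ) (α : ℝ) : ℝ := (ZT u k).2 α

/-- The defining set of `Z_k α`; `Z_k α = ∞` iff this set is unbounded above. -/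
def ZsetK (u : ℝ → ℝ → ℝ) (k : ℕ) (α : ℝ) : Set ℝ := ZsetAux u k (Tk u (k - 1) α) α

open Classical in
/-- The value of `u (·, α)` at `Z_k α`, as a limit `r → ∞` when `Z_k α = ∞`. -/
def uAtZ (u : ℝ → ℝ → ℝ) (k : ℕ) (α : ℝ) : ℝ :=
  if BddAbove (ZsetK u k α) then u α (Zk u k α) else limUnder atTop (u α)

open Classical in
/-- The value of `u' (·, α)` at `Z_k α`, as a limit `r → ∞` when `Z_k α = ∞`. -/
def duAtZ (u : ℝ → ℝ → ℝ) (k : ℕ) (α : ℝ) : ℝ :=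
  if BddAbove (ZsetK u k α) then deriv (u α) (Zk u k α) else limUnder atTop (deriv (u α))

open Classical in
/-- `Z_k α` as an extended real number. -/
def ZkE (u : ℝ → ℝ → ℝ) (k : ℕ) (α : ℝ) : WithTop ℝ :=
  if BddAbove (ZsetK u k α) then (Zk u k α : WithTop ℝ) else ⊤

/-- Membership in `F̃_k` (for `α ∈ N_{k-1}`): `(-1)^k u' (r, α) < 0` for all `r > Z_{k-1} α`. -/
def Ftil (u : ℝ → ℝ → ℝ) (k : ℕ) (α : ℝ) : Prop :=
  ∀ r, Zk u (k - 1) α < r → (-1 : ℝ) ^ k * deriv (u α) r < 0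

/-- The sets `N_k` (with `N₀ := (0,∞)`). -/
def Nk (u : ℝ → ℝ → ℝ) : ℕ → Set ℝ
  | 0 => Ioi 0
  | 1 => {α | 0 < α ∧ uAtZ u 1 α = 0 ∧ duAtZ u 1 α < 0}
  | k + 2 => {α | α ∈ Nk u (k + 1) ∧ ¬Ftil u (k + 2) α ∧ uAtZ u (k + 2) α = 0 ∧
      0 < (-1 : ℝ) ^ (k + 2) * duAtZ u (k + 2) α}

/-- The sets `G_k`. -/
def Gk (u : ℝ → ℝ → ℝ) : ℕ → Set ℝ
  | 0 => ∅
  | 1 => {α | 0 < α ∧ uAtZ u 1 α = 0 ∧ duAtZ u 1 α = 0}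
  | k + 2 => {α | α ∈ Nk u (k + 1) ∧ ¬Ftil u (k + 2) α ∧ uAtZ u (k + 2) α = 0 ∧
      duAtZ u (k + 2) α = 0}

/-- The set `F̃_k` (for `k ≥ 2`). -/
def FtilSet (u : ℝ → ℝ → ℝ) (k : ℕ) : Set ℝ := {α | α ∈ Nk u (k - 1) ∧ Ftil u k α}

/-- The set `F_k` (for `k ≥ 2`). -/
def Fk (u : ℝ → ℝ → ℝ) (k : ℕ) : Set ℝ :=
  {α | α ∈ Nk u (k - 1) ∧ ¬Ftil u k α ∧ (-1 : ℝ) ^ k * uAtZ u k α < 0}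

/-- The sets `P_k`. -/
def Pk (u : ℝ → ℝ → ℝ) : ℕ → Set ℝ
  | 0 => ∅
  | 1 => {α | 0 < α ∧ 0 < uAtZ u 1 α}
  | k + 2 => FtilSet u (k + 2) ∪ Fk u (k + 2)

/-- The set of extremal points (zeros of `u' (·, α)`) in `[0, A]`. -/
def ExtSet (u : ℝ → ℝ → ℝ) (α A : ℝ) : Set ℝ := {r | r ∈ Icc 0 A ∧ deriv (u α) r = 0}

/-- The conclusion of the δ₁-lemma (Lemma 4.1): every solution with initial value in
`(α*-δ₁, α*+δ₁)` has exactly `k` extremal points in `[0, T_{k-1}(α*) + a]`, with minimum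
values `< -β` and maximum values `> β`; moreover any two such solutions intersect between
any two of their consecutive extremal points, and in `(T_{k-1}(α*), Z_k(α*))`. -/
def DeltaOneLemma (f : ℝ → ℝ) (β : ℝ) (u : ℝ → ℝ → ℝ) (k : ℕ) (αs a δ₁ : ℝ) : Prop :=
  0 < a ∧ 0 < δ₁ ∧
    (∀ α ∈ Ioo (αs - δ₁) (αs + δ₁),
      (ExtSet u α (Tk u (k - 1) αs + a)).Finite ∧
        (ExtSet u α (Tk u (k - 1) αs + a)).ncard = k ∧
        ∀ r ∈ ExtSet u α (Tk u (k - 1) αs + a),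
          (IsLocalMin (u α) r → u α r < -β) ∧ (IsLocalMax (u α) r → β < u α r)) ∧
    ∀ α₁ ∈ Ioo (αs - δ₁) (αs + δ₁), ∀ α₂ ∈ Ioo (αs - δ₁) (αs + δ₁), α₁ < α₂ →
      (∀ i : ℕ, 1 ≤ i → i ≤ k - 1 →
        ∃ t, max (Tk u (i - 1) α₁) (Tk u (i - 1) α₂) < t ∧
          t < min (Tk u i α₁) (Tk u i α₂) ∧ u α₁ t = u α₂ t) ∧
      ∃ t, Tk u (k - 1) αs < t ∧ (BddAbove (ZsetK u k αs) → t < Zk u k αs) ∧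
        u α₁ t = u α₂ t

/-- `ρ` is the inverse of the monotone branch of `v` on `[t₁, t₂]`, whose set of values
is `[m, M]`. -/
def InvBranch (v ρ : ℝ → ℝ) (t₁ t₂ m M : ℝ) : Prop :=
  (∀ s ∈ Icc m M, ρ s ∈ Icc t₁ t₂ ∧ v (ρ s) = s) ∧
    ∀ s ∈ Ioo m M, HasDerivAt ρ (1 / deriv v (ρ s)) s

/-- `ρ` inverts a decreasing branch of `v` over the value interval `[m, M]`, along which
`(v')² + 2F > 0`. -/
def DecBranchInv (f : ℝ → ℝ) (v ρ : ℝ → ℝ) (m M : ℝ) : Prop :=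
  ∀ s ∈ Icc m M, 0 ≤ ρ s ∧ v (ρ s) = s ∧ deriv v (ρ s) < 0 ∧
    HasDerivAt ρ (1 / deriv v (ρ s)) s ∧ 0 < (deriv v (ρ s)) ^ 2 + 2 * Fint f s

/-- The functional `Q(s) = -4 (F/f)(s) r/r' - r²/(r')² - 2 r² F(s) + H(s)` computed along
the branch inverse `ρ`. -/
def Qfun (f H ρ : ℝ → ℝ) (s : ℝ) : ℝ :=
  -4 * (Fint f s / f s) * (ρ s / deriv ρ s) - (ρ s) ^ 2 / (deriv ρ s) ^ 2 -
    2 * (ρ s) ^ 2 * Fint f s + H s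

/-- The functional `P(s) = -2n (F/f)(s) r^{n-1}/r' - r^n/(r')² - 2 r^n F(s)`. -/
def Pfun (n : ℕ) (f : ℝ → ℝ) (ρ : ℝ → ℝ) (s : ℝ) : ℝ :=
  -(2 * (n : ℝ)) * (Fint f s / f s) * (ρ s ^ (n - 1) / deriv ρ s) -
    ρ s ^ n / (deriv ρ s) ^ 2 - 2 * ρ s ^ n * Fint f s

/-- The functional `W(s) = r(s) √((u'(r(s)))² + 2 F(s))`. -/
def Wfun (f v ρ : ℝ → ℝ) (s : ℝ) : ℝ :=
  ρ s * Real.sqrt ((deriv v (ρ s)) ^ 2 + 2 * Fint f s)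

/-- The functional `W̃(s) = r(s)^{n-1} √((u'(r(s)))² + 2 F(s))`. -/
def Wtil (n : ℕ) (f : ℝ → ℝ) (v ρ : ℝ → ℝ) (s : ℝ) : ℝ :=
  ρ s ^ (n - 1) * Real.sqrt ((deriv v (ρ s)) ^ 2 + 2 * Fint f s)

/-- `v` changes sign at `z ∈ (0,∞)`: `v z = 0` and `v` takes both signs in every
neighborhood of `z` (within `(0,∞)`). -/
def SignChange (v : ℝ → ℝ) (z : ℝ) : Prop :=
  v z = 0 ∧ ∀ ε : ℝ, 0 < ε →
    (∃ x ∈ Ioo (z - ε) (z + ε) ∩ Ioi 0, 0 < v x) ∧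
    (∃ x ∈ Ioo (z - ε) (z + ε) ∩ Ioi 0, v x < 0)

/-- `v` has exactly `m` sign changes in `(0,∞)`. -/
def ExactSignChanges (v : ℝ → ℝ) (m : ℕ) : Prop :=
  {z | 0 < z ∧ SignChange v z}.Finite ∧ {z | 0 < z ∧ SignChange v z}.ncard = m

/-- Bound state: a C² solution of (E) on `(0,∞)` with `v' 0 = 0` and `v r → 0` as `r → ∞`. -/
def BoundState (n : ℕ) (f : ℝ → ℝ) (v : ℝ → ℝ) : Prop :=
  ContinuousOn v (Ici 0) ∧
    (∀ r : ℝ, 0 < r → DifferentiableAt ℝ v r ∧ DifferentiableAt ℝ (deriv v) r) ∧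
    (∀ r : ℝ, 0 < r → deriv (deriv v) r + ((n : ℝ) - 1) / r * deriv v r + f (v r) = 0) ∧
    deriv v 0 = 0 ∧ Tendsto v atTop (nhds 0)

/-- Solution of the Dirichlet problem on the ball of radius `R`. -/
def DirichletSol (n : ℕ) (f : ℝ → ℝ) (R : ℝ) (v : ℝ → ℝ) : Prop :=
  ContinuousOn v (Icc 0 R) ∧
    (∀ r ∈ Ioo (0:ℝ) R, DifferentiableAt ℝ v r ∧ DifferentiableAt ℝ (deriv v) r) ∧
    (∀ r ∈ Ioo (0:ℝ) R, deriv (deriv v) r + ((n : ℝ) - 1) / r * deriv v r + f (v r) = 0) ∧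
    deriv v 0 = 0 ∧ v R = 0

end
end Paper

open Paper Set Filter MeasureTheory

namespace RadialODE

/-! ### One-variable calculus -/

theorem le_of_hasDerivAt_nonneg {X X' : ℝ → ℝ} {a c : ℝ} (hac : a ≤ c)
    (hX : ∀ s ∈ Icc a c, HasDerivAt X (X' s) s) (h : ∀ s ∈ Ioo a c, 0 ≤ X' s) : X a ≤ X c := by
  have hm : MonotoneOn X (Icc a c) := by
    apply monotoneOn_of_deriv_nonneg (convex_Icc a c)
    · exact fun s hs => (hX s hs).continuousAt.continuousWithinAt
    · intro s hs
      exact (hX s (interior_subset hs)).differentiableAt.differentiableWithinAt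
    · intro s hs
      rw [(hX s (interior_subset hs)).deriv]
      rw [interior_Icc] at hs
      exact h s hs
  exact hm (left_mem_Icc.2 hac) (right_mem_Icc.2 hac) hac

theorem lt_of_hasDerivAt_pos {X X' : ℝ → ℝ} {a c : ℝ} (hac : a < c)
    (hX : ∀ s ∈ Icc a c, HasDerivAt X (X' s) s) (h : ∀ s ∈ Ioo a c, 0 < X' s) : X a < X c := by
  obtain ⟨ξ, hξ, hs⟩ := exists_hasDerivAt_eq_slope X X' hac
    (fun s hs => (hX s hs).continuousAt.continuousWithinAt)
    (fun s hs => hX s (Ioo_subset_Icc_self hs))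
  have h1 := h ξ hξ
  rw [hs, lt_div_iff₀ (by linarith)] at h1
  linarith

theorem ge_of_hasDerivAt_nonpos {X X' : ℝ → ℝ} {a c : ℝ} (hac : a ≤ c)
    (hX : ∀ s ∈ Icc a c, HasDerivAt X (X' s) s) (h : ∀ s ∈ Ioo a c, X' s ≤ 0) : X c ≤ X a := by
  have := le_of_hasDerivAt_nonneg (X := fun s => -X s) (X' := fun s => -X' s) hac
    (fun s hs => (hX s hs).neg) (fun s hs => by have := h s hs; linarith)
  linarith

theorem gt_of_hasDerivAt_neg {X X' : ℝ → ℝ} {a c : ℝ} (hac : a < c)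
    (hX : ∀ s ∈ Icc a c, HasDerivAt X (X' s) s) (h : ∀ s ∈ Ioo a c, X' s < 0) : X c < X a := by
  have := lt_of_hasDerivAt_pos (X := fun s => -X s) (X' := fun s => -X' s) hac
    (fun s hs => (hX s hs).neg) (fun s hs => by have := h s hs; linarith)
  linarith

/-- The derivative at a zero to the right of which the function is positive. -/
theorem deriv_nonneg_of_pos_right {h : ℝ → ℝ} {h' s₀ c : ℝ} (hc : s₀ < c)
    (hd : HasDerivAt h h' s₀) (h0 : h s₀ = 0) (hpos : ∀ s ∈ Ioo s₀ c, 0 < h s) : 0 ≤ h' := by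
  have ht := (hasDerivAt_iff_tendsto_slope.1 hd).mono_left
    (nhdsWithin_mono s₀ (fun x (hx : x ∈ Ioi s₀) => ne_of_gt hx))
  refine ge_of_tendsto ht ?_
  filter_upwards [Ioo_mem_nhdsGT hc] with s hs
  rw [slope_def_field, h0]
  exact div_nonneg (by linarith [hpos s hs]) (by linarith [hs.1])

/-- The derivative at a zero to the left of which the function is positive. -/
theorem deriv_nonpos_of_pos_left {h : ℝ → ℝ} {h' a s₀ : ℝ} (ha : a < s₀)
    (hd : HasDerivAt h h' s₀) (h0 : h s₀ = 0) (hpos : ∀ s ∈ Ioo a s₀, 0 < h s) : h' ≤ 0 := by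
  have ht := (hasDerivAt_iff_tendsto_slope.1 hd).mono_left
    (nhdsWithin_mono s₀ (fun x (hx : x ∈ Iio s₀) => ne_of_lt hx))
  refine le_of_tendsto ht ?_
  filter_upwards [Ioo_mem_nhdsLT ha] with s hs
  rw [slope_def_field, h0]
  exact div_nonpos_of_nonneg_of_nonpos (by linarith [hpos s hs]) (by linarith [hs.2])

/-- Last zero of a continuous function that is positive near the right endpoint. -/
theorem exists_last_zero {h : ℝ → ℝ} {a c : ℝ} (hac : a < c)
    (hcont : ∀ s ∈ Ico a c, ContinuousAt h s) (ha : h a ≤ 0)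
    (hpos : ∀ᶠ s in nhdsWithin c (Iio c), 0 < h s) :
    ∃ s₀ ∈ Ico a c, h s₀ = 0 ∧ ∀ s ∈ Ioo s₀ c, 0 < h s := by
  obtain ⟨d, hd, hdp⟩ := (mem_nhdsLT_iff_exists_Ioo_subset' hac).1 hpos
  simp only [mem_Iio] at hd
  set d' := (max a d + c) / 2 with hd'
  have h1 : max a d < c := max_lt hac hd
  have h2 : a < d' := by have := le_max_left a d; linarith
  have h3 : d < d' := by have := le_max_right a d; linarith
  have h4 : d' < c := by linarith
  have hcomp : IsCompact (Icc a d' ∩ h ⁻¹' Iic 0) := by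
    have hc : ContinuousOn h (Icc a d') := fun s hs =>
      (hcont s ⟨hs.1, lt_of_le_of_lt hs.2 h4⟩).continuousWithinAt
    exact isCompact_Icc.of_isClosed_subset
      (hc.preimage_isClosed_of_isClosed isClosed_Icc isClosed_Iic) inter_subset_left
  obtain ⟨s₀, ⟨hs₀, hs₀'⟩, hmax⟩ := hcomp.exists_isGreatest ⟨a, ⟨le_refl a, h2.le⟩, ha⟩
  have hs₀c : s₀ < c := lt_of_le_of_lt hs₀.2 h4
  have hp : ∀ s ∈ Ioo s₀ c, 0 < h s := by
    intro s hs
    by_cases hsd : s ≤ d'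
    · by_contra hn
      exact absurd (hmax ⟨⟨hs₀.1.trans hs.1.le, hsd⟩, not_lt.1 hn⟩) (not_le.2 hs.1)
    · exact hdp ⟨by linarith [not_le.1 hsd], hs.2⟩
  refine ⟨s₀, ⟨hs₀.1, hs₀c⟩, le_antisymm hs₀' ?_, hp⟩
  refine ge_of_tendsto ((hcont s₀ ⟨hs₀.1, hs₀c⟩).continuousWithinAt (s := Ioi s₀)) ?_
  filter_upwards [Ioo_mem_nhdsGT hs₀c] with s hs
  exact (hp s hs).le

/-- First zero of a continuous function that is positive at the left endpoint. -/
theorem exists_first_zero {h : ℝ → ℝ} {a c : ℝ} (hac : a ≤ c)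
    (hcont : ∀ s ∈ Icc a c, ContinuousAt h s) (ha : 0 < h a) (hc : h c ≤ 0) :
    ∃ s₀ ∈ Ioc a c, h s₀ = 0 ∧ ∀ s ∈ Ico a s₀, 0 < h s := by
  have hcomp : IsCompact (Icc a c ∩ h ⁻¹' Iic 0) := by
    have hc : ContinuousOn h (Icc a c) := fun s hs => (hcont s hs).continuousWithinAt
    exact isCompact_Icc.of_isClosed_subset
      (hc.preimage_isClosed_of_isClosed isClosed_Icc isClosed_Iic) inter_subset_left
  obtain ⟨s₀, ⟨hs₀, hs₀'⟩, hmin⟩ := hcomp.exists_isLeast ⟨c, ⟨hac, le_refl c⟩, hc⟩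
  have hne : a < s₀ := by
    rcases hs₀.1.lt_or_eq with h1 | h1
    · exact h1
    · rw [← h1] at hs₀'
      exact absurd hs₀' (not_le.2 ha)
  have hp : ∀ s ∈ Ico a s₀, 0 < h s := by
    intro s hs
    by_contra hn
    exact absurd (hmin ⟨⟨hs.1, hs.2.le.trans hs₀.2⟩, not_lt.1 hn⟩) (not_le.2 hs.2)
  refine ⟨s₀, ⟨hne, hs₀.2⟩, le_antisymm hs₀' ?_, hp⟩
  refine ge_of_tendsto ((hcont s₀ hs₀).continuousWithinAt (s := Iio s₀)) ?_
  filter_upwards [Ioo_mem_nhdsLT hne] with s hs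
  exact (hp s ⟨hs.1.le, hs.2⟩).le

/-- A function that is nondecreasing wherever it is positive stays above a positive
initial value. -/
theorem le_of_deriv_nonneg_where_pos {X X' : ℝ → ℝ} {a c : ℝ} (hac : a ≤ c)
    (hX : ∀ s ∈ Icc a c, HasDerivAt X (X' s) s)
    (h : ∀ s ∈ Ioo a c, 0 < X s → 0 ≤ X' s) (ha : 0 < X a) : X a ≤ X c := by
  have key : 0 < X c := by
    by_contra hn
    obtain ⟨s₀, hs₀, h0, hp⟩ := exists_first_zero hac (fun s hs => (hX s hs).continuousAt) ha
      (not_lt.1 hn)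
    have := le_of_hasDerivAt_nonneg hs₀.1.le (fun s hs => hX s ⟨hs.1, hs.2.trans hs₀.2⟩)
      (fun s hs => h s ⟨hs.1, hs.2.trans_le hs₀.2⟩ (hp s ⟨hs.1.le, hs.2⟩))
    linarith
  by_cases hall : ∀ s ∈ Ioo a c, 0 < X s
  · exact le_of_hasDerivAt_nonneg hac hX (fun s hs => h s hs (hall s hs))
  · push Not at hall
    obtain ⟨d, hd, hXd⟩ := hall
    obtain ⟨s₀, hs₀, h0, hp⟩ := exists_first_zero hd.1.le
      (fun s hs => (hX s ⟨hs.1, hs.2.trans hd.2.le⟩).continuousAt) ha hXd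
    have := le_of_hasDerivAt_nonneg hs₀.1.le
      (fun s hs => hX s ⟨hs.1, hs.2.trans (hs₀.2.trans hd.2.le)⟩)
      (fun s hs => h s ⟨hs.1, hs.2.trans_le (hs₀.2.trans hd.2.le)⟩ (hp s ⟨hs.1.le, hs.2⟩))
    linarith

/-- A nonnegative function with `N' ≤ C N` that tends to `0` at the left endpoint vanishes. -/
theorem eq_zero_of_deriv_le_mul {N N' : ℝ → ℝ} {a c C : ℝ}
    (hN : ∀ s ∈ Ioo a c, HasDerivAt N (N' s) s) (h : ∀ s ∈ Ioo a c, N' s ≤ C * N s)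
    (h0 : ∀ s ∈ Ioo a c, 0 ≤ N s) (hlim : Tendsto N (nhdsWithin a (Ioi a)) (nhds 0)) :
    ∀ s ∈ Ioo a c, N s = 0 := by
  intro s hs
  have hd : ∀ x ∈ Ioo a c, HasDerivAt (fun x => N x * Real.exp (-C * x))
      (N' x * Real.exp (-C * x) + N x * (Real.exp (-C * x) * (-C * 1))) x := fun x hx =>
    (hN x hx).mul (((hasDerivAt_id x).const_mul (-C)).exp)
  have hle : ∀ x ∈ Ioo a s, N s * Real.exp (-C * s) ≤ N x * Real.exp (-C * x) := by
    intro x hx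
    refine ge_of_hasDerivAt_nonpos hx.2.le
      (fun y hy => hd y ⟨hx.1.trans_le hy.1, hy.2.trans_lt hs.2⟩) ?_
    intro y hy
    have h1 := h y ⟨hx.1.trans hy.1, hy.2.trans hs.2⟩
    have h2 := Real.exp_pos (-C * y)
    nlinarith
  have hlim' : Tendsto (fun x => N x * Real.exp (-C * x)) (nhdsWithin a (Ioi a)) (nhds 0) := by
    have he : Tendsto (fun x => Real.exp (-C * x)) (nhdsWithin a (Ioi a))
        (nhds (Real.exp (-C * a))) :=
      ((by fun_prop : Continuous fun x => Real.exp (-C * x)).tendsto a).mono_left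
        nhdsWithin_le_nhds
    simpa using hlim.mul he
  have : N s * Real.exp (-C * s) ≤ 0 := by
    refine ge_of_tendsto hlim' ?_
    filter_upwards [Ioo_mem_nhdsGT hs.1] with x hx using hle x hx
  have h2 := Real.exp_pos (-C * s)
  have h3 := h0 s hs
  nlinarith

/-! ### Hypotheses on the nonlinearity -/

/-- The consequences of the hypotheses on `f` used below; the dimension is `m + 2`. -/
structure Nonlinearity (m : ℕ) (f : ℝ → ℝ) (β : ℝ) : Prop where
  m_pos : 0 < m
  β_pos : 0 < β
  cont : Continuous f
  odd : ∀ s, f (-s) = -f s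
  F_deriv : ∀ s, HasDerivAt (Fint f) (f s) s
  F_neg : ∀ s, Fint f (-s) = Fint f s
  F_nonpos : ∀ s ∈ Icc (-β) β, Fint f s ≤ 0
  F_pos : ∀ s, β < s → 0 < Fint f s
  F_zero : Fint f 0 = 0
  F_beta : Fint f β = 0
  f_pos : ∀ s, β ≤ s → 0 < f s
  f_diff : ∀ s, 0 < s → HasDerivAt f (deriv f s) s
  f'_cont : ContinuousOn (deriv f) (Ioi 0)
  K_anti : AntitoneOn (fun s => s * deriv f s / f s) (Ici β)
  K_le : ∀ s, β ≤ s → s * deriv f s / f s ≤ (m + 2) / m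

theorem Nonlinearity.of_hypotheses {m : ℕ} {f : ℝ → ℝ} {b β : ℝ} (hm : 0 < m)
    (hf : Continuous f) (h1 : Hf1 f b β) (h2 : Hf2 f) (h5 : Hf5 f β)
    (h6 : Hf6 (m + 2) f β) : Nonlinearity m f β := by
  obtain ⟨hodd, hf0, hb, hbβ, hpos, hnonpos, -, hFβ⟩ := h1
  have hF : ∀ s, HasDerivAt (Fint f) (f s) s := fun s =>
    intervalIntegral.integral_hasDerivAt_right (hf.intervalIntegrable _ _)
      (hf.stronglyMeasurableAtFilter _ _) hf.continuousAt
  have hFneg : ∀ s, Fint f (-s) = Fint f s := by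
    intro s
    have hd : ∀ x, HasDerivAt (fun x => Fint f (-x) - Fint f x) 0 x := by
      intro x
      have h := ((hF (-x)).comp x (hasDerivAt_neg x)).sub (hF x)
      have e : f (-x) * -1 - f x = 0 := by rw [hodd]; ring
      rw [e] at h
      exact h
    have := is_const_of_deriv_eq_zero (fun x => (hd x).differentiableAt)
      (fun x => (hd x).deriv) s 0
    simp only [neg_zero, sub_self] at this
    linarith
  have hF0 : Fint f 0 = 0 := by simp [Fint]
  have hFnp : ∀ s ∈ Icc 0 β, Fint f s ≤ 0 := by
    intro s hs
    by_cases hsb : s ≤ b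
    · have := ge_of_hasDerivAt_nonpos hs.1 (fun x _ => hF x)
        (fun x hx => hnonpos x ⟨hx.1.le, hx.2.le.trans hsb⟩)
      linarith
    · have := le_of_hasDerivAt_nonneg hs.2 (fun x _ => hF x)
        (fun x hx => (hpos x ((not_le.1 hsb).trans hx.1)).le)
      linarith
  have hK : ∀ s, β ≤ s → s * deriv f s / f s ≤ (m + 2) / m := by
    intro s hs
    have h := h5 (self_mem_Ici) hs hs
    have h' : β * deriv f β / f β ≤ _ := h6
    push_cast at h'
    rw [show ((m : ℝ) + 2 - 2) = m by ring] at h'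
    exact le_trans h h'
  exact {
    m_pos := hm
    β_pos := hb.trans hbβ
    cont := hf
    odd := hodd
    F_deriv := hF
    F_neg := hFneg
    F_nonpos := by
      intro s hs
      rcases le_total 0 s with h | h
      · exact hFnp s ⟨h, hs.2⟩
      · rw [← hFneg]
        exact hFnp _ ⟨by linarith, by linarith [hs.1]⟩
    F_pos := by
      intro s hs
      have := lt_of_hasDerivAt_pos hs (fun x _ => hF x) (fun x hx => hpos x (hbβ.trans hx.1))
      linarith
    F_zero := hF0
    F_beta := hFβ
    f_pos := fun s hs => hpos s (hbβ.trans_le hs)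
    f_diff := fun s hs => (h2.2.1 s hs).hasDerivAt
    f'_cont := h2.2.2.1
    K_anti := h5
    K_le := hK }

/-- `(F/f)' > (n-2)/(2n)` on `[β, ∞)`. -/
theorem Nonlinearity.deriv_ratio_gt {m : ℕ} {f : ℝ → ℝ} {β : ℝ} (H : Nonlinearity m f β)
    {s : ℝ} (hs : β ≤ s) :
    0 < 2 * ((m : ℝ) + 2) * ((f s * f s - Fint f s * deriv f s) / f s ^ 2) - m := by
  have hm : (0 : ℝ) < m := by exact_mod_cast H.m_pos
  have hs0 : 0 < s := H.β_pos.trans_le hs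
  have hfs := H.f_pos s hs
  have hFs : 0 ≤ Fint f s := by
    rcases hs.lt_or_eq with h | h
    · exact (H.F_pos s h).le
    · rw [← h, H.F_beta]
  set k := s * deriv f s / f s with hk
  have hfd : deriv f s = k * f s / s := by rw [hk]; field_simp
  have hkle : k ≤ (m + 2) / m := H.K_le s hs
  have hkm : k * m ≤ m + 2 := by rwa [le_div_iff₀ hm] at hkle
  have hint : (1 + k) * Fint f s ≤ s * f s := by
    have hmono := le_of_hasDerivAt_nonneg (X := fun t => t * f t - (1 + k) * Fint f t)
      (X' := fun t => (1 * f t + t * deriv f t) - (1 + k) * f t) hs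
      (fun t ht => ((hasDerivAt_id t).mul (H.f_diff t (H.β_pos.trans_le ht.1))).sub
        ((H.F_deriv t).const_mul (1 + k))) (by
        intro t ht
        have hft := H.f_pos t ht.1.le
        have h := H.K_anti (show t ∈ Ici β from ht.1.le) (show s ∈ Ici β from hs) ht.2.le
        have h' : k ≤ t * deriv f t / f t := h
        rw [le_div_iff₀ hft] at h'
        nlinarith)
    simp only [H.F_beta, mul_zero, sub_zero] at hmono
    have := H.f_pos β le_rfl
    have := mul_pos H.β_pos this
    linarith
  have e : 2 * ((m : ℝ) + 2) * ((f s * f s - Fint f s * deriv f s) / f s ^ 2) - m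
      = (2 * (m + 2) * (s * f s - k * Fint f s) - m * (s * f s)) / (s * f s) := by
    rw [hfd]; field_simp
  rw [e]
  apply div_pos _ (mul_pos hs0 hfs)
  have hsf := mul_pos hs0 hfs
  by_cases hk0 : k ≤ 0
  · nlinarith [mul_nonneg (neg_nonneg.2 hk0) hFs]
  · push Not at hk0
    have h3 : k * ((1 + k) * Fint f s) ≤ k * (s * f s) := by gcongr
    have : 0 < (1 + k) * (2 * (m + 2) * (s * f s - k * Fint f s) - m * (s * f s)) := by
      have h4 : 0 < (m + 4 - m * k) := by nlinarith
      nlinarith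
    by_contra hn
    nlinarith

/-- A function tending to `0` at the left endpoint and nonincreasing wherever it is positive
is nonpositive. -/
theorem nonpos_of_deriv_nonpos_where_pos {X X' : ℝ → ℝ} {a c : ℝ} (hac : a < c)
    (hX : ∀ s ∈ Ioc a c, HasDerivAt X (X' s) s)
    (h : ∀ s ∈ Ioo a c, 0 < X s → X' s ≤ 0)
    (hlim : Tendsto X (nhdsWithin a (Ioi a)) (nhds 0)) : X c ≤ 0 := by
  by_contra hn
  have hle : ∀ x ∈ Ioo a c, X c ≤ X x := by
    intro x hx
    have h1 := le_of_deriv_nonneg_where_pos (X := fun y => X (-y)) (X' := fun y => -X' (-y))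
      (a := -c) (c := -x) (by linarith [hx.2])
      (fun y hy => by
        have := (hX (-y) ⟨by linarith [hy.2, hx.1], by linarith [hy.1]⟩).comp y
          (hasDerivAt_neg y)
        exact this.congr_deriv (by ring))
      (fun y hy hp => by
        have := h (-y) ⟨by linarith [hy.2, hx.1], by linarith [hy.1]⟩ hp
        linarith) (by simpa using not_le.1 hn)
    simpa using h1
  have := ge_of_tendsto hlim (b := X c) (by
    filter_upwards [Ioo_mem_nhdsGT hac] with x hx using hle x hx)
  exact hn this

/-! ### Monotone branches -/

/-- A decreasing branch of a solution, parametrized by its value `s`: `r` is the radius and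
`q` the modulus of the derivative. -/
structure DecBranch (m : ℕ) (f r q : ℝ → ℝ) (J : Set ℝ) : Prop where
  r_pos : ∀ s ∈ J, 0 < r s
  q_pos : ∀ s ∈ J, 0 < q s
  r_deriv : ∀ s ∈ J, HasDerivAt r (-1 / q s) s
  q_deriv : ∀ s ∈ J, HasDerivAt q ((m + 1) / r s - f s / q s) s

namespace DecBranch

variable {m : ℕ} {f r q r₁ q₁ r₂ q₂ : ℝ → ℝ} {J J' : Set ℝ} {s a c : ℝ}

theorem mono (h : DecBranch m f r q J) (hJ : J' ⊆ J) : DecBranch m f r q J' :=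
  ⟨fun s hs => h.r_pos s (hJ hs), fun s hs => h.q_pos s (hJ hs),
    fun s hs => h.r_deriv s (hJ hs), fun s hs => h.q_deriv s (hJ hs)⟩

theorem sq_deriv (h : DecBranch m f r q J) (hs : s ∈ J) :
    HasDerivAt (fun s => q s ^ 2) (2 * (m + 1) * (q s / r s) - 2 * f s) s := by
  have := h.q_pos s hs
  have := h.r_pos s hs
  refine ((h.q_deriv s hs).pow 2).congr_deriv ?_
  field_simp
  ring

theorem mul_deriv (h : DecBranch m f r q J) (hs : s ∈ J) :
    HasDerivAt (fun s => r s * q s) (m - r s * f s / q s) s := by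
  have := h.q_pos s hs
  have := h.r_pos s hs
  refine ((h.r_deriv s hs).mul (h.q_deriv s hs)).congr_deriv ?_
  field_simp
  ring

theorem log_r_deriv (h : DecBranch m f r q J) (hs : s ∈ J) :
    HasDerivAt (fun s => Real.log (r s)) (-(1 / (r s * q s))) s := by
  have := h.q_pos s hs
  have := h.r_pos s hs
  refine ((h.r_deriv s hs).log this.ne').congr_deriv ?_
  field_simp

theorem log_flux_deriv (h : DecBranch m f r q J) (hs : s ∈ J) :
    HasDerivAt (fun s => (m + 1) * Real.log (r s) + Real.log (q s)) (-(f s / q s ^ 2)) s := by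
  have := h.q_pos s hs
  have := h.r_pos s hs
  refine (((h.log_r_deriv hs).const_mul ((m : ℝ) + 1)).add ((h.q_deriv s hs).log
    (h.q_pos s hs).ne')).congr_deriv ?_
  field_simp
  ring

/-- Two decreasing branches that are ordered at the right end remain ordered, provided the radii
are strictly ordered at any possible crossing of the slopes. -/
theorem q_lt_q (h₁ : DecBranch m f r₁ q₁ (Ico a c)) (h₂ : DecBranch m f r₂ q₂ (Ico a c))
    (hend : ∀ᶠ s in nhdsWithin c (Iio c), q₁ s < q₂ s)
    (hr : ∀ s₀ ∈ Ico a c, q₁ s₀ = q₂ s₀ → (∀ s ∈ Ioo s₀ c, q₁ s < q₂ s) → r₁ s₀ < r₂ s₀) :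
    ∀ s ∈ Ico a c, q₁ s < q₂ s := by
  intro s hs
  by_contra hn
  have hsub : Ico s c ⊆ Ico a c := Ico_subset_Ico_left hs.1
  obtain ⟨s₀, hs₀, h0, hp⟩ := exists_last_zero (h := fun t => q₂ t - q₁ t) hs.2
    (fun t ht => ((h₂.q_deriv t (hsub ht)).sub (h₁.q_deriv t (hsub ht))).continuousAt)
    (by simpa using hn) (by filter_upwards [hend] with t ht; linarith)
  have hs₀' := hsub hs₀
  have hq : q₁ s₀ = q₂ s₀ := by linarith
  have hlt := hr s₀ hs₀' hq (fun t ht => by linarith [hp t ht])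
  have hd := deriv_nonneg_of_pos_right hs₀.2
    ((h₂.q_deriv s₀ hs₀').sub (h₁.q_deriv s₀ hs₀')) h0 hp
  rw [hq] at hd
  have : ((m : ℝ) + 1) / r₂ s₀ < (m + 1) / r₁ s₀ :=
    div_lt_div_of_pos_left (by positivity) (h₁.r_pos s₀ hs₀') hlt
  linarith

/-- If `r q` is larger along the second branch then so is the growth of `log r`. -/
theorem r_lt_r (h₁ : DecBranch m f r₁ q₁ (Ico a c)) (h₂ : DecBranch m f r₂ q₂ (Ico a c))
    (hy : ∀ s ∈ Ioo a c, r₁ s * q₁ s < r₂ s * q₂ s) (ha : r₁ a ≤ r₂ a) :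
    ∀ s ∈ Ioo a c, r₁ s < r₂ s := by
  intro s hs
  have hsub : Icc a s ⊆ Ico a c := fun t ht => ⟨ht.1, ht.2.trans_lt hs.2⟩
  have ha' : a ∈ Ico a c := ⟨le_rfl, hs.1.trans hs.2⟩
  have h := lt_of_hasDerivAt_pos hs.1 (fun t ht =>
    (h₂.log_r_deriv (hsub ht)).sub (h₁.log_r_deriv (hsub ht))) (by
    intro t ht
    have ht' := hsub (Ioo_subset_Icc_self ht)
    have := one_div_lt_one_div_of_lt (mul_pos (h₁.r_pos t ht') (h₁.q_pos t ht'))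
      (hy t ⟨ht.1, ht.2.trans hs.2⟩)
    linarith)
  have h' := Real.log_le_log (h₁.r_pos a ha') ha
  have hs' : s ∈ Ico a c := ⟨hs.1.le, hs.2⟩
  exact (Real.log_lt_log_iff (h₁.r_pos s hs') (h₂.r_pos s hs')).1 (by
    simp only [Pi.sub_apply] at h
    linarith)

theorem abs_inv_sub_inv_le {x y δ : ℝ} (hδ : 0 < δ) (hx : δ ≤ x) (hy : δ ≤ y) :
    |1 / x - 1 / y| ≤ |x - y| / δ ^ 2 := by
  have hx0 : 0 < x := hδ.trans_le hx
  have hy0 : 0 < y := hδ.trans_le hy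
  rw [show 1 / x - 1 / y = (y - x) / (x * y) by field_simp, abs_div, abs_sub_comm,
    abs_of_pos (mul_pos hx0 hy0)]
  gcongr
  nlinarith

/-- Uniqueness for branches with common initial data. -/
theorem eq_of_eq_left (hf : Continuous f) (h₁ : DecBranch m f r₁ q₁ (Icc a c))
    (h₂ : DecBranch m f r₂ q₂ (Icc a c)) (hr : r₁ a = r₂ a) (hq : q₁ a = q₂ a) :
    ∀ s ∈ Ioo a c, q₁ s = q₂ s := by
  intro s hs
  have hac : a < c := hs.1.trans hs.2
  have hlow : ∀ g : ℝ → ℝ, (∀ s ∈ Icc a c, ContinuousAt g s) → (∀ s ∈ Icc a c, 0 < g s) →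
      ∃ δ, 0 < δ ∧ ∀ s ∈ Icc a c, δ ≤ g s := by
    intro g hg hpos
    obtain ⟨x, hx, hmin⟩ := isCompact_Icc.exists_isMinOn (nonempty_Icc.2 hac.le)
      (fun s hs => (hg s hs).continuousWithinAt)
    exact ⟨g x, hpos x hx, fun s hs => hmin hs⟩
  obtain ⟨a₁, ha₁, hb₁⟩ := hlow r₁ (fun s hs => (h₁.r_deriv s hs).continuousAt) h₁.r_pos
  obtain ⟨a₂, ha₂, hb₂⟩ := hlow r₂ (fun s hs => (h₂.r_deriv s hs).continuousAt) h₂.r_pos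
  obtain ⟨a₃, ha₃, hb₃⟩ := hlow q₁ (fun s hs => (h₁.q_deriv s hs).continuousAt) h₁.q_pos
  obtain ⟨a₄, ha₄, hb₄⟩ := hlow q₂ (fun s hs => (h₂.q_deriv s hs).continuousAt) h₂.q_pos
  obtain ⟨B, hB⟩ := (isCompact_Icc (a := a) (b := c)).exists_bound_of_continuousOn
    hf.continuousOn
  set δ := min (min a₁ a₂) (min a₃ a₄) with hδ
  have hδ0 : 0 < δ := by simp [*]
  have d₁ : δ ≤ a₁ := (min_le_left _ _).trans (min_le_left _ _)
  have d₂ : δ ≤ a₂ := (min_le_left _ _).trans (min_le_right _ _)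
  have d₃ : δ ≤ a₃ := (min_le_right _ _).trans (min_le_left _ _)
  have d₄ : δ ≤ a₄ := (min_le_right _ _).trans (min_le_right _ _)
  have hN : ∀ t ∈ Icc a c, HasDerivAt (fun t => (r₁ t - r₂ t) ^ 2 + (q₁ t - q₂ t) ^ 2)
      (2 * (r₁ t - r₂ t) * (-(1 / q₁ t - 1 / q₂ t)) + 2 * (q₁ t - q₂ t) *
        ((m + 1) * (1 / r₁ t - 1 / r₂ t) - f t * (1 / q₁ t - 1 / q₂ t))) t := by
    intro t ht
    refine ((((h₁.r_deriv t ht).sub (h₂.r_deriv t ht)).pow 2).add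
      (((h₁.q_deriv t ht).sub (h₂.q_deriv t ht)).pow 2)).congr_deriv ?_
    simp only [Pi.sub_apply]
    ring
  have hz := eq_zero_of_deriv_le_mul (a := a) (c := c)
    (C := ((m + 2) + 2 * |B|) / δ ^ 2)
    (fun t ht => hN t (Ioo_subset_Icc_self ht)) (by
      intro t ht
      have ht' := Ioo_subset_Icc_self ht
      have e₁ := abs_inv_sub_inv_le hδ0 (d₁.trans (hb₁ t ht')) (d₂.trans (hb₂ t ht'))
      have e₂ := abs_inv_sub_inv_le hδ0 (d₃.trans (hb₃ t ht')) (d₄.trans (hb₄ t ht'))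
      have e₃ : |f t| ≤ |B| := (hB t ht').trans (le_abs_self B)
      generalize 1 / r₁ t - 1 / r₂ t = X at e₁ ⊢
      generalize 1 / q₁ t - 1 / q₂ t = Y at e₂ ⊢
      generalize r₁ t - r₂ t = x at e₁ ⊢
      generalize q₁ t - q₂ t = y at e₂ ⊢
      have k₁ : x * (-Y) ≤ |x| * (|y| / δ ^ 2) := by
        refine (le_abs_self _).trans ?_
        rw [abs_mul, abs_neg]
        gcongr
      have k₂ : y * X ≤ |y| * (|x| / δ ^ 2) := by
        refine (le_abs_self _).trans ?_
        rw [abs_mul]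
        gcongr
      have k₃ : -(y * (f t * Y)) ≤ |y| * (|B| * (|y| / δ ^ 2)) := by
        refine (neg_le_abs _).trans ?_
        rw [abs_mul, abs_mul]
        gcongr
      have k₄ : 2 * (|x| * |y|) ≤ x ^ 2 + y ^ 2 := by
        rw [← sq_abs x, ← sq_abs y]
        nlinarith [sq_nonneg (|x| - |y|)]
      have k₅ : |y| * |y| = y ^ 2 := by rw [← sq_abs y]; ring
      have hm : (0 : ℝ) ≤ m + 1 := by positivity
      calc 2 * x * -Y + 2 * y * ((m + 1) * X - f t * Y)
          = 2 * (x * -Y) + 2 * (m + 1) * (y * X) + 2 * (-(y * (f t * Y))) := by ring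
        _ ≤ 2 * (|x| * (|y| / δ ^ 2)) + 2 * (m + 1) * (|y| * (|x| / δ ^ 2))
            + 2 * (|y| * (|B| * (|y| / δ ^ 2))) := by gcongr
        _ = ((m + 2) * (2 * (|x| * |y|)) + 2 * |B| * (|y| * |y|)) / δ ^ 2 := by ring
        _ ≤ ((m + 2) * (x ^ 2 + y ^ 2) + 2 * |B| * (x ^ 2 + y ^ 2)) / δ ^ 2 := by
            rw [k₅]
            gcongr
            nlinarith [sq_nonneg x]
        _ = _ := by ring)
    (fun t _ => by positivity) (by
      have hc := (hN a (left_mem_Icc.2 hac.le)).continuousAt.tendsto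
      simp only [hr, hq, sub_self] at hc
      simpa using hc.mono_left nhdsWithin_le_nhds) s hs
  have hz' : (q₁ s - q₂ s) ^ 2 = 0 := by
    nlinarith [sq_nonneg (r₁ s - r₂ s), sq_nonneg (q₁ s - q₂ s)]
  nlinarith [pow_eq_zero_iff (two_ne_zero) |>.1 hz']

end DecBranch

/-- Inverse of a function with negative derivative on an open interval. -/
theorem exists_inverse {h h' : ℝ → ℝ} {I : Set ℝ} (hI : IsOpen I) (hIc : I.OrdConnected)
    (hd : ∀ s ∈ I, HasDerivAt h (h' s) s) (hneg : ∀ s ∈ I, h' s < 0) :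
    ∃ S : ℝ → ℝ, (∀ y ∈ h '' I, S y ∈ I ∧ h (S y) = y ∧ HasDerivAt S (1 / h' (S y)) y) ∧
      (∀ s ∈ I, S (h s) = s) := by
  have hanti : StrictAntiOn h I := by
    intro x hx y hy hxy
    exact gt_of_hasDerivAt_neg hxy (fun s hs => hd s (hIc.out hx hy hs))
      (fun s hs => hneg s (hIc.out hx hy (Ioo_subset_Icc_self hs)))
  have hinj := hanti.injOn
  set S := Function.invFunOn h I with hS
  have hS1 : ∀ s ∈ I, S (h s) = s := fun s hs => hinj.leftInvOn_invFunOn hs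
  have hloc : ∀ s ∈ I, HasDerivAt S (1 / h' s) (h s) := by
    intro s hs
    obtain ⟨ε, hε, hball⟩ := Metric.isOpen_iff.1 hI s hs
    have hcontAt : ContinuousAt S (h s) := by
      rw [Metric.continuousAt_iff]
      intro ρ hρ
      set δ := min ε ρ / 2 with hδ
      have hδ0 : 0 < δ := by have := lt_min hε hρ; linarith
      have hδε : δ < ε := by have := min_le_left ε ρ; linarith
      have hδρ : δ < ρ := by have := min_le_right ε ρ; linarith
      have hl : s - δ ∈ I := hball (by rw [Metric.mem_ball, Real.dist_eq, abs_lt]; constructor <;> linarith)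
      have hr : s + δ ∈ I := hball (by rw [Metric.mem_ball, Real.dist_eq, abs_lt]; constructor <;> linarith)
      have h1 : h s < h (s - δ) := hanti hl hs (by linarith)
      have h2 : h (s + δ) < h s := hanti hs hr (by linarith)
      refine ⟨min (h (s - δ) - h s) (h s - h (s + δ)), lt_min (by linarith) (by linarith), ?_⟩
      intro y hy
      rw [Real.dist_eq, abs_lt] at hy
      have hy1 := min_le_left (h (s - δ) - h s) (h s - h (s + δ))
      have hy2 := min_le_right (h (s - δ) - h s) (h s - h (s + δ))
      have hsub : Icc (s - δ) (s + δ) ⊆ I := hIc.out hl hr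
      obtain ⟨x, hx, hxy⟩ := intermediate_value_Icc' (by linarith : s - δ ≤ s + δ)
        (fun t ht => (hd t (hsub ht)).continuousAt.continuousWithinAt)
        (show y ∈ Icc (h (s + δ)) (h (s - δ)) from ⟨by linarith, by linarith⟩)
      rw [← hxy, hS1 x (hsub hx), hS1 s hs, Real.dist_eq, abs_lt]
      constructor <;> linarith [hx.1, hx.2]
    have himg : ∀ᶠ y in nhds (h s), h (S y) = y := by
      have hl : ∃ x ∈ I, x < s := ⟨s - ε / 2, hball (by rw [Metric.mem_ball, Real.dist_eq, abs_lt]; constructor <;> linarith), by linarith⟩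
      have hr : ∃ x ∈ I, s < x := ⟨s + ε / 2, hball (by rw [Metric.mem_ball, Real.dist_eq, abs_lt]; constructor <;> linarith), by linarith⟩
      obtain ⟨x, hx, hxs⟩ := hl
      obtain ⟨z, hz, hsz⟩ := hr
      filter_upwards [Ioo_mem_nhds (hanti hs hz hsz) (hanti hx hs hxs)] with y hy
      obtain ⟨t, ht, hty⟩ := intermediate_value_Icc' (by linarith : x ≤ z)
        (fun t ht => (hd t (hIc.out hx hz ht)).continuousAt.continuousWithinAt)
        (Ioo_subset_Icc_self hy)
      rw [← hty, hS1 t (hIc.out hx hz ht)]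
    have := HasDerivAt.of_local_left_inverse (f := h) (f' := h' s) (g := S) (a := h s)
      hcontAt (by rw [hS1 s hs]; exact hd s hs) (hneg s hs).ne himg
    rwa [one_div]
  refine ⟨S, ?_, hS1⟩
  rintro y ⟨s, hs, rfl⟩
  rw [hS1 s hs]
  exact ⟨hs, rfl, hloc s hs⟩

theorem le_of_le_right {X Y : ℝ → ℝ} {a c : ℝ} (hac : a < c) (hX : ContinuousAt X a)
    (hY : ContinuousAt Y a) (h : ∀ s ∈ Ioo a c, X s ≤ Y s) : X a ≤ Y a := by
  refine le_of_tendsto_of_tendsto (hX.tendsto.mono_left nhdsWithin_le_nhds)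
    (hY.tendsto.mono_left nhdsWithin_le_nhds) (b := nhdsWithin a (Ioi a)) ?_
  filter_upwards [Ioo_mem_nhdsGT hac] with t ht using h t ht

/-- Inverse of a decreasing function on an interval with a limit at the right end. -/
theorem exists_inverse_Ioo {h h' : ℝ → ℝ} {a c C : ℝ}
    (hd : ∀ s ∈ Ioo a c, HasDerivAt h (h' s) s) (hneg : ∀ s ∈ Ioo a c, h' s < 0)
    (hlim : Tendsto h (nhdsWithin c (Iio c)) (nhds C)) :
    (∀ s ∈ Ioo a c, C < h s) ∧ ∃ S : ℝ → ℝ, (∀ x ∈ Ioo a c, ∀ y ∈ Ioc C (h x),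
        S y ∈ Ico x c ∧ h (S y) = y ∧ HasDerivAt S (1 / h' (S y)) y) ∧
      (∀ s ∈ Ioo a c, S (h s) = s) ∧
      (a < c → Tendsto S (nhdsWithin C (Ioi C)) (nhdsWithin c (Iio c))) := by
  have hanti : StrictAntiOn h (Ioo a c) := by
    intro x hx y hy hxy
    exact gt_of_hasDerivAt_neg hxy (fun s hs => hd s (ordConnected_Ioo.out hx hy hs))
      (fun s hs => hneg s (ordConnected_Ioo.out hx hy (Ioo_subset_Icc_self hs)))
  have hC : ∀ s ∈ Ioo a c, C < h s := by
    intro s hs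
    have hm : (s + c) / 2 ∈ Ioo a c := ⟨by linarith [hs.1, hs.2], by linarith [hs.2]⟩
    have h1 : h ((s + c) / 2) < h s := hanti hs hm (by linarith [hs.2])
    refine lt_of_le_of_lt (le_of_tendsto hlim ?_) h1
    filter_upwards [Ioo_mem_nhdsLT hm.2] with t ht
    exact (hanti hm ⟨hm.1.trans ht.1, ht.2⟩ ht.1).le
  obtain ⟨S, hS, hS'⟩ := exists_inverse isOpen_Ioo ordConnected_Ioo hd hneg
  have hmem : ∀ x ∈ Ioo a c, ∀ y ∈ Ioc C (h x), ∃ t ∈ Ico x c, h t = y := by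
    intro x hx y hy
    obtain ⟨z, hz1, hz2⟩ := ((hlim.eventually (gt_mem_nhds hy.1)).and
      (Ioo_mem_nhdsLT hx.2)).exists
    obtain ⟨t, ht, hty⟩ := intermediate_value_Icc' hz2.1.le
      (fun t ht => (hd t ⟨hx.1.trans_le ht.1, ht.2.trans_lt hz2.2⟩).continuousAt.continuousWithinAt)
      (show y ∈ Icc (h z) (h x) from ⟨hz1.le, hy.2⟩)
    exact ⟨t, ⟨ht.1, ht.2.trans_lt hz2.2⟩, hty⟩
  have hSx : ∀ x ∈ Ioo a c, ∀ y ∈ Ioc C (h x),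
      S y ∈ Ico x c ∧ h (S y) = y ∧ HasDerivAt S (1 / h' (S y)) y := by
    intro x hx y hy
    obtain ⟨t, ht, rfl⟩ := hmem x hx y hy
    have ht' : t ∈ Ioo a c := ⟨hx.1.trans_le ht.1, ht.2⟩
    have := hS (h t) ⟨t, ht', rfl⟩
    exact ⟨by rwa [hS' t ht'], this.2⟩
  refine ⟨hC, S, hSx, hS', fun hac => ?_⟩
  rw [tendsto_nhdsWithin_iff]
  have hmid : (a + c) / 2 ∈ Ioo a c := ⟨by linarith, by linarith⟩
  constructor
  · rw [tendsto_order]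
    constructor
    · intro b hb
      have hx : max ((a + c) / 2) ((b + c) / 2) ∈ Ioo a c :=
        ⟨lt_max_of_lt_left hmid.1, max_lt hmid.2 (by linarith)⟩
      filter_upwards [Ioc_mem_nhdsGT (hC _ hx)] with y hy
      have h1 := (hSx _ hx y hy).1.1
      have h2 := le_max_right ((a + c) / 2) ((b + c) / 2)
      linarith
    · intro b hb
      filter_upwards [Ioc_mem_nhdsGT (hC _ hmid)] with y hy
      exact (hSx _ hmid y hy).1.2.trans hb
  · filter_upwards [Ioc_mem_nhdsGT (hC _ hmid)] with y hy
    exact (hSx _ hmid y hy).1.2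

/-! ### The branch starting at the center -/

/-- A decreasing branch over `[β, α)` that issues from the center with value `α`. -/
structure StartBranch (m : ℕ) (f r q : ℝ → ℝ) (β α : ℝ) : Prop where
  branch : DecBranch m f r q (Ico β α)
  lt : β < α
  r_lim : Tendsto r (nhdsWithin α (Iio α)) (nhds 0)
  q_lim : Tendsto q (nhdsWithin α (Iio α)) (nhds 0)
  p_lim : Tendsto (fun s => r s * f s / q s) (nhdsWithin α (Iio α)) (nhds (m + 2))

/-- The quantity `-r u'(r) / u(r)` as a function of the value. -/
noncomputable def eta (r q : ℝ → ℝ) (s : ℝ) : ℝ := r s * q s / s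

/-- The quantity `r² f(u) / u` as a function of the value. -/
noncomputable def kap (f r : ℝ → ℝ) (s : ℝ) : ℝ := r s ^ 2 * f s / s

/-- The logarithmic derivative of `eta` with respect to `log r`, multiplied by `eta`. -/
noncomputable def defect (m : ℕ) (f r q : ℝ → ℝ) (s : ℝ) : ℝ :=
  eta r q s - m + kap f r s / eta r q s

namespace StartBranch

variable {m : ℕ} {f r q r₁ q₁ r₂ q₂ : ℝ → ℝ} {β α α₁ α₂ s a : ℝ}

theorem eta_pos (H : Nonlinearity m f β) (h : StartBranch m f r q β α) (hs : s ∈ Ico β α) :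
    0 < eta r q s :=
  div_pos (mul_pos (h.branch.r_pos s hs) (h.branch.q_pos s hs)) (H.β_pos.trans_le hs.1)

theorem kap_pos (H : Nonlinearity m f β) (h : StartBranch m f r q β α) (hs : s ∈ Ico β α) :
    0 < kap f r s :=
  div_pos (mul_pos (pow_pos (h.branch.r_pos s hs) 2) (H.f_pos s hs.1)) (H.β_pos.trans_le hs.1)

theorem kap_div_eta (H : Nonlinearity m f β) (h : StartBranch m f r q β α) (hs : s ∈ Ico β α) :
    kap f r s / eta r q s = r s * f s / q s := by
  have := h.branch.r_pos s hs
  have := h.branch.q_pos s hs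
  have := H.β_pos.trans_le hs.1
  unfold kap eta
  field_simp

theorem eta_deriv (H : Nonlinearity m f β) (h : StartBranch m f r q β α) (hs : s ∈ Ico β α) :
    HasDerivAt (eta r q) (-(defect m f r q s / s)) s := by
  have h1 := h.branch.r_pos s hs
  have h2 := h.branch.q_pos s hs
  have h3 := H.β_pos.trans_le hs.1
  refine ((h.branch.mul_deriv hs).div (hasDerivAt_id s) h3.ne').congr_deriv ?_
  unfold defect
  rw [h.kap_div_eta H hs]
  unfold eta
  simp only [id]
  field_simp
  ring

theorem kap_deriv (H : Nonlinearity m f β) (h : StartBranch m f r q β α) (hs : s ∈ Ico β α) :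
    HasDerivAt (kap f r) (kap f r s / s * (s * deriv f s / f s - 1 - 2 / eta r q s)) s := by
  have h1 := h.branch.r_pos s hs
  have h2 := h.branch.q_pos s hs
  have h3 := H.β_pos.trans_le hs.1
  have h4 := H.f_pos s hs.1
  refine ((((h.branch.r_deriv s hs).pow 2).mul (H.f_diff s h3)).div
    (hasDerivAt_id s) h3.ne').congr_deriv ?_
  unfold kap eta
  simp only [id, Pi.mul_apply, Pi.pow_apply]
  field_simp
  ring

theorem defect_deriv (H : Nonlinearity m f β) (h : StartBranch m f r q β α)
    (hs : s ∈ Ico β α) :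
    HasDerivAt (defect m f r q) (-(defect m f r q s / s) + kap f r s / eta r q s / s *
      (s * deriv f s / f s - 1 - 2 / eta r q s + defect m f r q s / eta r q s)) s := by
  have h1 := h.eta_pos H hs
  have h3 := H.β_pos.trans_le hs.1
  refine (((h.eta_deriv H hs).sub_const (m : ℝ)).add
    ((h.kap_deriv H hs).div (h.eta_deriv H hs) h1.ne')).congr_deriv ?_
  field_simp
  ring

theorem eta_lim (H : Nonlinearity m f β) (h : StartBranch m f r q β α) :
    Tendsto (eta r q) (nhdsWithin α (Iio α)) (nhds 0) := by
  have hα : α ≠ 0 := (H.β_pos.trans h.lt).ne'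
  have := (h.r_lim.mul h.q_lim).div (tendsto_nhdsWithin_of_tendsto_nhds tendsto_id) hα
  simp only [mul_zero, zero_div] at this
  exact this

theorem kap_div_eta_lim (H : Nonlinearity m f β) (h : StartBranch m f r q β α) :
    Tendsto (fun s => kap f r s / eta r q s) (nhdsWithin α (Iio α)) (nhds (m + 2)) := by
  refine h.p_lim.congr' ?_
  filter_upwards [Ico_mem_nhdsLT h.lt] with s hs using (h.kap_div_eta H hs).symm

theorem defect_pos (H : Nonlinearity m f β) (h : StartBranch m f r q β α) (hs : s ∈ Ico β α) :
    0 < defect m f r q s := by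
  have hm : (0 : ℝ) < m := by exact_mod_cast H.m_pos
  by_contra hn
  have hlim : Tendsto (defect m f r q) (nhdsWithin α (Iio α)) (nhds (0 - m + (m + 2))) :=
    ((h.eta_lim H).sub_const (m : ℝ)).add (h.kap_div_eta_lim H)
  have hsub : Ico s α ⊆ Ico β α := Ico_subset_Ico_left hs.1
  obtain ⟨t, ht, h0, hp⟩ := exists_last_zero hs.2
    (fun t ht => (h.defect_deriv H (hsub ht)).continuousAt) (not_lt.1 hn)
    (hlim.eventually (lt_mem_nhds (by linarith)))
  have hd := deriv_nonneg_of_pos_right ht.2 (h.defect_deriv H (hsub ht)) h0 hp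
  have hη := h.eta_pos H (hsub ht)
  have hκ := div_pos (h.kap_pos H (hsub ht)) hη
  have ht0 := H.β_pos.trans_le (hsub ht).1
  have hK := H.K_le t (hsub ht).1
  have hηm : eta r q t < m := by
    have : eta r q t - m + kap f r t / eta r q t = 0 := h0
    linarith
  have h2 : 2 / (m : ℝ) < 2 / eta r q t := div_lt_div_of_pos_left two_pos hη hηm
  have h3 : ((m : ℝ) + 2) / m = 1 + 2 / m := by field_simp
  rw [h0] at hd
  simp only [zero_div, neg_zero, zero_add, add_zero] at hd
  have := mul_neg_of_pos_of_neg (div_pos hκ ht0)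
    (show t * deriv f t / f t - 1 - 2 / eta r q t < 0 by linarith)
  linarith

theorem eta_anti (H : Nonlinearity m f β) (h : StartBranch m f r q β α) :
    StrictAntiOn (eta r q) (Ico β α) := by
  intro x hx y hy hxy
  have hsub : ∀ t ∈ Icc x y, t ∈ Ico β α := fun t ht =>
    ⟨hx.1.trans ht.1, ht.2.trans_lt hy.2⟩
  exact gt_of_hasDerivAt_neg hxy (fun t ht => h.eta_deriv H (hsub t ht)) (fun t ht => by
    have ht' := hsub t (Ioo_subset_Icc_self ht)
    have := div_pos (h.defect_pos H ht') (H.β_pos.trans_le ht'.1)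
    linarith)

/-- A branch over `(β, α)` parametrized by the value `y` of `eta`. -/
theorem exists_parametrization (H : Nonlinearity m f β) (h : StartBranch m f r q β α)
    (hs : s ∈ Ioo β α) : ∃ S : ℝ → ℝ, S (eta r q s) = s ∧
      (∀ y ∈ Ioc 0 (eta r q s), S y ∈ Ico s α ∧ eta r q (S y) = y ∧
        HasDerivAt (fun y => kap f r (S y)) (kap f r (S y) *
          (2 / y - (S y * deriv f (S y) / f (S y) - 1)) / (y - m + kap f r (S y) / y)) y ∧
        0 < y - m + kap f r (S y) / y ∧ 0 < kap f r (S y)) ∧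
      Tendsto (fun y => kap f r (S y) / y) (nhdsWithin 0 (Ioi 0)) (nhds (m + 2)) := by
  have hsub : Ioo β α ⊆ Ico β α := Ioo_subset_Ico_self
  obtain ⟨hpos, S, hS, hS', hlim⟩ := exists_inverse_Ioo
    (fun t ht => h.eta_deriv H (hsub ht)) (fun t ht => by
      have := div_pos (h.defect_pos H (hsub ht)) (H.β_pos.trans ht.1)
      linarith) (h.eta_lim H)
  have hmem : ∀ y ∈ Ioc 0 (eta r q s), S y ∈ Ico s α := fun y hy => (hS s hs y hy).1
  have hmem' : ∀ y ∈ Ioc 0 (eta r q s), S y ∈ Ico β α := fun y hy =>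
    ⟨hs.1.le.trans (hmem y hy).1, (hmem y hy).2⟩
  refine ⟨S, hS' s hs, fun y hy => ⟨hmem y hy, (hS s hs y hy).2.1, ?_⟩, ?_⟩
  · have hSy := hmem' y hy
    have e := (hS s hs y hy).2.1
    have hD := h.defect_pos H hSy
    have hκ := h.kap_pos H hSy
    have hS0 := H.β_pos.trans_le hSy.1
    have hDe : defect m f r q (S y) = y - m + kap f r (S y) / y := by rw [defect, e]
    refine ⟨?_, hDe ▸ hD, hκ⟩
    have hd := (h.kap_deriv H hSy).comp y (hS s hs y hy).2.2
    refine hd.congr_deriv ?_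
    rw [← hDe, e]
    have := hD.ne'
    have := hS0.ne'
    generalize S y * deriv f (S y) / f (S y) = K
    field_simp
    ring
  · have h1 := (h.kap_div_eta_lim H).comp (hlim (hs.1.trans hs.2))
    refine h1.congr' ?_
    filter_upwards [Ioc_mem_nhdsGT (h.eta_pos H (hsub hs))] with y hy
    simp only [Function.comp, (hS s hs y hy).2.1]

/-- Comparison of `kap` at equal values of `eta`. -/
theorem kap_le_kap (H : Nonlinearity m f β) (h₁ : StartBranch m f r₁ q₁ β α₁)
    (h₂ : StartBranch m f r₂ q₂ β α₂) (hα : α₁ < α₂) (ha : β ≤ a)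
    (hη : ∀ s ∈ Ioo a α₁, eta r₁ q₁ s < eta r₂ q₂ s) {σ : ℝ} (hs : s ∈ Ioo a α₁)
    (hσ : σ ∈ Ioo β α₂) (he : eta r₂ q₂ σ = eta r₁ q₁ s) : kap f r₁ s ≤ kap f r₂ σ := by
  have hm : (0 : ℝ) < m := by exact_mod_cast H.m_pos
  have hs' : s ∈ Ioo β α₁ := ⟨ha.trans_lt hs.1, hs.2⟩
  obtain ⟨S₁, hSs, hS₁, hl₁⟩ := h₁.exists_parametrization H hs'
  obtain ⟨S₂, hSσ, hS₂, hl₂⟩ := h₂.exists_parametrization H hσ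
  rw [he] at hSσ hS₂
  set Y := eta r₁ q₁ s with hY
  have hY0 : 0 < Y := h₁.eta_pos H (Ioo_subset_Ico_self hs')
  set k₁ := fun y => kap f r₁ (S₁ y) with hk₁
  set k₂ := fun y => kap f r₂ (S₂ y) with hk₂
  set K₁ := fun y => S₁ y * deriv f (S₁ y) / f (S₁ y) with hK₁
  set K₂ := fun y => S₂ y * deriv f (S₂ y) / f (S₂ y) with hK₂
  have hSlt : ∀ y ∈ Ioc 0 Y, S₁ y < S₂ y := by
    intro y hy
    obtain ⟨m₁, e₁, -⟩ := hS₁ y hy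
    obtain ⟨m₂, e₂, -⟩ := hS₂ y hy
    have hlt := hη (S₁ y) ⟨hs.1.trans_le m₁.1, m₁.2⟩
    rw [e₁] at hlt
    by_contra hn
    have hle := (h₂.eta_anti H).antitoneOn
      (show S₂ y ∈ Ico β α₂ from ⟨hσ.1.le.trans m₂.1, m₂.2⟩)
      (show S₁ y ∈ Ico β α₂ from ⟨hs'.1.le.trans m₁.1, m₁.2.trans hα⟩) (not_lt.1 hn)
    rw [e₂] at hle
    linarith
  have hKK : ∀ y ∈ Ioc 0 Y, K₂ y ≤ K₁ y := fun y hy =>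
    H.K_anti (show β ≤ S₁ y from hs'.1.le.trans (hS₁ y hy).1.1)
      (show β ≤ S₂ y from hσ.1.le.trans (hS₂ y hy).1.1) (hSlt y hy).le
  have hK2mono : ∀ x ∈ Ioc 0 Y, ∀ y ∈ Ioc 0 Y, x ≤ y → K₂ x ≤ K₂ y := by
    intro x hx y hy hxy
    refine H.K_anti (show β ≤ S₂ y from hσ.1.le.trans (hS₂ y hy).1.1)
      (show β ≤ S₂ x from hσ.1.le.trans (hS₂ x hx).1.1) ?_
    by_contra hn
    have m₁ := (hS₂ y hy).1
    have m₂ := (hS₂ x hx).1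
    have := h₂.eta_anti H (show S₂ x ∈ Ico β α₂ from ⟨hσ.1.le.trans m₂.1, m₂.2⟩)
      (show S₂ y ∈ Ico β α₂ from ⟨hσ.1.le.trans m₁.1, m₁.2⟩) (not_le.1 hn)
    rw [(hS₂ x hx).2.1, (hS₂ y hy).2.1] at this
    linarith
  have hK2le : ∀ y ∈ Ioc 0 Y, K₂ y ≤ 1 + 2 / m := by
    intro y hy
    have := H.K_le (S₂ y) (hσ.1.le.trans (hS₂ y hy).1.1)
    rwa [show ((m : ℝ) + 2) / m = 1 + 2 / m by field_simp] at this
  have hDlt : ∀ y ∈ Ioc 0 Y, k₂ y < k₁ y → y - m + k₂ y / y < y - m + k₁ y / y := by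
    intro y hy hlt
    have := div_lt_div_of_pos_right hlt hy.1
    linarith
  have hΛ : ∀ y ∈ Ioc 0 Y, 0 < 2 / y - (K₂ y - 1) → k₁ y ≤ k₂ y := by
    intro y hy hN
    have hlog : Real.log (k₁ y) - Real.log (k₂ y) ≤ 0 := by
      refine nonpos_of_deriv_nonpos_where_pos (X := fun x => Real.log (k₁ x) - Real.log (k₂ x))
        hy.1 (fun x hx => ?_) (fun x hx hpos => ?_) ?_
        (X' := fun x => (2 / x - (K₁ x - 1)) / (x - m + k₁ x / x)
          - (2 / x - (K₂ x - 1)) / (x - m + k₂ x / x))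
      · have hx' : x ∈ Ioc 0 Y := ⟨hx.1, hx.2.trans hy.2⟩
        obtain ⟨-, -, d₁, D₁, p₁⟩ := hS₁ x hx'
        obtain ⟨-, -, d₂, D₂, p₂⟩ := hS₂ x hx'
        refine ((d₁.log p₁.ne').sub (d₂.log p₂.ne')).congr_deriv ?_
        have aux : ∀ k N D : ℝ, 0 < k → k * N / D / k = N / D := fun k N D hk => by
          rw [mul_div_assoc, mul_div_cancel_left₀ _ hk.ne']
        exact congrArg₂ (· - ·) (aux _ _ _ p₁) (aux _ _ _ p₂)
      · have hx' : x ∈ Ioc 0 Y := ⟨hx.1, hx.2.le.trans hy.2⟩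
        obtain ⟨-, -, d₁, D₁, p₁⟩ := hS₁ x hx'
        obtain ⟨-, -, d₂, D₂, p₂⟩ := hS₂ x hx'
        have hlt : k₂ x < k₁ x := (Real.log_lt_log_iff p₂ p₁).1 (by linarith)
        have hN2 : 0 < 2 / x - (K₂ x - 1) := by
          have := hK2mono x hx' y hy hx.2.le
          have := div_lt_div_of_pos_left two_pos hx.1 hx.2
          linarith
        have s1 : (2 / x - (K₁ x - 1)) / (x - m + k₁ x / x)
            ≤ (2 / x - (K₂ x - 1)) / (x - m + k₁ x / x) :=
          div_le_div_of_nonneg_right (by linarith [hKK x hx']) D₁.le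
        have s2 : (2 / x - (K₂ x - 1)) / (x - m + k₁ x / x)
            ≤ (2 / x - (K₂ x - 1)) / (x - m + k₂ x / x) :=
          div_le_div_of_nonneg_left hN2.le D₂ (hDlt x hx' hlt).le
        linarith
      · have hm2 : (m : ℝ) + 2 ≠ 0 := by positivity
        have := (hl₁.log hm2).sub (hl₂.log hm2)
        rw [sub_self] at this
        refine this.congr' ?_
        filter_upwards [Ioc_mem_nhdsGT hY0] with x hx
        rw [Real.log_div (hS₁ x hx).2.2.2.2.ne' hx.1.ne',
          Real.log_div (hS₂ x hx).2.2.2.2.ne' hx.1.ne']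
        ring
    exact (Real.log_le_log_iff (hS₁ y hy).2.2.2.2 (hS₂ y hy).2.2.2.2).1 (by linarith)
  have hX : k₁ Y - k₂ Y ≤ 0 := by
    refine nonpos_of_deriv_nonpos_where_pos (X := fun x => k₁ x - k₂ x) hY0
      (fun x hx => ((hS₁ x hx).2.2.1).sub ((hS₂ x hx).2.2.1)) (fun x hx hpos => ?_) ?_
    · have hx' : x ∈ Ioc 0 Y := ⟨hx.1, hx.2.le⟩
      obtain ⟨-, -, -, D₁, p₁⟩ := hS₁ x hx'
      obtain ⟨-, -, -, D₂, p₂⟩ := hS₂ x hx'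
      have hlt : k₂ x < k₁ x := by linarith
      have hN2 : 2 / x - (K₂ x - 1) ≤ 0 := by
        by_contra hn
        linarith [hΛ x hx' (not_le.1 hn)]
      have hxm : (m : ℝ) ≤ x := by
        by_contra hn
        have := div_lt_div_of_pos_left two_pos hx.1 (not_le.1 hn)
        linarith [hK2le x hx']
      have hφ : k₂ x / (x - m + k₂ x / x) ≤ k₁ x / (x - m + k₁ x / x) := by
        rw [div_le_div_iff₀ D₂ D₁]
        have : k₂ x * (k₁ x / x) = k₁ x * (k₂ x / x) := by ring
        nlinarith
      have hφ0 : 0 ≤ k₁ x / (x - m + k₁ x / x) := (div_pos p₁ D₁).le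
      change k₁ x * (2 / x - (K₁ x - 1)) / (x - m + k₁ x / x)
        - k₂ x * (2 / x - (K₂ x - 1)) / (x - m + k₂ x / x) ≤ 0
      rw [mul_div_right_comm, mul_div_right_comm]
      have hN := hKK x hx'
      nlinarith
    · have h0 : Tendsto (fun y : ℝ => y) (nhdsWithin 0 (Ioi 0)) (nhds 0) :=
        tendsto_nhdsWithin_of_tendsto_nhds tendsto_id
      have := (h0.mul hl₁).sub (h0.mul hl₂)
      simp only [zero_mul, sub_zero] at this
      refine this.congr' ?_
      filter_upwards [self_mem_nhdsWithin] with x hx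
      have hx0 : x ≠ 0 := ne_of_gt hx
      simp only [hk₁, hk₂]
      field_simp
  simp only [hk₁, hk₂, hSs, hSσ] at hX
  linarith

theorem eventually_q_lt (h₁ : StartBranch m f r₁ q₁ β α₁) (h₂ : StartBranch m f r₂ q₂ β α₂)
    (hα : α₁ < α₂) : ∀ᶠ s in nhdsWithin α₁ (Iio α₁), q₁ s < q₂ s := by
  have hmem : α₁ ∈ Ico β α₂ := ⟨h₁.lt.le, hα⟩
  have hc : Tendsto q₂ (nhdsWithin α₁ (Iio α₁)) (nhds (q₂ α₁)) :=
    (h₂.branch.q_deriv α₁ hmem).continuousAt.tendsto.mono_left nhdsWithin_le_nhds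
  exact h₁.q_lim.eventually_lt hc (h₂.branch.q_pos α₁ hmem)

theorem eta_lt_iff (hs : 0 < s) : eta r₁ q₁ s < eta r₂ q₂ s ↔ r₁ s * q₁ s < r₂ s * q₂ s := by
  unfold eta
  exact div_lt_div_iff_of_pos_right hs

/-- The branch with the larger initial value has the larger `eta`. -/
theorem eta_lt_eta (H : Nonlinearity m f β) (h₁ : StartBranch m f r₁ q₁ β α₁)
    (h₂ : StartBranch m f r₂ q₂ β α₂) (hα : α₁ < α₂) :
    ∀ s ∈ Ico β α₁, eta r₁ q₁ s < eta r₂ q₂ s := by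
  intro s hs
  by_contra hn
  have hsub : ∀ {t}, t ∈ Ico s α₁ → t ∈ Ico β α₁ := fun ht => ⟨hs.1.trans ht.1, ht.2⟩
  have hsub₂ : Ico β α₁ ⊆ Ico β α₂ := Ico_subset_Ico_right hα.le
  have hα₁ : α₁ ∈ Ico β α₂ := ⟨h₁.lt.le, hα⟩
  have hev : ∀ᶠ t in nhdsWithin α₁ (Iio α₁), eta r₁ q₁ t < eta r₂ q₂ t :=
    (h₁.eta_lim H).eventually_lt
      ((h₂.eta_deriv H hα₁).continuousAt.tendsto.mono_left nhdsWithin_le_nhds)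
      (h₂.eta_pos H hα₁)
  obtain ⟨a, ha, h0, hp⟩ := exists_last_zero (h := fun t => eta r₂ q₂ t - eta r₁ q₁ t) hs.2
    (fun t ht => ((h₂.eta_deriv H (hsub₂ (hsub ht))).sub (h₁.eta_deriv H (hsub ht))).continuousAt)
    (by simpa using hn) (by filter_upwards [hev] with t ht; linarith)
  have haβ : a ∈ Ico β α₁ := hsub ha
  have ha0 : 0 < a := H.β_pos.trans_le haβ.1
  have hη : ∀ t ∈ Ioo a α₁, eta r₁ q₁ t < eta r₂ q₂ t := fun t ht => by linarith [hp t ht]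
  have hηa : eta r₁ q₁ a = eta r₂ q₂ a := by linarith
  have hκ : kap f r₁ a ≤ kap f r₂ a := by
    by_contra hlt
    push Not at hlt
    obtain ⟨c, hc1, hc2⟩ := exists_between hlt
    have e₁ := (h₁.kap_deriv H haβ).continuousAt.eventually (lt_mem_nhds hc2)
    have e₂ := (h₂.kap_deriv H (hsub₂ haβ)).continuousAt.eventually (gt_mem_nhds hc1)
    obtain ⟨δ, hδ, hball⟩ := Metric.eventually_nhds_iff.1 (e₁.and e₂)
    set σ := a + min (δ / 2) ((α₁ - a) / 2) with hσ
    have hm1 := min_le_left (δ / 2) ((α₁ - a) / 2)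
    have hm2 := min_le_right (δ / 2) ((α₁ - a) / 2)
    have hm3 : 0 < min (δ / 2) ((α₁ - a) / 2) := lt_min (by linarith) (by linarith [haβ.2])
    have hσα : σ < α₁ := by linarith [haβ.2]
    have haσ : a < σ := by linarith
    have hσm : σ ∈ Ico β α₁ := ⟨haβ.1.trans haσ.le, hσα⟩
    have g1 : eta r₂ q₂ σ < eta r₁ q₁ a := by
      rw [hηa]
      exact h₂.eta_anti H (hsub₂ haβ) (hsub₂ hσm) haσ
    have g2 := hη σ ⟨haσ, hσα⟩
    obtain ⟨t, ht, hte⟩ := intermediate_value_Ioo' haσ.le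
      (fun t ht => (h₁.eta_deriv H ⟨haβ.1.trans ht.1,
        ht.2.trans_lt hσα⟩).continuousAt.continuousWithinAt)
      (show eta r₂ q₂ σ ∈ Ioo (eta r₁ q₁ σ) (eta r₁ q₁ a) from ⟨g2, g1⟩)
    have hk := h₁.kap_le_kap H h₂ hα haβ.1 hη (s := t) ⟨ht.1, ht.2.trans hσα⟩
      (σ := σ) ⟨haβ.1.trans_lt haσ, hσα.trans hα⟩ hte.symm
    have b1 := (hball (y := t) (by
      rw [Real.dist_eq, abs_lt]; constructor <;> linarith [ht.1, ht.2])).1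
    have b2 := (hball (y := σ) (by
      rw [Real.dist_eq, abs_lt]; constructor <;> linarith)).2
    linarith
  have hb₁ := h₁.branch.mono (Ico_subset_Ico_left haβ.1 : Ico a α₁ ⊆ Ico β α₁)
  have hb₂ := h₂.branch.mono ((Ico_subset_Ico_left haβ.1).trans hsub₂ : Ico a α₁ ⊆ Ico β α₂)
  have haa : a ∈ Ico a α₁ := ⟨le_rfl, ha.2⟩
  have hra : r₁ a ≤ r₂ a := by
    have hfa := H.f_pos a haβ.1
    unfold kap at hκ
    rw [div_le_div_iff_of_pos_right ha0, mul_le_mul_iff_left₀ hfa] at hκ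
    exact le_of_sq_le_sq hκ (hb₂.r_pos a haa).le
  have hy : ∀ t ∈ Ioo a α₁, r₁ t * q₁ t < r₂ t * q₂ t := fun t ht =>
    (eta_lt_iff (ha0.trans ht.1)).1 (hη t ht)
  have hrlt := hb₁.r_lt_r hb₂ hy hra
  have hqlt : ∀ t ∈ Ioo a α₁, q₁ t < q₂ t := by
    intro t ht
    have hst : Ico t α₁ ⊆ Ico a α₁ := Ico_subset_Ico_left ht.1.le
    exact (hb₁.mono hst).q_lt_q (hb₂.mono hst) (h₁.eventually_q_lt h₂ hα)
      (fun x hx _ _ => hrlt x ⟨ht.1.trans_le hx.1, hx.2⟩) t ⟨le_rfl, ht.2⟩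
  have hqa : q₁ a ≤ q₂ a :=
    le_of_le_right ha.2 (hb₁.q_deriv a haa).continuousAt (hb₂.q_deriv a haa).continuousAt
      (fun t ht => (hqlt t ht).le)
  have hya : r₁ a * q₁ a = r₂ a * q₂ a := by
    unfold eta at hηa
    field_simp at hηa
    exact hηa
  have p1 := hb₁.r_pos a haa
  have p2 := hb₁.q_pos a haa
  have hra' : r₁ a = r₂ a := by
    refine le_antisymm hra ?_
    by_contra hlt
    nlinarith
  have hqa' : q₁ a = q₂ a := by
    rw [hra'] at hya
    exact mul_left_cancel₀ (hra' ▸ p1.ne') hya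
  set c := (a + α₁) / 2 with hc
  have hcα : c < α₁ := by linarith [ha.2]
  have hac : a < c := by linarith [ha.2]
  have hm : (a + c) / 2 ∈ Ioo a c := ⟨by linarith, by linarith⟩
  have hsc : Icc a c ⊆ Ico a α₁ := fun t ht => ⟨ht.1, ht.2.trans_lt hcα⟩
  have := DecBranch.eq_of_eq_left H.cont (hb₁.mono hsc) (hb₂.mono hsc) hra' hqa' _ hm
  have := hqlt _ ⟨hm.1, hm.2.trans hcα⟩
  linarith

theorem log_flux_le (H : Nonlinearity m f β) (h₁ : StartBranch m f r₁ q₁ β α₁)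
    (h₂ : StartBranch m f r₂ q₂ β α₂) (hα : α₁ < α₂) (hs : s ∈ Ioo β α₁) :
    (m + 1) * Real.log (r₁ s) + Real.log (q₁ s)
      ≤ (m + 1) * Real.log (r₂ s) + Real.log (q₂ s) := by
  have hm : (0 : ℝ) < m := by exact_mod_cast H.m_pos
  have hη := h₁.eta_lt_eta H h₂ hα
  have hs1 : s ∈ Ico β α₁ := Ioo_subset_Ico_self hs
  have hs2 : s ∈ Ico β α₂ := ⟨hs.1.le, hs.2.trans hα⟩
  obtain ⟨S, hSs, hS, -⟩ := h₂.exists_parametrization H (s := s) ⟨hs.1, hs.2.trans hα⟩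
  obtain ⟨hσm, hσe, -⟩ := hS (eta r₁ q₁ s) ⟨h₁.eta_pos H hs1, (hη s hs1).le⟩
  set σ := S (eta r₁ q₁ s)
  have hκ := h₁.kap_le_kap H h₂ hα le_rfl (fun t ht => hη t (Ioo_subset_Ico_self ht)) hs
    (σ := σ) ⟨hs.1.trans_le hσm.1, hσm.2⟩ hσe
  have hJ := ge_of_hasDerivAt_nonpos hσm.1
    (X := fun t => Real.log (eta r₂ q₂ t) + m / 2 * Real.log (kap f r₂ t))
    (X' := fun t => -(defect m f r₂ q₂ t / t) / eta r₂ q₂ t + m / 2 * (kap f r₂ t / t *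
      (t * deriv f t / f t - 1 - 2 / eta r₂ q₂ t) / kap f r₂ t)) (by
      intro t ht
      have ht' : t ∈ Ico β α₂ := ⟨hs.1.le.trans ht.1, ht.2.trans_lt hσm.2⟩
      exact ((h₂.eta_deriv H ht').log (h₂.eta_pos H ht').ne').add
        (((h₂.kap_deriv H ht').log (h₂.kap_pos H ht').ne').const_mul _)) (by
      intro t ht
      have ht' : t ∈ Ico β α₂ := ⟨hs.1.le.trans ht.1.le, ht.2.trans hσm.2⟩
      have ht0 := H.β_pos.trans_le ht'.1
      have p1 := h₂.eta_pos H ht'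
      have p2 := h₂.kap_pos H ht'
      have hK := H.K_le t ht'.1
      rw [le_div_iff₀ hm] at hK
      generalize t * deriv f t / f t = K at hK ⊢
      have e : -(defect m f r₂ q₂ t / t) / eta r₂ q₂ t + m / 2 * (kap f r₂ t / t *
          (K - 1 - 2 / eta r₂ q₂ t) / kap f r₂ t)
          = -(1 / t) * (1 + kap f r₂ t / eta r₂ q₂ t ^ 2 - (K * m - m) / 2) := by
        unfold defect
        field_simp
        ring
      rw [e]
      have : 0 < kap f r₂ t / eta r₂ q₂ t ^ 2 := by positivity
      have h2 : 0 < 1 / t := by positivity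
      nlinarith)
  have hs0 := H.β_pos.trans hs.1
  have a1 := h₁.branch.r_pos s hs1
  have a2 := h₁.branch.q_pos s hs1
  have a3 := h₂.branch.r_pos s hs2
  have a4 := h₂.branch.q_pos s hs2
  have hfs := H.f_pos s hs.1.le
  have hκl := Real.log_le_log (h₁.kap_pos H hs1) hκ
  have hκl' : (m : ℝ) / 2 * Real.log (kap f r₁ s) ≤ m / 2 * Real.log (kap f r₂ σ) := by gcongr
  have expand : ∀ r q : ℝ → ℝ, 0 < r s → 0 < q s →
      Real.log (eta r q s) + m / 2 * Real.log (kap f r s)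
        = (m + 1) * Real.log (r s) + Real.log (q s) - Real.log s
          + m / 2 * (Real.log (f s) - Real.log s) := by
    intro r q hr hq
    unfold eta kap
    rw [Real.log_div (by positivity) hs0.ne', Real.log_mul hr.ne' hq.ne',
      Real.log_div (by positivity) hs0.ne', Real.log_mul (by positivity) hfs.ne', Real.log_pow]
    push_cast
    ring
  have x1 := expand r₁ q₁ a1 a2
  have x2 := expand r₂ q₂ a3 a4
  rw [hσe] at hJ
  linarith

/-- Ordering at the level `β` of two branches issuing from the center. -/
theorem order_at_beta (H : Nonlinearity m f β) (h₁ : StartBranch m f r₁ q₁ β α₁)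
    (h₂ : StartBranch m f r₂ q₂ β α₂) (hα : α₁ < α₂) :
    q₁ β < q₂ β ∧ r₁ β * q₁ β < r₂ β * q₂ β ∧
      (m + 1) * Real.log (r₁ β) + Real.log (q₁ β)
        ≤ (m + 1) * Real.log (r₂ β) + Real.log (q₂ β) := by
  have hy : ∀ t ∈ Ico β α₁, r₁ t * q₁ t < r₂ t * q₂ t := fun t ht =>
    (eta_lt_iff (H.β_pos.trans_le ht.1)).1 (h₁.eta_lt_eta H h₂ hα t ht)
  have hβ₁ : β ∈ Ico β α₁ := ⟨le_rfl, h₁.lt⟩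
  have hβ₂ : β ∈ Ico β α₂ := ⟨le_rfl, h₂.lt⟩
  have hb₂ := h₂.branch.mono (Ico_subset_Ico_right hα.le : Ico β α₁ ⊆ Ico β α₂)
  refine ⟨?_, hy β hβ₁, ?_⟩
  · rcases lt_or_ge (r₁ β) (r₂ β) with hr | hr
    · have hrlt := h₁.branch.r_lt_r hb₂ (fun t ht => hy t (Ioo_subset_Ico_self ht)) hr.le
      refine h₁.branch.q_lt_q hb₂ (h₁.eventually_q_lt h₂ hα) (fun x hx _ _ => ?_) β hβ₁
      rcases hx.1.eq_or_lt with e | e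
      · rwa [← e]
      · exact hrlt x ⟨e, hx.2⟩
    · have := hy β hβ₁
      have p1 := h₁.branch.q_pos β hβ₁
      have p2 := h₂.branch.r_pos β hβ₂
      by_contra hn
      nlinarith
  · exact le_of_le_right h₁.lt (h₁.branch.log_flux_deriv hβ₁).continuousAt
      (h₂.branch.log_flux_deriv hβ₂).continuousAt (fun t ht => h₁.log_flux_le H h₂ hα ht)

end StartBranch

/-! ### Passage through the region where the potential is nonpositive -/

/-- The energy `u'² + 2 F(u)` as a function of the value. -/
noncomputable def energy (f q : ℝ → ℝ) (s : ℝ) : ℝ := q s ^ 2 + 2 * Fint f s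

/-- The flux `r^{n-1} |u'|` as a function of the value; the dimension is `m + 2`. -/
noncomputable def flux (m : ℕ) (r q : ℝ → ℝ) (s : ℝ) : ℝ := r s ^ (m + 1) * q s

theorem log_flux {m : ℕ} {r q : ℝ → ℝ} {s : ℝ} (hr : 0 < r s) (hq : 0 < q s) :
    Real.log (flux m r q s) = (m + 1) * Real.log (r s) + Real.log (q s) := by
  unfold flux
  rw [Real.log_mul (by positivity) hq.ne', Real.log_pow]
  push_cast
  ring

theorem flux_le_flux_iff {m : ℕ} {r₁ q₁ r₂ q₂ : ℝ → ℝ} {s : ℝ} (hr₁ : 0 < r₁ s)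
    (hq₁ : 0 < q₁ s) (hr₂ : 0 < r₂ s) (hq₂ : 0 < q₂ s) :
    flux m r₁ q₁ s ≤ flux m r₂ q₂ s ↔ (m + 1) * Real.log (r₁ s) + Real.log (q₁ s)
      ≤ (m + 1) * Real.log (r₂ s) + Real.log (q₂ s) := by
  rw [← log_flux hr₁ hq₁, ← log_flux hr₂ hq₂]
  exact (Real.log_le_log_iff (by unfold flux; positivity) (by unfold flux; positivity)).symm

namespace DecBranch

variable {m : ℕ} {f r q r₁ q₁ r₂ q₂ : ℝ → ℝ} {J : Set ℝ} {β s a : ℝ}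

theorem energy_deriv (H : Nonlinearity m f β) (h : DecBranch m f r q J) (hs : s ∈ J) :
    HasDerivAt (energy f q) (2 * (m + 1) * (q s / r s)) s := by
  refine ((h.sq_deriv hs).add ((H.F_deriv s).const_mul 2)).congr_deriv ?_
  ring

theorem mul_sqrt_energy_deriv (H : Nonlinearity m f β) (h : DecBranch m f r q J) (hs : s ∈ J)
    (he : 0 < energy f q s) :
    HasDerivAt (fun s => r s * √(energy f q s))
      ((m + 1) * (q s / √(energy f q s)) - √(energy f q s) / q s) s := by
  have h1 := h.r_pos s hs
  have h2 := h.q_pos s hs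
  have h3 := Real.sqrt_pos.2 he
  refine ((h.r_deriv s hs).mul ((h.energy_deriv H hs).sqrt he.ne')).congr_deriv ?_
  field_simp
  ring

theorem pow_mul_sqrt_energy_deriv (H : Nonlinearity m f β) (h : DecBranch m f r q J)
    (hs : s ∈ J) (he : 0 < energy f q s) :
    HasDerivAt (fun s => r s ^ (m + 1) * √(energy f q s))
      ((m + 1) * r s ^ m * (-2 * Fint f s) / (q s * √(energy f q s))) s := by
  have h1 := h.r_pos s hs
  have h2 := h.q_pos s hs
  have h3 := Real.sqrt_pos.2 he
  refine (((h.r_deriv s hs).pow (m + 1)).mul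
    ((h.energy_deriv H hs).sqrt he.ne')).congr_deriv ?_
  have h4 : √(energy f q s) ^ 2 = q s ^ 2 + 2 * Fint f s := Real.sq_sqrt he.le
  simp only [Nat.add_sub_cancel, Pi.pow_apply]
  push_cast
  field_simp
  rw [h4]
  ring

theorem energy_lt_energy (hq₁ : 0 < q₁ s) (hlt : q₁ s < q₂ s) : energy f q₁ s < energy f q₂ s := by
  unfold energy
  nlinarith

theorem sqrt_energy_ratio_le (hF : Fint f s ≤ 0) (hq₁ : 0 < q₁ s) (hlt : q₁ s < q₂ s)
    (he : 0 < energy f q₁ s) : √(energy f q₁ s) / q₁ s ≤ √(energy f q₂ s) / q₂ s := by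
  have hq₂ := hq₁.trans hlt
  rw [div_le_div_iff₀ hq₁ hq₂]
  refine abs_le_of_sq_le_sq' ?_ (by positivity) |>.2
  rw [mul_pow, mul_pow, Real.sq_sqrt he.le, Real.sq_sqrt (he.trans (energy_lt_energy hq₁ hlt)).le]
  unfold energy
  have hsq : q₁ s ^ 2 ≤ q₂ s ^ 2 := by gcongr
  nlinarith [mul_nonneg (neg_nonneg.2 hF) (sub_nonneg.2 hsq)]

/-- Ordering of slopes and of `r √e` persists while the potential is nonpositive. -/
theorem order_below_beta (H : Nonlinearity m f β) (ha : -β ≤ a) (haβ : a < β)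
    (h₁ : DecBranch m f r₁ q₁ (Icc a β)) (h₂ : DecBranch m f r₂ q₂ (Icc a β))
    (he₁ : ∀ s ∈ Icc a β, 0 < energy f q₁ s) (he₂ : ∀ s ∈ Icc a β, 0 < energy f q₂ s)
    (hq : q₁ β < q₂ β) (hy : r₁ β * q₁ β < r₂ β * q₂ β) :
    ∀ s ∈ Icc a β, q₁ s < q₂ s ∧
      r₂ β * q₂ β - r₁ β * q₁ β ≤ r₂ s * √(energy f q₂ s) - r₁ s * √(energy f q₁ s) := by
  have hβm : β ∈ Icc a β := right_mem_Icc.2 haβ.le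
  have hWβ : ∀ q : ℝ → ℝ, 0 < q β → √(energy f q β) = q β := by
    intro q hq
    unfold energy
    rw [H.F_beta, mul_zero, add_zero, Real.sqrt_sq hq.le]
  have hW : ∀ s ∈ Icc a β, (∀ t ∈ Ioo s β, q₁ t < q₂ t) →
      r₂ β * q₂ β - r₁ β * q₁ β ≤ r₂ s * √(energy f q₂ s) - r₁ s * √(energy f q₁ s) := by
    intro s hs hlt
    have := ge_of_hasDerivAt_nonpos hs.2
      (fun t ht => (h₂.mul_sqrt_energy_deriv H ⟨hs.1.trans ht.1, ht.2⟩
          (he₂ t ⟨hs.1.trans ht.1, ht.2⟩)).sub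
        (h₁.mul_sqrt_energy_deriv H ⟨hs.1.trans ht.1, ht.2⟩
          (he₁ t ⟨hs.1.trans ht.1, ht.2⟩))) (by
      intro t ht
      have ht' : t ∈ Icc a β := ⟨hs.1.trans ht.1.le, ht.2.le⟩
      have p1 := h₁.q_pos t ht'
      have p2 := h₂.q_pos t ht'
      have s1 := Real.sqrt_pos.2 (he₁ t ht')
      have s2 := Real.sqrt_pos.2 (he₂ t ht')
      have hle := sqrt_energy_ratio_le (H.F_nonpos t ⟨ha.trans ht'.1, ht'.2⟩) p1 (hlt t ht)
        (he₁ t ht')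
      have hinv : q₂ t / √(energy f q₂ t) ≤ q₁ t / √(energy f q₁ t) := by
        rw [div_le_div_iff₀ p1 p2] at hle
        rw [div_le_div_iff₀ s2 s1]
        linarith
      have hm : (0 : ℝ) ≤ m + 1 := by positivity
      have := mul_le_mul_of_nonneg_left hinv hm
      linarith)
    simp only [Pi.sub_apply, hWβ q₁ (h₁.q_pos β hβm), hWβ q₂ (h₂.q_pos β hβm)] at this
    exact this
  have hsub : Ico a β ⊆ Icc a β := Ico_subset_Icc_self
  have hqlt : ∀ s ∈ Ico a β, q₁ s < q₂ s := by
    refine (h₁.mono hsub).q_lt_q (h₂.mono hsub) ?_ ?_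
    · exact nhdsWithin_le_nhds ((h₁.q_deriv β hβm).continuousAt.eventually_lt
        (h₂.q_deriv β hβm).continuousAt hq)
    · intro s hs he hlt
      have h := hW s (hsub hs) hlt
      have hee : energy f q₁ s = energy f q₂ s := by unfold energy; rw [he]
      rw [hee] at h
      have := Real.sqrt_pos.2 (he₂ s (hsub hs))
      by_contra hn
      nlinarith
  intro s hs
  refine ⟨?_, hW s hs (fun t ht => hqlt t ⟨hs.1.trans ht.1.le, ht.2⟩)⟩
  rcases hs.2.lt_or_eq with h | h
  · exact hqlt s ⟨hs.1, h⟩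
  · rwa [h]

theorem flux_le_at_neg_beta (H : Nonlinearity m f β)
    (h₁ : DecBranch m f r₁ q₁ (Icc (-β) β)) (h₂ : DecBranch m f r₂ q₂ (Icc (-β) β))
    (he₁ : ∀ s ∈ Icc (-β) β, 0 < energy f q₁ s) (he₂ : ∀ s ∈ Icc (-β) β, 0 < energy f q₂ s)
    (hq : ∀ s ∈ Icc (-β) β, q₁ s < q₂ s) (hg : flux m r₁ q₁ β ≤ flux m r₂ q₂ β) :
    flux m r₁ q₁ (-β) ≤ flux m r₂ q₂ (-β) := by
  have hββ : -β ≤ β := by linarith [H.β_pos]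
  have hE : ∀ q : ℝ → ℝ, ∀ s, Fint f s = 0 → 0 < q s → √(energy f q s) = q s := by
    intro q s hs hq
    unfold energy
    rw [hs, mul_zero, add_zero, Real.sqrt_sq hq.le]
  have hFn : Fint f (-β) = 0 := by rw [H.F_neg, H.F_beta]
  have hl := left_mem_Icc.2 hββ
  have hr := right_mem_Icc.2 hββ
  by_contra hn
  have key := le_of_deriv_nonneg_where_pos hββ
    (fun t ht => (h₁.pow_mul_sqrt_energy_deriv H ht (he₁ t ht)).sub
      (h₂.pow_mul_sqrt_energy_deriv H ht (he₂ t ht))) (by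
    intro t ht hpos
    have ht' := Ioo_subset_Icc_self ht
    have p1 := h₁.q_pos t ht'
    have p2 := h₂.q_pos t ht'
    have r1 := h₁.r_pos t ht'
    have r2 := h₂.r_pos t ht'
    have s1 := Real.sqrt_pos.2 (he₁ t ht')
    have s2 := Real.sqrt_pos.2 (he₂ t ht')
    have hs : √(energy f q₁ t) ≤ √(energy f q₂ t) :=
      Real.sqrt_le_sqrt (energy_lt_energy p1 (hq t ht')).le
    have hF := H.F_nonpos t ht'
    have hrr : r₂ t ≤ r₁ t := by
      by_contra hc
      have h3 : r₁ t ^ (m + 1) * √(energy f q₁ t) ≤ r₂ t ^ (m + 1) * √(energy f q₂ t) := by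
        gcongr
        exact (not_le.1 hc).le
      simp only [Pi.sub_apply] at hpos
      linarith
    have h4 : (m + 1) * r₂ t ^ m * (-2 * Fint f t) / (q₂ t * √(energy f q₂ t))
        ≤ (m + 1) * r₁ t ^ m * (-2 * Fint f t) / (q₁ t * √(energy f q₁ t)) := by
      have hF' : 0 ≤ -2 * Fint f t := by linarith
      gcongr
      exact (hq t ht').le
    linarith) (by
    simp only [Pi.sub_apply]
    rw [hE q₁ _ hFn (h₁.q_pos _ hl), hE q₂ _ hFn (h₂.q_pos _ hl)]
    unfold flux at hn
    linarith)
  simp only [Pi.sub_apply] at key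
  rw [hE q₁ _ hFn (h₁.q_pos _ hl), hE q₂ _ hFn (h₂.q_pos _ hl),
    hE q₁ _ H.F_beta (h₁.q_pos _ hr), hE q₂ _ H.F_beta (h₂.q_pos _ hr)] at key
  unfold flux at hn hg
  linarith

end DecBranch

/-! ### The branch ending at the minimum -/

/-- An increasing branch parametrized by its value. -/
structure IncBranch (m : ℕ) (f r q : ℝ → ℝ) (J : Set ℝ) : Prop where
  r_pos : ∀ s ∈ J, 0 < r s
  q_pos : ∀ s ∈ J, 0 < q s
  r_deriv : ∀ s ∈ J, HasDerivAt r (1 / q s) s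
  q_deriv : ∀ s ∈ J, HasDerivAt q (-((m + 1) / r s) - f s / q s) s

/-- The Pohozaev-type functional `± 2 n (F/f) r^{n-1} |u'| - r^n (u'² + 2 F)`, `n = m + 2`. -/
noncomputable def pohozaev (m : ℕ) (f r q : ℝ → ℝ) (ε s : ℝ) : ℝ :=
  ε * (2 * (m + 2)) * (Fint f s / f s * flux m r q s) - r s ^ (m + 2) * energy f q s

/-- The quantity `2 n (F/f)' - (n - 2)`, `n = m + 2`. -/
noncomputable def growth (m : ℕ) (f : ℝ → ℝ) (s : ℝ) : ℝ :=
  2 * ((m : ℝ) + 2) * ((f s * f s - Fint f s * deriv f s) / f s ^ 2) - m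

/-- Limits at a turning point with value `M` and radius `T`. -/
structure TurningLimits (r q : ℝ → ℝ) (M T : ℝ) : Prop where
  T_pos : 0 < T
  r_lim : Tendsto r (nhdsWithin M (Iio M)) (nhds T)
  q_lim : Tendsto q (nhdsWithin M (Iio M)) (nhds 0)

namespace TurningLimits

variable {m : ℕ} {f r q : ℝ → ℝ} {β M T : ℝ}

theorem flux_lim (h : TurningLimits r q M T) :
    Tendsto (flux m r q) (nhdsWithin M (Iio M)) (nhds 0) := by
  have := (h.r_lim.pow (m + 1)).mul h.q_lim
  rwa [mul_zero] at this

theorem pow_mul_energy_lim (H : Nonlinearity m f β) (h : TurningLimits r q M T) :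
    Tendsto (fun s => r s ^ (m + 2) * energy f q s) (nhdsWithin M (Iio M))
      (nhds (2 * T ^ (m + 2) * Fint f M)) := by
  have hF : Tendsto (Fint f) (nhdsWithin M (Iio M)) (nhds (Fint f M)) :=
    (H.F_deriv M).continuousAt.tendsto.mono_left nhdsWithin_le_nhds
  have := (h.r_lim.pow (m + 2)).mul ((h.q_lim.pow 2).add (hF.const_mul 2))
  rw [show 2 * T ^ (m + 2) * Fint f M = T ^ (m + 2) * (0 ^ 2 + 2 * Fint f M) by ring]
  exact this

theorem pohozaev_lim (H : Nonlinearity m f β) (h : TurningLimits r q M T) (hM : β < M) (ε : ℝ) :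
    Tendsto (pohozaev m f r q ε) (nhdsWithin M (Iio M)) (nhds (-(2 * T ^ (m + 2) * Fint f M))) := by
  have hF : Tendsto (fun s => Fint f s / f s) (nhdsWithin M (Iio M)) (nhds (Fint f M / f M)) :=
    ((H.F_deriv M).continuousAt.div H.cont.continuousAt
      (H.f_pos M hM.le).ne').tendsto.mono_left nhdsWithin_le_nhds
  have := ((hF.mul (h.flux_lim (m := m))).const_mul (ε * (2 * (m + 2)))).sub
    (h.pow_mul_energy_lim H)
  rw [mul_zero, mul_zero, zero_sub] at this
  exact this

end TurningLimits

theorem flux_pos {m : ℕ} {r q : ℝ → ℝ} {s : ℝ} (hr : 0 < r s) (hq : 0 < q s) :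
    0 < flux m r q s := by
  unfold flux
  positivity

theorem pohozaev_beta {m : ℕ} {f r q : ℝ → ℝ} {β : ℝ} (H : Nonlinearity m f β) (ε : ℝ) :
    pohozaev m f r q ε β = -(flux m r q β * (r β * q β)) := by
  unfold pohozaev energy flux
  rw [H.F_beta]
  ring

theorem DecBranch.flux_deriv {m : ℕ} {f r q : ℝ → ℝ} {J : Set ℝ} {s : ℝ}
    (h : DecBranch m f r q J) (hs : s ∈ J) :
    HasDerivAt (flux m r q) (-(r s ^ (m + 1) * f s / q s)) s := by
  have h1 := h.r_pos s hs
  have h2 := h.q_pos s hs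
  refine (((h.r_deriv s hs).pow (m + 1)).mul (h.q_deriv s hs)).congr_deriv ?_
  simp only [Nat.add_sub_cancel, Pi.pow_apply]
  push_cast
  field_simp
  ring

theorem DecBranch.pohozaev_deriv {m : ℕ} {f r q : ℝ → ℝ} {J : Set ℝ} {s β : ℝ}
    (H : Nonlinearity m f β) (h : DecBranch m f r q J) (hs : s ∈ J) (hβ : β ≤ s) :
    HasDerivAt (pohozaev m f r q 1) (growth m f s * flux m r q s) s := by
  have h1 := h.r_pos s hs
  have h2 := h.q_pos s hs
  have h3 := H.f_pos s hβ
  have hd := H.f_diff s (H.β_pos.trans_le hβ)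
  refine (((((H.F_deriv s).div hd h3.ne').mul (h.flux_deriv hs)).const_mul
    (1 * (2 * ((m : ℝ) + 2)))).sub
    (((h.r_deriv s hs).pow (m + 2)).mul (h.energy_deriv H hs))).congr_deriv ?_
  simp only [Pi.pow_apply, Pi.div_apply, show m + 2 - 1 = m + 1 from rfl]
  unfold growth flux energy
  push_cast
  field_simp
  ring

namespace IncBranch

variable {m : ℕ} {f r q r₁ q₁ r₂ q₂ : ℝ → ℝ} {J J' : Set ℝ} {β s c M M₁ M₂ T T₁ T₂ : ℝ}

theorem mono (h : IncBranch m f r q J) (hJ : J' ⊆ J) : IncBranch m f r q J' :=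
  ⟨fun s hs => h.r_pos s (hJ hs), fun s hs => h.q_pos s (hJ hs),
    fun s hs => h.r_deriv s (hJ hs), fun s hs => h.q_deriv s (hJ hs)⟩

theorem sq_deriv (h : IncBranch m f r q J) (hs : s ∈ J) :
    HasDerivAt (fun s => q s ^ 2) (-(2 * (m + 1) * (q s / r s)) - 2 * f s) s := by
  have := h.q_pos s hs
  have := h.r_pos s hs
  refine ((h.q_deriv s hs).pow 2).congr_deriv ?_
  field_simp
  ring

theorem energy_deriv (H : Nonlinearity m f β) (h : IncBranch m f r q J) (hs : s ∈ J) :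
    HasDerivAt (energy f q) (-(2 * (m + 1) * (q s / r s))) s := by
  refine ((h.sq_deriv hs).add ((H.F_deriv s).const_mul 2)).congr_deriv ?_
  ring

theorem flux_deriv (h : IncBranch m f r q J) (hs : s ∈ J) :
    HasDerivAt (flux m r q) (-(r s ^ (m + 1) * f s / q s)) s := by
  have h1 := h.r_pos s hs
  have h2 := h.q_pos s hs
  refine (((h.r_deriv s hs).pow (m + 1)).mul (h.q_deriv s hs)).congr_deriv ?_
  simp only [Nat.add_sub_cancel, Pi.pow_apply]
  push_cast
  field_simp
  ring

theorem log_flux_deriv (h : IncBranch m f r q J) (hs : s ∈ J) :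
    HasDerivAt (fun s => Real.log (flux m r q s)) (-(f s / q s ^ 2)) s := by
  have h1 := h.r_pos s hs
  have h2 := h.q_pos s hs
  refine ((h.flux_deriv hs).log (flux_pos h1 h2).ne').congr_deriv ?_
  unfold flux
  field_simp

theorem pohozaev_deriv (H : Nonlinearity m f β) (h : IncBranch m f r q J) (hs : s ∈ J)
    (hβ : β ≤ s) :
    HasDerivAt (pohozaev m f r q (-1)) (-(growth m f s * flux m r q s)) s := by
  have h1 := h.r_pos s hs
  have h2 := h.q_pos s hs
  have h3 := H.f_pos s hβ
  have hd := H.f_diff s (H.β_pos.trans_le hβ)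
  refine (((((H.F_deriv s).div hd h3.ne').mul (h.flux_deriv hs)).const_mul
    (-1 * (2 * ((m : ℝ) + 2)))).sub
    (((h.r_deriv s hs).pow (m + 2)).mul (h.energy_deriv H hs))).congr_deriv ?_
  simp only [Pi.pow_apply, Pi.div_apply, show m + 2 - 1 = m + 1 from rfl]
  unfold growth flux energy
  push_cast
  field_simp
  ring

theorem log_flux_diff_mono (H : Nonlinearity m f β) (h₁ : IncBranch m f r₁ q₁ (Icc β c))
    (h₂ : IncBranch m f r₂ q₂ (Icc β c)) (hβc : β < c) (hq : ∀ s ∈ Ioo β c, q₁ s < q₂ s) :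
    Real.log (flux m r₂ q₂ β) - Real.log (flux m r₁ q₁ β)
      < Real.log (flux m r₂ q₂ c) - Real.log (flux m r₁ q₁ c) := by
  refine lt_of_hasDerivAt_pos hβc
    (fun t ht => (h₂.log_flux_deriv ht).sub (h₁.log_flux_deriv ht)) ?_
  intro t ht
  have p := h₁.q_pos t (Ioo_subset_Icc_self ht)
  have := div_lt_div_of_pos_left (H.f_pos t ht.1.le) (pow_pos p 2)
    (pow_lt_pow_left₀ (hq t ht) p.le two_ne_zero)
  linarith

theorem q_lt_q (H : Nonlinearity m f β) (h₁ : IncBranch m f r₁ q₁ (Ico β c))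
    (h₂ : IncBranch m f r₂ q₂ (Ico β c)) (hq : q₁ β < q₂ β)
    (hg : flux m r₁ q₁ β ≤ flux m r₂ q₂ β) : ∀ s ∈ Ico β c, q₁ s < q₂ s := by
  intro s hs
  by_contra hn
  have hsub : Icc β s ⊆ Ico β c := fun t ht => ⟨ht.1, ht.2.trans_lt hs.2⟩
  obtain ⟨x, hx, h0, hp⟩ := exists_first_zero (h := fun t => q₂ t - q₁ t) hs.1
    (fun t ht => ((h₂.q_deriv t (hsub ht)).sub (h₁.q_deriv t (hsub ht))).continuousAt)
    (by simpa using hq) (by simpa using hn)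
  have hx' : x ∈ Ico β c := hsub ⟨hx.1.le, hx.2⟩
  have hxs : Icc β x ⊆ Ico β c := fun t ht => ⟨ht.1, ht.2.trans_lt hx'.2⟩
  have hqx : q₁ x = q₂ x := by linarith
  have hL := log_flux_diff_mono H (h₁.mono hxs) (h₂.mono hxs) hx.1
    (fun t ht => by linarith [hp t (Ioo_subset_Ico_self ht)])
  have hβ : β ∈ Ico β c := ⟨le_rfl, hx.1.trans hx'.2⟩
  have hLβ := Real.log_le_log (flux_pos (h₁.r_pos β hβ) (h₁.q_pos β hβ)) hg
  have hgx : flux m r₁ q₁ x < flux m r₂ q₂ x :=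
    (Real.log_lt_log_iff (flux_pos (h₁.r_pos x hx') (h₁.q_pos x hx'))
      (flux_pos (h₂.r_pos x hx') (h₂.q_pos x hx'))).1 (by linarith)
  have hr : r₁ x < r₂ x := by
    unfold flux at hgx
    rw [hqx] at hgx
    exact lt_of_pow_lt_pow_left₀ _ (h₂.r_pos x hx').le
      (lt_of_mul_lt_mul_right hgx (h₂.q_pos x hx').le)
  have hd := deriv_nonpos_of_pos_left hx.1
    ((h₂.q_deriv x hx').sub (h₁.q_deriv x hx')) h0
    (fun t ht => hp t (Ioo_subset_Ico_self ht))
  rw [hqx] at hd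
  have : ((m : ℝ) + 1) / r₂ x < (m + 1) / r₁ x :=
    div_lt_div_of_pos_left (by positivity) (h₁.r_pos x hx') hr
  linarith

theorem log_flux_le (H : Nonlinearity m f β) (h₁ : IncBranch m f r₁ q₁ (Ico β c))
    (h₂ : IncBranch m f r₂ q₂ (Ico β c)) (hq : q₁ β < q₂ β)
    (hg : flux m r₁ q₁ β ≤ flux m r₂ q₂ β) {s t : ℝ} (hs : β ≤ s) (hst : s ≤ t) (ht : t < c) :
    Real.log (flux m r₂ q₂ s) - Real.log (flux m r₁ q₁ s)
      ≤ Real.log (flux m r₂ q₂ t) - Real.log (flux m r₁ q₁ t) := by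
  have hsub : Icc s t ⊆ Ico β c := fun x hx => ⟨hs.trans hx.1, hx.2.trans_lt ht⟩
  refine le_of_hasDerivAt_nonneg hst (fun x hx => (h₂.log_flux_deriv (hsub hx)).sub
    (h₁.log_flux_deriv (hsub hx))) ?_
  intro x hx
  have hx' := hsub (Ioo_subset_Icc_self hx)
  have p := h₁.q_pos x hx'
  have := div_lt_div_of_pos_left (H.f_pos x hx'.1) (pow_pos p 2)
    (pow_lt_pow_left₀ (h₁.q_lt_q H h₂ hq hg x hx') p.le two_ne_zero)
  linarith

theorem sq_ratio_lim (H : Nonlinearity m f β) (hM : β < M) (h₁ : IncBranch m f r₁ q₁ (Ico β M))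
    (l₁ : TurningLimits r₁ q₁ M T₁) (h₂ : IncBranch m f r₂ q₂ (Ico β M))
    (l₂ : TurningLimits r₂ q₂ M T₂) :
    Tendsto (fun s => q₂ s ^ 2 / q₁ s ^ 2) (nhdsWithin M (Iio M)) (nhds 1) := by
  have hsub : Ioo β M ⊆ Ico β M := Ioo_subset_Ico_self
  have hfM := H.f_pos M hM.le
  have hf : Tendsto f (nhdsWithin M (Iio M)) (nhds (f M)) :=
    H.cont.continuousAt.tendsto.mono_left nhdsWithin_le_nhds
  have hsq : ∀ {r q : ℝ → ℝ} {T : ℝ}, TurningLimits r q M T →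
      Tendsto (fun s => -(2 * ((m : ℝ) + 1) * (q s / r s)) - 2 * f s) (nhdsWithin M (Iio M))
        (nhds (-(2 * f M))) := by
    intro r q T l
    have := (((l.q_lim.div l.r_lim l.T_pos.ne').const_mul (2 * ((m : ℝ) + 1))).neg).sub
      (hf.const_mul 2)
    rw [zero_div, mul_zero, neg_zero, zero_sub] at this
    exact this
  have hq0 : ∀ {r q : ℝ → ℝ} {T : ℝ}, TurningLimits r q M T →
      Tendsto (fun s => q s ^ 2) (nhdsWithin M (Iio M)) (nhds 0) := by
    intro r q T l
    simpa using l.q_lim.pow 2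
  refine HasDerivAt.lhopital_zero_left_on_Ioo hM (fun s hs => h₂.sq_deriv (hsub hs))
    (fun s hs => h₁.sq_deriv (hsub hs)) (fun s hs => ?_) (hq0 l₂) (hq0 l₁) ?_
  · have p1 := h₁.r_pos s (hsub hs)
    have p2 := h₁.q_pos s (hsub hs)
    have p3 := H.f_pos s hs.1.le
    have : 0 ≤ 2 * ((m : ℝ) + 1) * (q₁ s / r₁ s) := by positivity
    linarith
  · have := (hsq l₂).div (hsq l₁) (by linarith)
    rw [div_self (by linarith)] at this
    exact this

/-- The branch with larger slope at `β` turns at a larger value. -/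
theorem turning_value_lt (H : Nonlinearity m f β) (hM₁ : β < M₁) (hM₂ : β < M₂)
    (h₁ : IncBranch m f r₁ q₁ (Ico β M₁)) (l₁ : TurningLimits r₁ q₁ M₁ T₁)
    (h₂ : IncBranch m f r₂ q₂ (Ico β M₂)) (l₂ : TurningLimits r₂ q₂ M₂ T₂)
    (hq : q₁ β < q₂ β) (hg : flux m r₁ q₁ β ≤ flux m r₂ q₂ β) : M₁ < M₂ := by
  by_contra hn
  rcases (not_lt.1 hn).lt_or_eq with h | h
  · have hlt := (h₁.mono (Ico_subset_Ico_right h.le)).q_lt_q H h₂ hq hg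
    have hm : M₂ ∈ Ico β M₁ := ⟨hM₂.le, h⟩
    have hle : q₁ M₂ ≤ 0 := by
      refine le_of_tendsto_of_tendsto
        ((h₁.q_deriv M₂ hm).continuousAt.tendsto.mono_left nhdsWithin_le_nhds) l₂.q_lim ?_
      filter_upwards [Ico_mem_nhdsLT hM₂] with t ht using (hlt t ht).le
    linarith [h₁.q_pos M₂ hm]
  · subst h
    have hlt := h₁.q_lt_q H h₂ hq hg
    set c := (β + M₂) / 2 with hc
    have hcM : c < M₂ := by linarith
    have hβc : β < c := by linarith
    have hβ : β ∈ Ico β M₂ := ⟨le_rfl, hM₁⟩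
    have hcs : Icc β c ⊆ Ico β M₂ := fun t ht => ⟨ht.1, ht.2.trans_lt hcM⟩
    have hδ := log_flux_diff_mono H (h₁.mono hcs) (h₂.mono hcs) hβc
      (fun t ht => hlt t (hcs (Ioo_subset_Icc_self ht)))
    have hLβ := Real.log_le_log (flux_pos (h₁.r_pos β hβ) (h₁.q_pos β hβ)) hg
    set δ := Real.log (flux m r₂ q₂ c) - Real.log (flux m r₁ q₁ c) with hδdef
    have hδ0 : 0 < δ := by linarith
    have hratio := sq_ratio_lim H hM₁ h₁ l₁ h₂ l₂
    have hT : T₁ < T₂ := by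
      have hlim : Tendsto (fun s => (m + 1) * Real.log (r₂ s) - (m + 1) * Real.log (r₁ s)
          + 1 / 2 * Real.log (q₂ s ^ 2 / q₁ s ^ 2)) (nhdsWithin M₂ (Iio M₂))
          (nhds ((m + 1) * Real.log T₂ - (m + 1) * Real.log T₁ + 1 / 2 * Real.log 1)) :=
        (((l₂.r_lim.log l₂.T_pos.ne').const_mul _).sub
          ((l₁.r_lim.log l₁.T_pos.ne').const_mul _)).add
          ((hratio.log one_ne_zero).const_mul _)
      have hle := ge_of_tendsto (b := δ) hlim (by
        filter_upwards [Ico_mem_nhdsLT hcM] with t ht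
        have ht' : t ∈ Ico β M₂ := ⟨hβc.le.trans ht.1, ht.2⟩
        have a1 := h₁.q_pos t ht'
        have a2 := h₂.q_pos t ht'
        have := log_flux_le H h₁ h₂ hq hg hβc.le ht.1 ht.2
        rw [log_flux (h₁.r_pos t ht') a1, log_flux (h₂.r_pos t ht') a2] at this
        rw [Real.log_div (by positivity) (by positivity), Real.log_pow, Real.log_pow]
        push_cast
        linarith)
      rw [Real.log_one, mul_zero, add_zero] at hle
      have hm : (0 : ℝ) < m + 1 := by positivity
      refine (Real.log_lt_log_iff l₁.T_pos l₂.T_pos).1 ?_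
      nlinarith
    have hev : ∀ᶠ s in nhdsWithin M₂ (Iio M₂), q₂ s / r₂ s < q₁ s / r₁ s := by
      have hrr : Tendsto (fun s => (r₂ s / r₁ s) ^ 2) (nhdsWithin M₂ (Iio M₂))
          (nhds ((T₂ / T₁) ^ 2)) := (l₂.r_lim.div l₁.r_lim l₁.T_pos.ne').pow 2
      have h1 : 1 < (T₂ / T₁) ^ 2 := by
        have : 1 < T₂ / T₁ := (one_lt_div l₁.T_pos).2 hT
        nlinarith
      filter_upwards [hratio.eventually_lt hrr h1, Ico_mem_nhdsLT hM₁] with s hs hm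
      have a1 := h₁.q_pos s hm
      have a2 := h₂.q_pos s hm
      have a3 := h₁.r_pos s hm
      have a4 := h₂.r_pos s hm
      rw [← div_pow] at hs
      have := lt_of_pow_lt_pow_left₀ 2 (by positivity) hs
      rw [div_lt_div_iff₀ a1 a3] at this
      rw [div_lt_div_iff₀ a4 a3]
      linarith
    obtain ⟨d, hd, hdp⟩ := (mem_nhdsLT_iff_exists_Ioo_subset' hM₁).1 hev
    set x := (max β d + M₂) / 2 with hx
    have hmax : max β d < M₂ := max_lt hM₁ hd
    have hxM : x < M₂ := by linarith
    have hβx : β < x := by linarith [le_max_left β d]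
    have hdx : d < x := by linarith [le_max_right β d]
    have hle : ∀ t ∈ Ioo x M₂, q₂ x ^ 2 - q₁ x ^ 2 ≤ q₂ t ^ 2 - q₁ t ^ 2 := by
      intro t ht
      have hsub : Icc x t ⊆ Ico β M₂ := fun y hy => ⟨hβx.le.trans hy.1, hy.2.trans_lt ht.2⟩
      refine le_of_hasDerivAt_nonneg ht.1.le
        (fun y hy => (h₂.sq_deriv (hsub hy)).sub (h₁.sq_deriv (hsub hy))) ?_
      intro y hy
      have hy' : q₂ y / r₂ y < q₁ y / r₁ y := hdp ⟨hdx.trans hy.1, hy.2.trans ht.2⟩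
      have hm : (0 : ℝ) < 2 * (m + 1) := by positivity
      nlinarith
    have hlim : Tendsto (fun t => q₂ t ^ 2 - q₁ t ^ 2) (nhdsWithin M₂ (Iio M₂))
        (nhds (0 ^ 2 - 0 ^ 2)) := (l₂.q_lim.pow 2).sub (l₁.q_lim.pow 2)
    have hfin := ge_of_tendsto hlim (b := q₂ x ^ 2 - q₁ x ^ 2) (by
      filter_upwards [Ioo_mem_nhdsLT hxM] with t ht using hle t ht)
    have hxm : x ∈ Ico β M₂ := ⟨hβx.le, hxM⟩
    have a1 := h₁.q_pos x hxm
    have a2 := hlt x hxm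
    nlinarith

theorem turning_order (H : Nonlinearity m f β) (hM₁ : β < M₁) (hM₂ : β < M₂)
    (h₁ : IncBranch m f r₁ q₁ (Ico β M₁)) (l₁ : TurningLimits r₁ q₁ M₁ T₁)
    (h₂ : IncBranch m f r₂ q₂ (Ico β M₂)) (l₂ : TurningLimits r₂ q₂ M₂ T₂)
    (hq : q₁ β < q₂ β) (hy : r₁ β * q₁ β ≤ r₂ β * q₂ β)
    (hg : flux m r₁ q₁ β ≤ flux m r₂ q₂ β) :
    M₁ < M₂ ∧ T₁ ^ (m + 2) * Fint f M₁ ≤ T₂ ^ (m + 2) * Fint f M₂ := by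
  have hM := turning_value_lt H hM₁ hM₂ h₁ l₁ h₂ l₂ hq hg
  refine ⟨hM, ?_⟩
  have h₂' := h₂.mono (Ico_subset_Ico_right hM.le : Ico β M₁ ⊆ Ico β M₂)
  have hβ₁ : β ∈ Ico β M₁ := ⟨le_rfl, hM₁⟩
  have hβ₂ : β ∈ Ico β M₂ := ⟨le_rfl, hM₂⟩
  have hPβ : pohozaev m f r₂ q₂ (-1) β - pohozaev m f r₁ q₁ (-1) β ≤ 0 := by
    rw [pohozaev_beta H, pohozaev_beta H]
    have p1 := flux_pos (m := m) (h₁.r_pos β hβ₁) (h₁.q_pos β hβ₁)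
    have p2 := mul_pos (h₁.r_pos β hβ₁) (h₁.q_pos β hβ₁)
    nlinarith
  have hle : ∀ s ∈ Ico β M₁, pohozaev m f r₂ q₂ (-1) s ≤ pohozaev m f r₁ q₁ (-1) s := by
    intro s hs
    have hsub : Icc β s ⊆ Ico β M₁ := fun t ht => ⟨ht.1, ht.2.trans_lt hs.2⟩
    have := ge_of_hasDerivAt_nonpos hs.1
      (fun t ht => (h₂'.pohozaev_deriv H (hsub ht) ht.1).sub
        (h₁.pohozaev_deriv H (hsub ht) ht.1)) (by
      intro t ht
      have ht' := hsub (Ioo_subset_Icc_self ht)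
      have hlog := log_flux_le H h₁ h₂' hq hg le_rfl ht.1.le ht'.2
      have hLβ := Real.log_le_log (flux_pos (h₁.r_pos β hβ₁) (h₁.q_pos β hβ₁)) hg
      have hfl : flux m r₁ q₁ t ≤ flux m r₂ q₂ t :=
        (Real.log_le_log_iff (flux_pos (h₁.r_pos t ht') (h₁.q_pos t ht'))
          (flux_pos (h₂'.r_pos t ht') (h₂'.q_pos t ht'))).1 (by linarith)
      have hc : 0 < growth m f t := H.deriv_ratio_gt ht.1.le
      nlinarith)
    simp only [Pi.sub_apply] at this
    linarith
  have hM₁m : M₁ ∈ Ico β M₂ := ⟨hM₁.le, hM⟩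
  have hA : pohozaev m f r₂ q₂ (-1) M₁ ≤ -(2 * T₁ ^ (m + 2) * Fint f M₁) := by
    refine le_of_tendsto_of_tendsto
      ((h₂.pohozaev_deriv H hM₁m hM₁.le).continuousAt.tendsto.mono_left nhdsWithin_le_nhds)
      (l₁.pohozaev_lim H hM₁ (-1)) ?_
    filter_upwards [Ico_mem_nhdsLT hM₁] with t ht using hle t ht
  have hB : -(2 * T₂ ^ (m + 2) * Fint f M₂) ≤ pohozaev m f r₂ q₂ (-1) M₁ := by
    refine le_of_tendsto (l₂.pohozaev_lim H hM₂ (-1)) ?_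
    filter_upwards [Ioo_mem_nhdsLT hM] with t ht
    have hsub : Icc M₁ t ⊆ Ico β M₂ := fun x hx => ⟨hM₁.le.trans hx.1, hx.2.trans_lt ht.2⟩
    refine ge_of_hasDerivAt_nonpos ht.1.le
      (fun x hx => h₂.pohozaev_deriv H (hsub hx) (hsub hx).1) ?_
    intro x hx
    have hx' := hsub (Ioo_subset_Icc_self hx)
    have hc : 0 < growth m f x := H.deriv_ratio_gt hx'.1
    have := flux_pos (m := m) (h₂.r_pos x hx') (h₂.q_pos x hx')
    nlinarith
  linarith

end IncBranch

/-! ### The branch leaving the minimum -/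

namespace DecBranch

variable {m : ℕ} {f r q r₁ q₁ r₂ q₂ : ℝ → ℝ} {J : Set ℝ} {β s M M₁ M₂ T T₁ T₂ : ℝ}

theorem pohozaev_lt (H : Nonlinearity m f β) (hM : β < M) (h : DecBranch m f r q (Ico β M))
    (l : TurningLimits r q M T) (hs : s ∈ Ico β M) :
    pohozaev m f r q 1 s < -(2 * T ^ (m + 2) * Fint f M) := by
  have hlt : ∀ {x y : ℝ}, β ≤ x → x < y → y < M → pohozaev m f r q 1 x < pohozaev m f r q 1 y := by
    intro x y hx hxy hy
    have hsub : Icc x y ⊆ Ico β M := fun t ht => ⟨hx.trans ht.1, ht.2.trans_lt hy⟩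
    refine lt_of_hasDerivAt_pos hxy (fun t ht => h.pohozaev_deriv H (hsub ht) (hsub ht).1) ?_
    intro t ht
    have ht' := hsub (Ioo_subset_Icc_self ht)
    exact mul_pos (H.deriv_ratio_gt ht'.1) (flux_pos (h.r_pos t ht') (h.q_pos t ht'))
  obtain ⟨c, hc⟩ := exists_between hs.2
  refine (hlt hs.1 hc.1 hc.2).trans_le (ge_of_tendsto (l.pohozaev_lim H hM 1) ?_)
  filter_upwards [Ioo_mem_nhdsLT hc.2] with t ht
  exact (hlt (hs.1.trans hc.1.le) ht.1 ht.2).le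

theorem flux_ratio_deriv (h₁ : DecBranch m f r₁ q₁ J) (h₂ : DecBranch m f r₂ q₂ J) (hs : s ∈ J) :
    HasDerivAt (fun s => flux m r₁ q₁ s / flux m r₂ q₂ s)
      (-(flux m r₁ q₁ s / flux m r₂ q₂ s * (f s / q₁ s ^ 2 - f s / q₂ s ^ 2))) s := by
  have a1 := h₁.r_pos s hs
  have a2 := h₁.q_pos s hs
  have a3 := h₂.r_pos s hs
  have a4 := h₂.q_pos s hs
  refine ((h₁.flux_deriv hs).div (h₂.flux_deriv hs) (flux_pos a3 a4).ne').congr_deriv ?_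
  unfold flux
  field_simp
  ring

/-- Comparison of the Pohozaev functionals of two branches at a point to the right of which
the slopes are ordered. -/
theorem pohozaev_compare (H : Nonlinearity m f β) (hM₁ : β < M₁) (hM : M₁ < M₂)
    (h₁ : DecBranch m f r₁ q₁ (Ico β M₁)) (l₁ : TurningLimits r₁ q₁ M₁ T₁)
    (h₂ : DecBranch m f r₂ q₂ (Ico β M₂)) (l₂ : TurningLimits r₂ q₂ M₂ T₂)
    (hP : T₁ ^ (m + 2) * Fint f M₁ ≤ T₂ ^ (m + 2) * Fint f M₂) (hs : s ∈ Ico β M₁)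
    (hq : ∀ t ∈ Ioo s M₁, q₁ t < q₂ t) :
    0 < r₁ s ^ (m + 1) * (q₁ s / q₂ s * r₂ s * energy f q₂ s - r₁ s * energy f q₁ s)
      + 2 * T₁ ^ (m + 2) * Fint f M₁ * (1 - flux m r₁ q₁ s / flux m r₂ q₂ s) := by
  set C := 2 * T₁ ^ (m + 2) * Fint f M₁ with hC
  have h₂' := h₂.mono (Ico_subset_Ico_right hM.le : Ico β M₁ ⊆ Ico β M₂)
  have hneg : ∀ t ∈ Ico β M₁, pohozaev m f r₂ q₂ 1 t + C < 0 := by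
    intro t ht
    have := h₂.pohozaev_lt H (hM₁.trans hM) l₂ (s := t) ⟨ht.1, ht.2.trans hM⟩
    linarith
  set R : ℝ → ℝ := fun t => (pohozaev m f r₁ q₁ 1 t + C)
    - flux m r₁ q₁ t / flux m r₂ q₂ t * (pohozaev m f r₂ q₂ 1 t + C) with hR
  have hRlt : ∀ {x y : ℝ}, s ≤ x → x < y → y < M₁ → R y < R x := by
    intro x y hx hxy hy
    have hsub : Icc x y ⊆ Ico β M₁ := fun t ht =>
      ⟨hs.1.trans (hx.trans ht.1), ht.2.trans_lt hy⟩
    refine gt_of_hasDerivAt_neg hxy (fun t ht =>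
      ((h₁.pohozaev_deriv H (hsub ht) (hsub ht).1).add_const C).sub
        ((h₁.flux_ratio_deriv h₂' (hsub ht)).mul
          ((h₂'.pohozaev_deriv H (hsub ht) (hsub ht).1).add_const C))) ?_
    intro t ht
    have ht' := hsub (Ioo_subset_Icc_self ht)
    have g1 := flux_pos (m := m) (h₁.r_pos t ht') (h₁.q_pos t ht')
    have g2 := flux_pos (m := m) (h₂'.r_pos t ht') (h₂'.q_pos t ht')
    have p := h₁.q_pos t ht'
    have hd := div_lt_div_of_pos_left (H.f_pos t ht'.1) (pow_pos p 2)
      (pow_lt_pow_left₀ (hq t ⟨hx.trans_lt ht.1, ht.2.trans hy⟩) p.le two_ne_zero)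
    have hS := mul_pos (div_pos g1 g2) (sub_pos.2 hd)
    have hcancel : flux m r₁ q₁ t / flux m r₂ q₂ t * (growth m f t * flux m r₂ q₂ t)
        = growth m f t * flux m r₁ q₁ t := by
      field_simp
    rw [hcancel]
    nlinarith [hneg t ht']
  have hM₁m : M₁ ∈ Ico β M₂ := ⟨hM₁.le, hM⟩
  have hRlim : Tendsto R (nhdsWithin M₁ (Iio M₁)) (nhds 0) := by
    have c1 : Tendsto (flux m r₂ q₂) (nhdsWithin M₁ (Iio M₁)) (nhds (flux m r₂ q₂ M₁)) :=
      (h₂.flux_deriv hM₁m).continuousAt.tendsto.mono_left nhdsWithin_le_nhds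
    have c2 : Tendsto (pohozaev m f r₂ q₂ 1) (nhdsWithin M₁ (Iio M₁))
        (nhds (pohozaev m f r₂ q₂ 1 M₁)) :=
      (h₂.pohozaev_deriv H hM₁m hM₁.le).continuousAt.tendsto.mono_left nhdsWithin_le_nhds
    have := ((l₁.pohozaev_lim H hM₁ 1).add_const C).sub
      (((l₁.flux_lim (m := m)).div c1
        (flux_pos (h₂.r_pos _ hM₁m) (h₂.q_pos _ hM₁m)).ne').mul (c2.add_const C))
    rw [← hC, neg_add_cancel, zero_div, zero_mul, sub_zero] at this
    exact this
  have hRpos : 0 < R s := by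
    obtain ⟨c, hc⟩ := exists_between hs.2
    refine lt_of_le_of_lt (le_of_tendsto hRlim ?_) (hRlt le_rfl hc.1 hc.2)
    filter_upwards [Ioo_mem_nhdsLT hc.2] with t ht
    exact (hRlt hc.1.le ht.1 ht.2).le
  have a1 := h₁.r_pos s hs
  have a2 := h₁.q_pos s hs
  have a3 := h₂'.r_pos s hs
  have a4 := h₂'.q_pos s hs
  have e : R s = r₁ s ^ (m + 1) * (q₁ s / q₂ s * r₂ s * energy f q₂ s - r₁ s * energy f q₁ s)
      + C * (1 - flux m r₁ q₁ s / flux m r₂ q₂ s) := by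
    simp only [hR]
    unfold pohozaev flux
    have := (H.f_pos s hs.1).ne'
    field_simp
    ring
  rwa [e] at hRpos

theorem order_after_turning (H : Nonlinearity m f β) (hM₁ : β < M₁) (hM : M₁ < M₂)
    (h₁ : DecBranch m f r₁ q₁ (Ico β M₁)) (l₁ : TurningLimits r₁ q₁ M₁ T₁)
    (h₂ : DecBranch m f r₂ q₂ (Ico β M₂)) (l₂ : TurningLimits r₂ q₂ M₂ T₂)
    (hP : T₁ ^ (m + 2) * Fint f M₁ ≤ T₂ ^ (m + 2) * Fint f M₂) :
    q₁ β < q₂ β ∧ r₁ β * q₁ β < r₂ β * q₂ β := by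
  have h₂' := h₂.mono (Ico_subset_Ico_right hM.le : Ico β M₁ ⊆ Ico β M₂)
  have hC : 0 < 2 * T₁ ^ (m + 2) * Fint f M₁ := by
    have := H.F_pos M₁ hM₁
    have := l₁.T_pos
    positivity
  have hM₁m : M₁ ∈ Ico β M₂ := ⟨hM₁.le, hM⟩
  have hqlt : ∀ s ∈ Ico β M₁, q₁ s < q₂ s := by
    refine h₁.q_lt_q h₂' ?_ ?_
    · exact l₁.q_lim.eventually_lt
        ((h₂.q_deriv M₁ hM₁m).continuousAt.tendsto.mono_left nhdsWithin_le_nhds)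
        (h₂.q_pos M₁ hM₁m)
    · intro s hs heq hlt
      have hR := pohozaev_compare H hM₁ hM h₁ l₁ h₂ l₂ hP hs hlt
      by_contra hn
      have hn := not_lt.1 hn
      have a1 := h₁.r_pos s hs
      have a3 := h₂'.r_pos s hs
      have a4 := h₂'.q_pos s hs
      have hF : 0 ≤ Fint f s := by
        rcases hs.1.lt_or_eq with h | h
        · exact (H.F_pos s h).le
        · rw [← h, H.F_beta]
      have he : energy f q₁ s = energy f q₂ s := by unfold energy; rw [heq]
      have hep : 0 < energy f q₂ s := by unfold energy; positivity
      have hS : 1 ≤ flux m r₁ q₁ s / flux m r₂ q₂ s := by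
        rw [one_le_div (flux_pos a3 a4)]
        unfold flux
        rw [heq]
        gcongr
      rw [he, heq, div_self a4.ne', one_mul] at hR
      have : r₁ s ^ (m + 1) * (r₂ s * energy f q₂ s - r₁ s * energy f q₂ s) ≤ 0 :=
        mul_nonpos_of_nonneg_of_nonpos (by positivity) (by nlinarith)
      nlinarith
  have hβ : β ∈ Ico β M₁ := ⟨le_rfl, hM₁⟩
  refine ⟨hqlt β hβ, ?_⟩
  have hR := pohozaev_compare H hM₁ hM h₁ l₁ h₂ l₂ hP hβ
    (fun t ht => hqlt t (Ioo_subset_Ico_self ht))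
  by_contra hn
  have hn := not_lt.1 hn
  have a1 := h₁.r_pos β hβ
  have a2 := h₁.q_pos β hβ
  have a3 := h₂'.r_pos β hβ
  have a4 := h₂'.q_pos β hβ
  have hq := hqlt β hβ
  have hr : r₂ β ≤ r₁ β := by
    by_contra hr
    nlinarith [mul_lt_mul'' (not_le.1 hr) hq a1.le a2.le]
  have hS : 1 ≤ flux m r₁ q₁ β / flux m r₂ q₂ β := by
    rw [one_le_div (flux_pos a3 a4)]
    have e : ∀ r q : ℝ → ℝ, flux m r q β = r β ^ m * (r β * q β) := by
      intro r q
      unfold flux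
      ring
    rw [e, e]
    exact mul_le_mul (pow_le_pow_left₀ a3.le hr m) hn (by positivity) (by positivity)
  have e : q₁ β / q₂ β * r₂ β * energy f q₂ β - r₁ β * energy f q₁ β
      = q₁ β * (r₂ β * q₂ β - r₁ β * q₁ β) := by
    unfold energy
    rw [H.F_beta]
    field_simp
    ring
  rw [e] at hR
  have : r₁ β ^ (m + 1) * (q₁ β * (r₂ β * q₂ β - r₁ β * q₁ β)) ≤ 0 :=
    mul_nonpos_of_nonneg_of_nonpos (by positivity) (by nlinarith)
  nlinarith

end DecBranch

/-! ### Comparison of two profiles -/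

/-- The two monotone branches of a solution with one sign change: `(r, q)` decreasing from the
maximum `α` to the minimum `-M`, and `(r', q')` returning to `0`, parametrized by `-u`. -/
structure Profile (m : ℕ) (f : ℝ → ℝ) (β α : ℝ) where
  r : ℝ → ℝ
  q : ℝ → ℝ
  r' : ℝ → ℝ
  q' : ℝ → ℝ
  M : ℝ
  T : ℝ
  hα : β < α
  hM : β < M
  dec : DecBranch m f r q (Ioo (-M) α)
  energy_pos : ∀ s ∈ Ioo (-M) α, 0 < energy f q s
  r_lim : Tendsto r (nhdsWithin α (Iio α)) (nhds 0)
  q_lim : Tendsto q (nhdsWithin α (Iio α)) (nhds 0)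
  p_lim : Tendsto (fun s => r s * f s / q s) (nhdsWithin α (Iio α)) (nhds (m + 2))
  T_pos : 0 < T
  r_lim_min : Tendsto r (nhdsWithin (-M) (Ioi (-M))) (nhds T)
  q_lim_min : Tendsto q (nhdsWithin (-M) (Ioi (-M))) (nhds 0)
  ret : DecBranch m f r' q' (Ioo 0 M)
  energy_pos' : ∀ s ∈ Ioo 0 M, 0 < energy f q' s
  turning : TurningLimits r' q' M T
  decay : ∀ ε > 0, ∃ s ∈ Ioo 0 β, r' s ^ 2 * energy f q' s < ε

namespace Profile

variable {m : ℕ} {f : ℝ → ℝ} {β α α₁ α₂ : ℝ}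

theorem start (P : Profile m f β α) (H : Nonlinearity m f β) : StartBranch m f P.r P.q β α where
  branch := P.dec.mono fun s hs => ⟨by linarith [hs.1, P.hM, H.β_pos], hs.2⟩
  lt := P.hα
  r_lim := P.r_lim
  q_lim := P.q_lim
  p_lim := P.p_lim

theorem middle (P : Profile m f β α) : DecBranch m f P.r P.q (Icc (-β) β) :=
  P.dec.mono fun s hs => ⟨by linarith [hs.1, P.hM], hs.2.trans_lt P.hα⟩

theorem inc (P : Profile m f β α) (H : Nonlinearity m f β) :
    IncBranch m f (fun s => P.r (-s)) (fun s => P.q (-s)) (Ico β P.M) := by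
  have hmem : ∀ s ∈ Ico β P.M, -s ∈ Ioo (-P.M) α := fun s hs =>
    ⟨by linarith [hs.2], by linarith [hs.1, H.β_pos, P.hα]⟩
  refine ⟨fun s hs => P.dec.r_pos _ (hmem s hs), fun s hs => P.dec.q_pos _ (hmem s hs),
    fun s hs => ?_, fun s hs => ?_⟩
  · refine ((P.dec.r_deriv _ (hmem s hs)).comp s (hasDerivAt_neg s)).congr_deriv ?_
    ring
  · refine ((P.dec.q_deriv _ (hmem s hs)).comp s (hasDerivAt_neg s)).congr_deriv ?_
    rw [H.odd]
    ring

theorem inc_limits (P : Profile m f β α) :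
    TurningLimits (fun s => P.r (-s)) (fun s => P.q (-s)) P.M P.T where
  T_pos := P.T_pos
  r_lim := P.r_lim_min.comp tendsto_neg_nhdsLT
  q_lim := P.q_lim_min.comp tendsto_neg_nhdsLT

theorem not_lt (H : Nonlinearity m f β) (P₁ : Profile m f β α₁) (P₂ : Profile m f β α₂) :
    ¬ α₁ < α₂ := by
  intro hα
  have hβ := H.β_pos
  obtain ⟨hq, hy, hg⟩ := (P₁.start H).order_at_beta H (P₂.start H) hα
  have hβm : β ∈ Icc (-β) β := ⟨by linarith, le_rfl⟩
  have hnm : -β ∈ Icc (-β) β := ⟨le_rfl, by linarith⟩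
  have e₁ : ∀ s ∈ Icc (-β) β, 0 < energy f P₁.q s := fun s hs =>
    P₁.energy_pos s ⟨by linarith [hs.1, P₁.hM], hs.2.trans_lt P₁.hα⟩
  have e₂ : ∀ s ∈ Icc (-β) β, 0 < energy f P₂.q s := fun s hs =>
    P₂.energy_pos s ⟨by linarith [hs.1, P₂.hM], hs.2.trans_lt P₂.hα⟩
  have hmid := P₁.middle.order_below_beta H le_rfl (by linarith) P₂.middle e₁ e₂ hq hy
  have hflux := P₁.middle.flux_le_at_neg_beta H P₂.middle e₁ e₂ (fun s hs => (hmid s hs).1)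
    ((flux_le_flux_iff (P₁.middle.r_pos β hβm) (P₁.middle.q_pos β hβm)
      (P₂.middle.r_pos β hβm) (P₂.middle.q_pos β hβm)).2 hg)
  have hsqrt : ∀ q : ℝ → ℝ, 0 < q (-β) → √(energy f q (-β)) = q (-β) := by
    intro q hq
    unfold energy
    rw [H.F_neg, H.F_beta, mul_zero, add_zero, Real.sqrt_sq hq.le]
  have hyn := (hmid _ hnm).2
  rw [hsqrt _ (P₁.middle.q_pos _ hnm), hsqrt _ (P₂.middle.q_pos _ hnm)] at hyn
  obtain ⟨hM, hP⟩ := IncBranch.turning_order H P₁.hM P₂.hM (P₁.inc H) P₁.inc_limits (P₂.inc H)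
    P₂.inc_limits (hmid _ hnm).1 (by linarith) hflux
  have sub : ∀ M, Ico β M ⊆ Ioo 0 M := fun M s hs => ⟨hβ.trans_le hs.1, hs.2⟩
  obtain ⟨hq', hy'⟩ := DecBranch.order_after_turning H P₁.hM hM (P₁.ret.mono (sub _)) P₁.turning
    (P₂.ret.mono (sub _)) P₂.turning hP
  set δ := P₂.r' β * P₂.q' β - P₁.r' β * P₁.q' β with hδ
  have hδ0 : 0 < δ := by linarith
  obtain ⟨s, hs, hlt⟩ := P₂.decay (δ ^ 2) (by positivity)
  have sub₁ : Icc s β ⊆ Ioo 0 P₁.M := fun t ht => ⟨hs.1.trans_le ht.1, ht.2.trans_lt P₁.hM⟩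
  have sub₂ : Icc s β ⊆ Ioo 0 P₂.M := fun t ht => ⟨hs.1.trans_le ht.1, ht.2.trans_lt P₂.hM⟩
  have hW := ((P₁.ret.mono sub₁).order_below_beta H (by linarith [hs.1]) hs.2 (P₂.ret.mono sub₂)
    (fun t ht => P₁.energy_pos' t (sub₁ ht)) (fun t ht => P₂.energy_pos' t (sub₂ ht)) hq' hy'
    s ⟨le_rfl, hs.2.le⟩).2
  have hsm : s ∈ Icc s β := ⟨le_rfl, hs.2.le⟩
  have p1 : 0 ≤ P₁.r' s * √(energy f P₁.q' s) :=
    mul_nonneg (P₁.ret.r_pos s (sub₁ hsm)).le (Real.sqrt_nonneg _)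
  have hle : δ ≤ P₂.r' s * √(energy f P₂.q' s) := by linarith
  have hsq : (P₂.r' s * √(energy f P₂.q' s)) ^ 2 = P₂.r' s ^ 2 * energy f P₂.q' s := by
    rw [mul_pow, Real.sq_sqrt (P₂.energy_pos' s (sub₂ hsm)).le]
  nlinarith

end Profile

/-! ### Radial solutions -/

/-- A decaying solution of the radial equation in dimension `m + 2`. -/
structure DecaySol (m : ℕ) (f u : ℝ → ℝ) : Prop where
  cont : ContinuousOn u (Ici 0)
  du : ∀ r, 0 < r → HasDerivAt u (deriv u r) r
  ddu : ∀ r, 0 < r → HasDerivAt (deriv u) (-((m + 1) / r * deriv u r) - f (u r)) r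
  lim : Tendsto u atTop (nhds 0)

/-- The energy `u'² + 2 F(u)` as a function of the radius. -/
noncomputable def totalEnergy (f u : ℝ → ℝ) (r : ℝ) : ℝ := deriv u r ^ 2 + 2 * Fint f (u r)

theorem DecaySol.of_boundState {m : ℕ} {f u : ℝ → ℝ} (h : BoundState (m + 2) f u) :
    DecaySol m f u := by
  obtain ⟨hc, hd, he, -, hl⟩ := h
  refine ⟨hc, fun r hr => (hd r hr).1.hasDerivAt, fun r hr => ?_, hl⟩
  refine (hd r hr).2.hasDerivAt.congr_deriv ?_
  have := he r hr
  push_cast at this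
  rw [show ((m : ℝ) + 2 - 1) = m + 1 by ring] at this
  linarith

theorem deriv_neg_fun (u : ℝ → ℝ) : deriv (fun x => -u x) = fun x => -deriv u x := by
  funext x
  exact deriv.fun_neg

namespace DecaySol

variable {m : ℕ} {f u : ℝ → ℝ} {β a r s : ℝ}

theorem neg (H : Nonlinearity m f β) (h : DecaySol m f u) : DecaySol m f (fun r => -u r) := by
  refine ⟨h.cont.neg, fun r hr => ?_, fun r hr => ?_, by simpa using h.lim.neg⟩
  · rw [deriv_neg_fun]
    exact (h.du r hr).neg
  · rw [deriv_neg_fun]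
    refine (h.ddu r hr).neg.congr_deriv ?_
    rw [H.odd]
    ring

theorem flux_hasDerivAt (h : DecaySol m f u) (hr : 0 < r) :
    HasDerivAt (fun r => r ^ (m + 1) * deriv u r) (-(r ^ (m + 1) * f (u r))) r := by
  refine (((hasDerivAt_id r).pow (m + 1)).mul (h.ddu r hr)).congr_deriv ?_
  simp only [Nat.add_sub_cancel, Pi.pow_apply, id]
  push_cast
  field_simp
  ring

theorem tendsto_zero (h : DecaySol m f u) : Tendsto u (nhdsWithin 0 (Ioi 0)) (nhds (u 0)) :=
  (h.cont 0 self_mem_Ici).mono_left (nhdsWithin_mono _ Ioi_subset_Ici_self)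

theorem exists_flux_le (H : Nonlinearity m f β) (h : DecaySol m f u) :
    ∃ B, ∀ r ∈ Ioo (0 : ℝ) 1, r ^ (m + 1) * deriv u r ≤ B * r ^ (m + 2) := by
  obtain ⟨B, hB⟩ := (isCompact_Icc (a := (0 : ℝ)) (b := 1)).exists_bound_of_continuousOn
    (H.cont.comp_continuousOn (h.cont.mono (Icc_subset_Ici_self)))
  refine ⟨B / (m + 2), fun r hr => ?_⟩
  by_contra hn
  have hn := not_le.1 hn
  have hm : (0 : ℝ) < m + 2 := by positivity
  set c := r ^ (m + 1) * deriv u r - B / (m + 2) * r ^ (m + 2) with hc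
  have hc0 : 0 < c := by linarith
  have hB0 : 0 ≤ B := (norm_nonneg _).trans (hB 0 ⟨le_rfl, zero_le_one⟩)
  have hlow : ∀ x ∈ Ioo 0 r, c ≤ x ^ (m + 1) * deriv u x := by
    intro x hx
    have hpos : ∀ t ∈ Icc x r, 0 < t := fun t ht => hx.1.trans_le ht.1
    have := ge_of_hasDerivAt_nonpos (X := fun t => t ^ (m + 1) * deriv u t
      - B / (m + 2) * t ^ (m + 2)) hx.2.le
      (fun t ht => (h.flux_hasDerivAt (hpos t ht)).sub
        (((hasDerivAt_pow (m + 2) t)).const_mul (B / (m + 2)))) (by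
      intro t ht
      have ht0 := hpos t (Ioo_subset_Icc_self ht)
      have hb := hB t ⟨ht0.le, (ht.2.trans hr.2).le⟩
      rw [Real.norm_eq_abs, abs_le] at hb
      have e : B / ((m : ℝ) + 2) * (((m + 2 : ℕ) : ℝ) * t ^ (m + 2 - 1)) = B * t ^ (m + 1) := by
        rw [show m + 2 - 1 = m + 1 from rfl]
        push_cast
        field_simp
      rw [e]
      have : 0 < t ^ (m + 1) := by positivity
      have hb1 : -B ≤ f (u t) := hb.1
      nlinarith)
    have hx0 : 0 ≤ B / (m + 2) * x ^ (m + 2) := by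
      have := hx.1
      positivity
    linarith
  have hmono : ∀ x ∈ Ioo 0 r, u x - u r ≤ c / r - c / x := by
    intro x hx
    have hpos : ∀ t ∈ Icc x r, 0 < t := fun t ht => hx.1.trans_le ht.1
    have := le_of_hasDerivAt_nonneg (X := fun t => u t + c * t⁻¹) hx.2.le
      (fun t ht => (h.du t (hpos t ht)).add
        ((hasDerivAt_inv (hpos t ht).ne').const_mul c)) (by
      intro t ht
      have ht0 := hpos t (Ioo_subset_Icc_self ht)
      have hl := hlow t ⟨ht0, ht.2⟩
      have ht1 : t < 1 := ht.2.trans hr.2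
      have hp : t ^ (m + 1) ≤ t ^ 2 :=
        pow_le_pow_of_le_one ht0.le ht1.le (by have := H.m_pos; omega)
      have hd : 0 < deriv u t := by
        by_contra hd
        have : t ^ (m + 1) * deriv u t ≤ 0 :=
          mul_nonpos_of_nonneg_of_nonpos (by positivity) (not_lt.1 hd)
        linarith
      have h2 : c ≤ t ^ 2 * deriv u t := hl.trans (by gcongr)
      have h3 : c * (t ^ 2)⁻¹ ≤ deriv u t := by
        rw [← div_eq_mul_inv, div_le_iff₀ (by positivity)]
        linarith
      linarith)
    rw [div_eq_mul_inv, div_eq_mul_inv]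
    linarith
  have hinv : Tendsto (fun x : ℝ => c * x⁻¹) (nhdsWithin 0 (Ioi 0)) atTop :=
    tendsto_inv_nhdsGT_zero.const_mul_atTop hc0
  have hbig := hinv.eventually_gt_atTop (u r + c / r - u 0 + 1)
  have hu := h.tendsto_zero.eventually (lt_mem_nhds (sub_one_lt (u 0)))
  obtain ⟨x, hx1, hx2, hx3⟩ := (hbig.and (hu.and (Ioo_mem_nhdsGT hr.1))).exists
  have := hmono x hx3
  rw [div_eq_mul_inv c x] at this
  linarith

theorem deriv_div_tendsto (H : Nonlinearity m f β) (h : DecaySol m f u) :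
    Tendsto (fun r => deriv u r / r) (nhdsWithin 0 (Ioi 0)) (nhds (-(f (u 0) / (m + 2)))) := by
  obtain ⟨B, hB⟩ := h.exists_flux_le H
  obtain ⟨B', hB'⟩ := (h.neg H).exists_flux_le H
  rw [deriv_neg_fun] at hB'
  have hpow : Tendsto (fun r : ℝ => r ^ (m + 2)) (nhdsWithin 0 (Ioi 0)) (nhds 0) := by
    have := ((continuous_pow (M := ℝ) (m + 2)).tendsto 0).mono_left
      (nhdsWithin_le_nhds (s := Ioi 0))
    simpa using this
  have hG : Tendsto (fun r => r ^ (m + 1) * deriv u r) (nhdsWithin 0 (Ioi 0)) (nhds 0) := by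
    refine tendsto_of_tendsto_of_tendsto_of_le_of_le' (g := fun r => -B' * r ^ (m + 2))
      (h := fun r => B * r ^ (m + 2)) ?_ ?_ ?_ ?_
    · simpa using hpow.const_mul (-B')
    · simpa using hpow.const_mul B
    · filter_upwards [Ioo_mem_nhdsGT one_pos] with r hr
      linarith [hB' r hr]
    · filter_upwards [Ioo_mem_nhdsGT one_pos] with r hr using hB r hr
  have hfu : Tendsto (fun r => f (u r)) (nhdsWithin 0 (Ioi 0)) (nhds (f (u 0))) :=
    (H.cont.tendsto _).comp h.tendsto_zero
  have hL : Tendsto (fun r => r ^ (m + 1) * deriv u r / r ^ (m + 2)) (nhdsWithin 0 (Ioi 0))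
      (nhds (-(f (u 0) / (m + 2)))) := by
    refine HasDerivAt.lhopital_zero_right_on_Ioo one_pos
      (fun r hr => h.flux_hasDerivAt hr.1) (fun r _ => hasDerivAt_pow (m + 2) r) ?_ hG hpow ?_
    · intro r hr
      have := hr.1
      simp only [show m + 2 - 1 = m + 1 from rfl]
      positivity
    · refine (hfu.div_const ((m : ℝ) + 2)).neg.congr' ?_
      filter_upwards [Ioo_mem_nhdsGT one_pos] with r hr
      have := hr.1
      simp only [show m + 2 - 1 = m + 1 from rfl]
      push_cast
      field_simp
  refine hL.congr' ?_
  filter_upwards [self_mem_nhdsWithin] with r hr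
  have : 0 < r := hr
  field_simp
  ring

theorem deriv_tendsto_zero (H : Nonlinearity m f β) (h : DecaySol m f u) :
    Tendsto (deriv u) (nhdsWithin 0 (Ioi 0)) (nhds 0) := by
  have hid : Tendsto (fun r : ℝ => r) (nhdsWithin 0 (Ioi 0)) (nhds 0) :=
    tendsto_id.mono_left nhdsWithin_le_nhds
  have := (h.deriv_div_tendsto H).mul hid
  rw [mul_zero] at this
  refine this.congr' ?_
  filter_upwards [self_mem_nhdsWithin] with r hr
  exact div_mul_cancel₀ _ (ne_of_gt hr)

/-! #### The energy -/

theorem totalEnergy_deriv (H : Nonlinearity m f β) (h : DecaySol m f u) (hr : 0 < r) :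
    HasDerivAt (totalEnergy f u) (-(2 * (m + 1) / r * deriv u r ^ 2)) r := by
  refine (((h.ddu r hr).pow 2).add
    ((((H.F_deriv (u r)).comp r (h.du r hr))).const_mul 2)).congr_deriv ?_
  field_simp
  ring

theorem totalEnergy_anti (H : Nonlinearity m f β) (h : DecaySol m f u) (hr : 0 < r)
    (hrs : r ≤ s) : totalEnergy f u s ≤ totalEnergy f u r := by
  refine ge_of_hasDerivAt_nonpos hrs
    (fun t ht => h.totalEnergy_deriv H (hr.trans_le ht.1)) (fun t ht => ?_)
  have : 0 < t := hr.trans ht.1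
  have : 0 ≤ 2 * ((m : ℝ) + 1) / t * deriv u t ^ 2 := by positivity
  linarith

theorem totalEnergy_nonneg (H : Nonlinearity m f β) (h : DecaySol m f u) (hr : 0 < r) :
    0 ≤ totalEnergy f u r := by
  have hF : Tendsto (fun s => 2 * Fint f (u s)) atTop (nhds (2 * Fint f 0)) :=
    ((H.F_deriv 0).continuousAt.tendsto.comp h.lim).const_mul 2
  rw [H.F_zero, mul_zero] at hF
  refine le_of_tendsto hF ?_
  filter_upwards [eventually_ge_atTop r] with s hs
  have := h.totalEnergy_anti H hr hs
  unfold totalEnergy at this ⊢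
  nlinarith [sq_nonneg (deriv u s)]

theorem eq_zero_of_totalEnergy (H : Nonlinearity m f β) (h : DecaySol m f u) (hr : 0 < r)
    (he : totalEnergy f u r = 0) (hs : r ≤ s) : u s = 0 := by
  have hz : ∀ t, r ≤ t → totalEnergy f u t = 0 := fun t ht =>
    le_antisymm (he ▸ h.totalEnergy_anti H hr ht) (h.totalEnergy_nonneg H (hr.trans_le ht))
  have hd : ∀ t, r < t → deriv u t = 0 := by
    intro t ht
    have ht0 := hr.trans ht
    have h0 : HasDerivAt (totalEnergy f u) 0 t := by
      refine (hasDerivAt_const t (0 : ℝ)).congr_of_eventuallyEq ?_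
      filter_upwards [lt_mem_nhds ht] with x hx using hz x hx.le
    have := h0.unique (h.totalEnergy_deriv H ht0)
    have h2 : 2 * ((m : ℝ) + 1) / t * deriv u t ^ 2 = 0 := by linarith
    have h3 : 2 * ((m : ℝ) + 1) / t ≠ 0 := by positivity
    simpa [h3] using h2
  have hc : ∀ t, s ≤ t → u t = u s := by
    intro t ht
    have hX : ∀ x ∈ Icc s t, HasDerivAt u (deriv u x) x := fun x hx =>
      h.du x (hr.trans_le (hs.trans hx.1))
    exact le_antisymm
      (ge_of_hasDerivAt_nonpos ht hX fun x hx => (hd x (hs.trans_lt hx.1)).le)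
      (le_of_hasDerivAt_nonneg ht hX fun x hx => (hd x (hs.trans_lt hx.1)).ge)
  refine tendsto_nhds_unique (tendsto_const_nhds.congr' ?_) h.lim
  filter_upwards [eventually_ge_atTop s] with t ht using (hc t ht).symm

theorem totalEnergy_tendsto_zero (H : Nonlinearity m f β) (h : DecaySol m f u) :
    Tendsto (totalEnergy f u) (nhdsWithin 0 (Ioi 0)) (nhds (2 * Fint f (u 0))) := by
  have hF : Tendsto (fun s => 2 * Fint f (u s)) (nhdsWithin 0 (Ioi 0)) (nhds (2 * Fint f (u 0))) :=
    ((H.F_deriv (u 0)).continuousAt.tendsto.comp h.tendsto_zero).const_mul 2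
  have := ((h.deriv_tendsto_zero H).pow 2).add hF
  rw [zero_pow two_ne_zero, zero_add] at this
  exact this

theorem beta_lt_initial (H : Nonlinearity m f β) (h : DecaySol m f u) (h0 : 0 < u 0) :
    β < u 0 := by
  by_contra hn
  have hF := H.F_nonpos (u 0) ⟨by linarith [H.β_pos], not_lt.1 hn⟩
  have hz : ∀ r, 0 < r → u r = 0 := by
    intro r hr
    refine h.eq_zero_of_totalEnergy H hr (le_antisymm ?_ (h.totalEnergy_nonneg H hr)) le_rfl
    have : totalEnergy f u r ≤ 2 * Fint f (u 0) := by
      refine ge_of_tendsto (h.totalEnergy_tendsto_zero H) ?_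
      filter_upwards [Ioo_mem_nhdsGT hr] with s hs using h.totalEnergy_anti H hs.1 hs.2.le
    linarith
  have : u 0 = 0 := by
    refine tendsto_nhds_unique h.tendsto_zero (tendsto_const_nhds.congr' ?_)
    filter_upwards [self_mem_nhdsWithin] with r hr using (hz r hr).symm
  linarith

/-- Decay of `r² (u'² + 2 F(u))`; this uses that the dimension is at least `3`. -/
theorem sq_mul_totalEnergy_tendsto (H : Nonlinearity m f β) (h : DecaySol m f u) :
    Tendsto (fun r => r ^ 2 * totalEnergy f u r) atTop (nhds 0) := by
  have hβ := H.β_pos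
  obtain ⟨R, hR⟩ := eventually_atTop.1
    (h.lim.eventually (Icc_mem_nhds (by linarith : -β < 0) hβ))
  set R₀ := max R 1 with hR₀
  have hR1 : 1 ≤ R₀ := le_max_right _ _
  set K := R₀ ^ (2 * m + 2) * totalEnergy f u R₀ with hK
  have hle : ∀ r, R₀ ≤ r → r ^ (2 * m + 2) * totalEnergy f u r ≤ K := by
    intro r hr
    have hpos : ∀ t ∈ Icc R₀ r, 0 < t := fun t ht => by linarith [ht.1]
    refine ge_of_hasDerivAt_nonpos hr (fun t ht => (hasDerivAt_pow (2 * m + 2) t).mul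
      (h.totalEnergy_deriv H (hpos t ht))) ?_
    intro t ht
    have ht0 := hpos t (Ioo_subset_Icc_self ht)
    have hF := H.F_nonpos (u t) (hR t ((le_max_left _ _).trans ht.1.le))
    have e : ((2 * m + 2 : ℕ) : ℝ) * t ^ (2 * m + 2 - 1) * totalEnergy f u t
        + t ^ (2 * m + 2) * -(2 * ((m : ℝ) + 1) / t * deriv u t ^ 2)
        = 4 * (m + 1) * t ^ (2 * m + 1) * Fint f (u t) := by
      unfold totalEnergy
      rw [show 2 * m + 2 - 1 = 2 * m + 1 from rfl]
      push_cast
      field_simp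
      ring
    rw [e]
    exact mul_nonpos_of_nonneg_of_nonpos (by positivity) hF
  have hlim : Tendsto (fun r : ℝ => K / r) atTop (nhds 0) := tendsto_const_nhds.div_atTop tendsto_id
  refine tendsto_of_tendsto_of_tendsto_of_le_of_le' tendsto_const_nhds hlim ?_ ?_
  · filter_upwards [eventually_ge_atTop R₀] with r hr
    have := h.totalEnergy_nonneg H (r := r) (by linarith)
    positivity
  · filter_upwards [eventually_ge_atTop R₀] with r hr
    have hr1 : 1 ≤ r := hR1.trans hr
    have hr0 : 0 < r := by linarith
    have hE := h.totalEnergy_nonneg H hr0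
    rw [le_div_iff₀ hr0]
    refine le_trans ?_ (hle r hr)
    have : r ^ 3 ≤ r ^ (2 * m + 2) := pow_le_pow_right₀ hr1 (by have := H.m_pos; omega)
    nlinarith

end DecaySol

/-! ### Monotone branches of a solution -/

/-- The solution `v` decreases to `0` along the interval `I` with left endpoint `a` and vanishes
beyond it. -/
structure Terminal (f v : ℝ → ℝ) (a : ℝ) (I : Set ℝ) : Prop where
  isOpen : IsOpen I
  ordConnected : I.OrdConnected
  gt : ∀ r ∈ I, a < r
  init : ∀ r ∈ I, Ioo a r ⊆ I
  deriv_neg : ∀ r ∈ I, deriv v r < 0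
  pos : ∀ r ∈ I, 0 < v r
  zero : ∀ r, a < r → r ∉ I → v r = 0
  energy_pos : ∀ r ∈ I, 0 < totalEnergy f v r
  decay : ∀ ε > 0, ∃ r ∈ I, v r < ε ∧ r ^ 2 * totalEnergy f v r < ε

theorem eventually_neg_right {g : ℝ → ℝ} {g' a : ℝ} (hg : HasDerivAt g g' a) (h0 : g a = 0)
    (hg' : g' < 0) : ∀ᶠ r in nhdsWithin a (Ioi a), g r < 0 := by
  have ht := (hasDerivAt_iff_tendsto_slope.1 hg).mono_left
    (nhdsWithin_mono a (fun x (hx : x ∈ Ioi a) => ne_of_gt hx))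
  filter_upwards [ht.eventually (gt_mem_nhds hg'), self_mem_nhdsWithin] with r hr hra
  rw [slope_def_field, h0, sub_zero] at hr
  have hpos : 0 < r - a := sub_pos.2 hra
  by_contra hn
  exact absurd hr (not_lt.2 (div_nonneg (not_lt.1 hn) hpos.le))

theorem tendsto_inverse_top {v S : ℝ → ℝ} {I : Set ℝ} {a M : ℝ}
    (hS : ∀ᶠ y in nhdsWithin M (Iio M), S y ∈ I ∧ v (S y) = y) (hv : StrictAntiOn v I)
    (hI : ∀ r ∈ I, a < r) (hd : ∀ d, a < d → ∃ c ∈ I, c < d) (hM : ∀ c ∈ I, v c < M) :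
    Tendsto S (nhdsWithin M (Iio M)) (nhdsWithin a (Ioi a)) := by
  refine tendsto_nhdsWithin_iff.2 ⟨tendsto_order.2 ⟨fun d hda => ?_, fun d hda => ?_⟩, ?_⟩
  · filter_upwards [hS] with y hy using hda.trans (hI _ hy.1)
  · obtain ⟨c, hc, hcd⟩ := hd d hda
    filter_upwards [hS, Ioo_mem_nhdsLT (hM c hc)] with y hy hyc
    by_contra hn
    have := hv.antitoneOn hc hy.1 (hcd.le.trans (not_lt.1 hn))
    linarith [hy.2, hyc.1]
  · filter_upwards [hS] with y hy using hI _ hy.1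

theorem tendsto_inverse_bot {v S : ℝ → ℝ} {I : Set ℝ} {b L : ℝ}
    (hS : ∀ᶠ y in nhdsWithin L (Ioi L), S y ∈ I ∧ v (S y) = y) (hv : StrictAntiOn v I)
    (hI : ∀ r ∈ I, r < b) (hd : ∀ d, d < b → ∃ c ∈ I, d < c) (hL : ∀ c ∈ I, L < v c) :
    Tendsto S (nhdsWithin L (Ioi L)) (nhdsWithin b (Iio b)) := by
  refine tendsto_nhdsWithin_iff.2 ⟨tendsto_order.2 ⟨fun d hda => ?_, fun d hda => ?_⟩, ?_⟩
  · obtain ⟨c, hc, hcd⟩ := hd d hda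
    filter_upwards [hS, Ioo_mem_nhdsGT (hL c hc)] with y hy hyc
    by_contra hn
    have := hv.antitoneOn hy.1 hc ((not_lt.1 hn).trans hcd.le)
    linarith [hy.2, hyc.2]
  · filter_upwards [hS] with y hy using (hI _ hy.1).trans hda
  · filter_upwards [hS] with y hy using hI _ hy.1

namespace DecaySol

variable {m : ℕ} {f u v : ℝ → ℝ} {β a b r T : ℝ} {I : Set ℝ}

theorem strictAntiOn_Icc (h : DecaySol m f v) (ha : 0 ≤ a)
    (hneg : ∀ r ∈ Ioo a b, deriv v r < 0) : StrictAntiOn v (Icc a b) := by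
  refine strictAntiOn_of_deriv_neg (convex_Icc a b)
    (h.cont.mono (Icc_subset_Ici_self.trans (Ici_subset_Ici.2 ha))) ?_
  rwa [interior_Icc]

theorem terminal_or_turning (H : Nonlinearity m f β) (h : DecaySol m f v) (ha : 0 ≤ a)
    (hneg : ∀ᶠ r in nhdsWithin a (Ioi a), deriv v r < 0) :
    (∃ I, Terminal f v a I) ∨
      ∃ T, a < T ∧ (∀ r ∈ Ioo a T, deriv v r < 0) ∧ deriv v T = 0 ∧ v T < -β := by
  have hEpos : ∀ r, a < r → 0 < v r → 0 < totalEnergy f v r := by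
    intro r hr hv
    refine lt_of_le_of_ne (h.totalEnergy_nonneg H (ha.trans_lt hr)) fun he => ?_
    have := h.eq_zero_of_totalEnergy H (ha.trans_lt hr) he.symm le_rfl
    linarith
  by_cases hall : ∃ r, a < r ∧ 0 ≤ deriv v r
  · obtain ⟨r₁, har, hr₁⟩ := hall
    obtain ⟨d, hd, hdneg⟩ := (mem_nhdsGT_iff_exists_Ioo_subset).1 hneg
    have hd : a < d := hd
    obtain ⟨c, hac, hcd⟩ := exists_between (lt_min hd har)
    have hcd' : c < d := hcd.trans_le (min_le_left _ _)
    have hcr : c < r₁ := hcd.trans_le (min_le_right _ _)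
    have hc : deriv v c < 0 := hdneg ⟨hac, hcd'⟩
    obtain ⟨T, hT, hT0, hTp⟩ := exists_first_zero (h := fun r => -deriv v r) hcr.le
      (fun s hs => (h.ddu s (by linarith [hs.1])).continuousAt.neg) (by linarith) (by linarith)
    have haT : a < T := hac.trans hT.1
    have hT00 : 0 < T := ha.trans_lt haT
    have hT0 : deriv v T = 0 := by linarith
    have hnegT : ∀ r ∈ Ioo a T, deriv v r < 0 := by
      intro r hr
      by_cases hrc : r < c
      · exact hdneg ⟨hr.1, hrc.trans hcd'⟩
      · linarith [hTp r ⟨not_lt.1 hrc, hr.2⟩]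
    rcases (h.totalEnergy_nonneg H hT00).lt_or_eq with hE | hE
    · right
      refine ⟨T, haT, hnegT, hT0, ?_⟩
      have hF : 0 < Fint f (v T) := by
        unfold totalEnergy at hE
        rw [hT0] at hE
        linarith
      by_contra hn
      have hn := not_lt.1 hn
      have hβ : β < v T := by
        by_contra hb
        linarith [H.F_nonpos (v T) ⟨hn, not_lt.1 hb⟩]
      have := deriv_nonpos_of_pos_left haT (h.ddu T hT00).neg (by simp [hT0])
        (fun s hs => by simpa using hnegT s hs)
      rw [hT0] at this
      linarith [H.f_pos _ hβ.le]
    · left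
      have hvT : ∀ r, T ≤ r → v r = 0 := fun r hr =>
        h.eq_zero_of_totalEnergy H hT00 hE.symm hr
      have hanti := h.strictAntiOn_Icc ha hnegT
      have hpos : ∀ r ∈ Ioo a T, 0 < v r := fun r hr => by
        rw [← hvT T le_rfl]
        exact hanti ⟨hr.1.le, hr.2.le⟩ ⟨haT.le, le_rfl⟩ hr.2
      refine ⟨Ioo a T, isOpen_Ioo, ordConnected_Ioo, fun r hr => hr.1,
        fun r hr => Ioo_subset_Ioo_right hr.2.le, hnegT, hpos, ?_, ?_, ?_⟩
      · intro r hr hrI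
        refine hvT r (not_lt.1 fun hlt => hrI ⟨hr, hlt⟩)
      · exact fun r hr => hEpos r hr.1 (hpos r hr)
      · intro ε hε
        have c1 : Tendsto v (nhdsWithin T (Iio T)) (nhds (v T)) :=
          (h.du T hT00).continuousAt.tendsto.mono_left nhdsWithin_le_nhds
        have c2 : Tendsto (fun r => r ^ 2 * totalEnergy f v r) (nhdsWithin T (Iio T))
            (nhds (T ^ 2 * totalEnergy f v T)) :=
          ((continuousAt_id.pow 2).mul
            (h.totalEnergy_deriv H hT00).continuousAt).tendsto.mono_left nhdsWithin_le_nhds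
        rw [hvT T le_rfl] at c1
        rw [← hE, mul_zero] at c2
        obtain ⟨r, hr⟩ := ((c1.eventually (gt_mem_nhds hε)).and
          ((c2.eventually (gt_mem_nhds hε)).and (Ioo_mem_nhdsLT haT))).exists
        exact ⟨r, hr.2.2, hr.1, hr.2.1⟩
  · left
    push Not at hall
    have hpos : ∀ r ∈ Ioi a, 0 < v r := by
      intro r hr
      have hlt : ∀ s, r < s → v s < v r := fun s hs =>
        h.strictAntiOn_Icc (ha.trans (le_of_lt hr))
          (fun t ht => hall t (lt_trans hr ht.1)) ⟨le_rfl, hs.le⟩ ⟨hs.le, le_rfl⟩ hs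
      refine lt_of_le_of_lt (le_of_tendsto h.lim ?_) (hlt (r + 1) (by linarith))
      filter_upwards [eventually_ge_atTop (r + 1)] with s hs
      exact h.strictAntiOn_Icc (a := r + 1) (by linarith [mem_Ioi.1 hr])
        (fun t ht => hall t (by linarith [mem_Ioi.1 hr, ht.1])) |>.antitoneOn
        ⟨le_rfl, hs⟩ ⟨hs, le_rfl⟩ hs
    refine ⟨Ioi a, isOpen_Ioi, ordConnected_Ioi, fun r hr => hr, fun r _ t ht => ht.1,
      hall, hpos, fun r hr hn => absurd hr hn, fun r hr => hEpos r hr (hpos r hr), ?_⟩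
    intro ε hε
    obtain ⟨r, hr⟩ := ((h.lim.eventually (gt_mem_nhds hε)).and
      (((h.sq_mul_totalEnergy_tendsto H).eventually (gt_mem_nhds hε)).and
        (eventually_gt_atTop a))).exists
    exact ⟨r, hr.2.2, hr.1, hr.2.1⟩

theorem exists_branch (h : DecaySol m f v) (hI : IsOpen I) (hIc : I.OrdConnected)
    (hpos : ∀ r ∈ I, 0 < r) (hneg : ∀ r ∈ I, deriv v r < 0) :
    ∃ S, DecBranch m f S (fun y => -deriv v (S y)) (v '' I) ∧
      ∀ y ∈ v '' I, S y ∈ I ∧ v (S y) = y := by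
  obtain ⟨S, hS, -⟩ := exists_inverse hI hIc (fun r hr => h.du r (hpos r hr)) hneg
  refine ⟨S, ⟨fun y hy => hpos _ (hS y hy).1, fun y hy => ?_, fun y hy => ?_, fun y hy => ?_⟩,
    fun y hy => ⟨(hS y hy).1, (hS y hy).2.1⟩⟩
  · linarith [hneg _ (hS y hy).1]
  · refine (hS y hy).2.2.congr_deriv ?_
    rw [neg_div, div_neg, neg_neg]
  · obtain ⟨h1, h2, h3⟩ := hS y hy
    have p := hpos _ h1
    have n := (hneg _ h1).ne
    refine ((h.ddu _ p).comp y h3).neg.congr_deriv ?_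
    rw [h2]
    field_simp
    ring

theorem energy_eq {S : ℝ → ℝ} {y : ℝ} (hy : v (S y) = y) :
    energy f (fun y => -deriv v (S y)) y = totalEnergy f v (S y) := by
  unfold energy totalEnergy
  rw [hy, neg_sq]

theorem exists_profile_of_branches (H : Nonlinearity m f β) (h : DecaySol m f u)
    (hv : DecaySol m f v) (hu0 : 0 < u 0) (hT : 0 < T) (huT : u T < -β) (hvT : v T = -u T)
    (hdu : ∀ r ∈ Ioo 0 T, deriv u r < 0) (hdu0 : deriv u T = 0) (hdv0 : deriv v T = 0)
    (ht : Terminal f v T I) : Nonempty (Profile m f β (u 0)) := by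
  have hβ := H.β_pos
  have hα := h.beta_lt_initial H hu0
  obtain ⟨S, hS, hSI⟩ := h.exists_branch isOpen_Ioo ordConnected_Ioo (I := Ioo 0 T)
    (fun r hr => hr.1) hdu
  have hanti := h.strictAntiOn_Icc le_rfl hdu
  have him : Ioo (u T) (u 0) ⊆ u '' Ioo 0 T := by
    intro y hy
    obtain ⟨x, hx, rfl⟩ := intermediate_value_Icc' hT.le
      (h.cont.mono Icc_subset_Ici_self) (Ioo_subset_Icc_self hy)
    refine ⟨x, ⟨lt_of_le_of_ne hx.1 ?_, lt_of_le_of_ne hx.2 ?_⟩, rfl⟩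
    · rintro rfl
      exact lt_irrefl _ hy.2
    · rintro rfl
      exact lt_irrefl _ hy.1
  have huTα : u T < u 0 := by linarith
  have hStop : Tendsto S (nhdsWithin (u 0) (Iio (u 0))) (nhdsWithin 0 (Ioi 0)) := by
    refine tendsto_inverse_top ?_ (hanti.mono Ioo_subset_Icc_self) (fun r hr => hr.1) ?_ ?_
    · filter_upwards [Ioo_mem_nhdsLT huTα] with y hy using hSI y (him hy)
    · intro d hd
      obtain ⟨c, hc⟩ := exists_between (lt_min hd hT)
      exact ⟨c, ⟨hc.1, hc.2.trans_le (min_le_right _ _)⟩, hc.2.trans_le (min_le_left _ _)⟩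
    · exact fun c hc => hanti ⟨le_rfl, hT.le⟩ (Ioo_subset_Icc_self hc) hc.1
  have hSbot : Tendsto S (nhdsWithin (u T) (Ioi (u T))) (nhdsWithin T (Iio T)) := by
    refine tendsto_inverse_bot ?_ (hanti.mono Ioo_subset_Icc_self) (fun r hr => hr.2) ?_ ?_
    · filter_upwards [Ioo_mem_nhdsGT huTα] with y hy using hSI y (him hy)
    · intro d hd
      obtain ⟨c, hc⟩ := exists_between (max_lt hd hT)
      exact ⟨c, ⟨(le_max_right _ _).trans_lt hc.1, hc.2⟩, (le_max_left _ _).trans_lt hc.1⟩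
    · exact fun c hc => hanti (Ioo_subset_Icc_self hc) ⟨hT.le, le_rfl⟩ hc.2
  obtain ⟨S', hS', hSI'⟩ := hv.exists_branch ht.isOpen ht.ordConnected
    (fun r hr => hT.trans (ht.gt r hr)) ht.deriv_neg
  have hantiT : ∀ r ∈ I, StrictAntiOn v (Icc T r) := fun r hr =>
    hv.strictAntiOn_Icc hT.le (fun t htt => ht.deriv_neg t (ht.init r hr htt))
  have hanti' : StrictAntiOn v I := fun x hx y hy hxy =>
    hantiT y hy ⟨(ht.gt x hx).le, hxy.le⟩ ⟨(ht.gt y hy).le, le_rfl⟩ hxy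
  have him' : Ioo 0 (-u T) ⊆ v '' I := by
    intro y hy
    obtain ⟨r, hr, hry, -⟩ := ht.decay y hy.1
    have hTr := ht.gt r hr
    obtain ⟨x, hx, rfl⟩ := intermediate_value_Icc' hTr.le
      (hv.cont.mono (Icc_subset_Ici_self.trans (Ici_subset_Ici.2 hT.le)))
      (⟨hry.le, by rw [hvT]; exact hy.2.le⟩ : y ∈ Icc (v r) (v T))
    refine ⟨x, ht.init r hr ⟨lt_of_le_of_ne hx.1 ?_, lt_of_le_of_ne hx.2 ?_⟩, rfl⟩
    · rintro rfl
      rw [hvT] at hy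
      exact lt_irrefl _ hy.2
    · rintro rfl
      exact lt_irrefl _ hry
  have hMpos : 0 < -u T := by linarith
  have hStop' : Tendsto S' (nhdsWithin (-u T) (Iio (-u T))) (nhdsWithin T (Ioi T)) := by
    refine tendsto_inverse_top ?_ hanti' ht.gt ?_ ?_
    · filter_upwards [Ioo_mem_nhdsLT hMpos] with y hy using hSI' y (him' hy)
    · intro d hd
      obtain ⟨r, hr, -⟩ := ht.decay 1 one_pos
      obtain ⟨c, hc⟩ := exists_between (lt_min hd (ht.gt r hr))
      exact ⟨c, ht.init r hr ⟨hc.1, hc.2.trans_le (min_le_right _ _)⟩,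
        hc.2.trans_le (min_le_left _ _)⟩
    · intro c hc
      rw [← hvT]
      exact hantiT c hc ⟨le_rfl, (ht.gt c hc).le⟩ ⟨(ht.gt c hc).le, le_rfl⟩ (ht.gt c hc)
  have hduT : Tendsto (deriv u) (nhdsWithin T (Iio T)) (nhds 0) := by
    rw [← hdu0]
    exact (h.ddu T hT).continuousAt.tendsto.mono_left nhdsWithin_le_nhds
  have hdvT : Tendsto (deriv v) (nhdsWithin T (Ioi T)) (nhds 0) := by
    rw [← hdv0]
    exact (hv.ddu T hT).continuousAt.tendsto.mono_left nhdsWithin_le_nhds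
  refine ⟨{
    r := S
    q := fun y => -deriv u (S y)
    r' := S'
    q' := fun y => -deriv v (S' y)
    M := -u T
    T := T
    hα := hα
    hM := by linarith
    dec := hS.mono (by rwa [neg_neg])
    energy_pos := ?_
    r_lim := hStop.mono_right nhdsWithin_le_nhds
    q_lim := by simpa using ((h.deriv_tendsto_zero H).comp hStop).neg
    p_lim := ?_
    T_pos := hT
    r_lim_min := by
      rw [neg_neg]
      exact hSbot.mono_right nhdsWithin_le_nhds
    q_lim_min := by
      rw [neg_neg]
      simpa using (hduT.comp hSbot).neg
    ret := hS'.mono him'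
    energy_pos' := ?_
    turning := ⟨hT, hStop'.mono_right nhdsWithin_le_nhds, by simpa using (hdvT.comp hStop').neg⟩
    decay := ?_ }⟩
  · intro s hs
    rw [neg_neg] at hs
    obtain ⟨h1, h2⟩ := hSI s (him hs)
    rw [energy_eq h2]
    refine lt_of_le_of_ne (h.totalEnergy_nonneg H h1.1) fun he => ?_
    have := h.eq_zero_of_totalEnergy H h1.1 he.symm h1.2.le
    linarith
  · have hf : 0 < f (u 0) := H.f_pos _ hα.le
    have hm : (0 : ℝ) < m + 2 := by positivity
    have hfu : Tendsto (fun r => f (u r)) (nhdsWithin 0 (Ioi 0)) (nhds (f (u 0))) :=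
      (H.cont.tendsto _).comp h.tendsto_zero
    have hlim := hfu.div (h.deriv_div_tendsto H).neg (by rw [neg_neg]; positivity)
    have e : f (u 0) / - -(f (u 0) / ((m : ℝ) + 2)) = m + 2 := by
      rw [neg_neg]
      field_simp
    rw [e] at hlim
    refine (hlim.comp hStop).congr' ?_
    filter_upwards [Ioo_mem_nhdsLT huTα] with y hy
    obtain ⟨h1, h2⟩ := hSI y (him hy)
    have p := h1.1
    have n := (hdu _ h1).ne
    simp only [Function.comp_apply, Pi.div_apply, h2]
    field_simp
  · intro s hs
    obtain ⟨h1, h2⟩ := hSI' s (him' hs)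
    rw [energy_eq h2]
    exact ht.energy_pos _ h1
  · intro ε hε
    obtain ⟨r, hr, hr1, hr2⟩ := ht.decay (min ε β) (lt_min hε hβ)
    have hmem : v r ∈ v '' I := ⟨r, hr, rfl⟩
    obtain ⟨h1, h2⟩ := hSI' _ hmem
    have hSr : S' (v r) = r := hanti'.injOn h1 hr h2
    refine ⟨v r, ⟨ht.pos r hr, hr1.trans_le (min_le_right _ _)⟩, ?_⟩
    rw [energy_eq h2, hSr]
    exact hr2.trans_le (min_le_left _ _)

theorem signChange_of_deriv_neg (h : DecaySol m f v) {z : ℝ} (ha : 0 ≤ a) (hz : z ∈ Ioo a b)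
    (hz0 : v z = 0) (hneg : ∀ r ∈ Ioo a b, deriv v r < 0) : SignChange v z := by
  have hanti := h.strictAntiOn_Icc ha hneg
  refine ⟨hz0, fun ε hε => ⟨?_, ?_⟩⟩
  · obtain ⟨x, hx⟩ := exists_between (max_lt (sub_lt_self z hε) hz.1)
    have h1 := (le_max_left _ _).trans_lt hx.1
    have h2 := (le_max_right _ _).trans_lt hx.1
    refine ⟨x, ⟨⟨h1, by linarith [hx.2]⟩, ha.trans_lt h2⟩, ?_⟩
    rw [← hz0]
    exact hanti ⟨h2.le, (hx.2.trans hz.2).le⟩ (Ioo_subset_Icc_self hz) hx.2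
  · obtain ⟨x, hx⟩ := exists_between (lt_min (lt_add_of_pos_right z hε) hz.2)
    have h1 := hx.2.trans_le (min_le_left _ _)
    have h2 := hx.2.trans_le (min_le_right _ _)
    refine ⟨x, ⟨⟨by linarith [hx.1], h1⟩, (ha.trans_lt hz.1).trans hx.1⟩, ?_⟩
    rw [← hz0]
    exact hanti (Ioo_subset_Icc_self hz) ⟨(hz.1.trans hx.1).le, h2.le⟩ hx.1

theorem exists_zero (h : DecaySol m f v) (ha : 0 ≤ a) (hab : a < b) (hva : 0 < v a)
    (hvb : v b < 0) : ∃ z ∈ Ioo a b, v z = 0 := by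
  obtain ⟨z, hz, hz0⟩ := intermediate_value_Ioo' hab.le
    (h.cont.mono (Icc_subset_Ici_self.trans (Ici_subset_Ici.2 ha)))
    (⟨hvb, hva⟩ : (0 : ℝ) ∈ Ioo (v b) (v a))
  exact ⟨z, hz, hz0⟩

theorem exists_profile (H : Nonlinearity m f β) (h : DecaySol m f u) (hu0 : 0 < u 0)
    (hc : ExactSignChanges u 1) : Nonempty (Profile m f β (u 0)) := by
  have hβ := H.β_pos
  have hα := h.beta_lt_initial H hu0
  obtain ⟨z, hz⟩ := ncard_eq_one.1 hc.2
  have hf : 0 < f (u 0) := H.f_pos _ hα.le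
  have hneg : ∀ᶠ r in nhdsWithin 0 (Ioi 0), deriv u r < 0 := by
    have hlt : -(f (u 0) / ((m : ℝ) + 2)) < 0 := by
      have : 0 < f (u 0) / ((m : ℝ) + 2) := by positivity
      linarith
    filter_upwards [(h.deriv_div_tendsto H).eventually (gt_mem_nhds hlt), self_mem_nhdsWithin]
      with r hr hr0
    by_contra hn
    exact absurd hr (not_lt.2 (div_nonneg (not_lt.1 hn) (le_of_lt hr0)))
  rcases h.terminal_or_turning H le_rfl hneg with ⟨I, hI⟩ | ⟨T, hT, hdu, hdu0, huT⟩
  · have hzm : z ∈ {z | 0 < z ∧ SignChange u z} := by rw [hz]; rfl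
    obtain ⟨x, hx, hxn⟩ := (hzm.2.2 1 one_pos).2
    by_cases hxI : x ∈ I
    · linarith [hI.pos x hxI]
    · linarith [hI.zero x hx.2 hxI]
  · obtain ⟨z₁, hz₁, hz₁0⟩ := h.exists_zero le_rfl hT hu0 (by linarith)
    have hs₁ := h.signChange_of_deriv_neg le_rfl hz₁ hz₁0 hdu
    have hv := h.neg H
    have hdv0 : deriv (fun r => -u r) T = 0 := by
      rw [deriv_neg_fun]
      simpa using hdu0
    have hneg' : ∀ᶠ r in nhdsWithin T (Ioi T), deriv (fun r => -u r) r < 0 := by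
      refine eventually_neg_right (hv.ddu T hT) hdv0 ?_
      rw [hdv0]
      linarith [H.f_pos (-u T) (by linarith)]
    rcases hv.terminal_or_turning H hT.le hneg' with ⟨I, hI⟩ | ⟨T', hT', hdv, -, hvT'⟩
    · exact h.exists_profile_of_branches H hv hu0 hT huT rfl hdu hdu0 hdv0 hI
    · obtain ⟨z₂, hz₂, hz₂0⟩ := hv.exists_zero hT.le hT' (by linarith) (by linarith)
      have hs₂ := hv.signChange_of_deriv_neg hT.le hz₂ hz₂0 hdv
      have hs₂' : SignChange u z₂ := by
        refine ⟨by linarith, fun ε hε => ?_⟩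
        obtain ⟨⟨x, hx, hx'⟩, ⟨y, hy, hy'⟩⟩ := hs₂.2 ε hε
        exact ⟨⟨y, hy, by linarith⟩, ⟨x, hx, by linarith⟩⟩
      have m₁ : z₁ ∈ {z | 0 < z ∧ SignChange u z} := ⟨hz₁.1, hs₁⟩
      have m₂ : z₂ ∈ {z | 0 < z ∧ SignChange u z} := ⟨hT.trans hz₂.1, hs₂'⟩
      rw [hz] at m₁ m₂
      have e : z₁ = z₂ := m₁.trans m₂.symm
      linarith [hz₁.2, hz₂.1]

end DecaySol

/-! ### Uniqueness for the initial value problem along decaying solutions -/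

theorem exists_lipschitz_of_continuousAt_deriv {g g' : ℝ → ℝ} {c : ℝ}
    (hg : ∀ᶠ x in nhds c, HasDerivAt g (g' x) x) (hc : ContinuousAt g' c) :
    ∃ K, 0 ≤ K ∧ ∃ t ∈ nhds c, ∀ x ∈ t, ∀ y ∈ t, |g x - g y| ≤ K * |x - y| := by
  obtain ⟨K, t, ht, hK⟩ :=
    (hasStrictDerivAt_of_hasDerivAt_of_continuousAt hg hc).hasStrictFDerivAt.exists_lipschitzOnWith
  refine ⟨K, K.2, t, ht, fun x hx y hy => ?_⟩
  simpa [Real.dist_eq] using hK.dist_le_mul x hx y hy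

theorem exists_forall_Ioo_of_eventually {P : ℝ → Prop} {a : ℝ}
    (h : ∀ᶠ x in nhdsWithin a (Ioi a), P x) : ∃ c, a < c ∧ ∀ x ∈ Ioo a c, P x := by
  obtain ⟨c, hc, hP⟩ := mem_nhdsGT_iff_exists_Ioo_subset.1 h
  exact ⟨c, hc, fun x hx => hP hx⟩

namespace DecaySol

variable {m : ℕ} {f u v : ℝ → ℝ} {β a c d r : ℝ}

theorem eventuallyEq_of_pos (H : Nonlinearity m f β) (hu : DecaySol m f u) (hv : DecaySol m f v)
    (ha : 0 ≤ a) (hc : 0 < c)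
    (hu0 : Tendsto u (nhdsWithin a (Ioi a)) (nhds c))
    (hv0 : Tendsto v (nhdsWithin a (Ioi a)) (nhds c))
    (hu1 : Tendsto (deriv u) (nhdsWithin a (Ioi a)) (nhds d))
    (hv1 : Tendsto (deriv v) (nhdsWithin a (Ioi a)) (nhds d)) :
    ∃ b, a < b ∧ ∀ s ∈ Ioo a b, u s = v s := by
  obtain ⟨K, hK0, t, ht, hK⟩ := exists_lipschitz_of_continuousAt_deriv (g := f) (g' := deriv f)
    (c := c) ((eventually_gt_nhds hc).mono fun x hx => H.f_diff x hx)
    (H.f'_cont.continuousAt (Ioi_mem_nhds hc))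
  obtain ⟨b, hab, hb⟩ := exists_forall_Ioo_of_eventually ((hu0.eventually ht).and (hv0.eventually ht))
  refine ⟨b, hab, fun s hs => ?_⟩
  have key := eq_zero_of_deriv_le_mul (a := a) (c := b) (C := 1 + K)
    (N := fun x => (u x - v x) ^ 2 + (deriv u x - deriv v x) ^ 2)
    (N' := fun x => 2 * (u x - v x) * (deriv u x - deriv v x)
      + 2 * (deriv u x - deriv v x)
        * (-((m + 1) / x * (deriv u x - deriv v x)) - (f (u x) - f (v x))))
    (fun x hx => by
      have hx0 : 0 < x := ha.trans_lt hx.1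
      refine ((((hu.du x hx0).sub (hv.du x hx0)).pow 2).add
        (((hu.ddu x hx0).sub (hv.ddu x hx0)).pow 2)).congr_deriv ?_
      simp only [Pi.sub_apply]
      push_cast
      ring)
    (fun x hx => by
      have hx0 : 0 < x := ha.trans_lt hx.1
      have h1 : |f (u x) - f (v x)| ≤ K * |u x - v x| := hK _ (hb x hx).1 _ (hb x hx).2
      have hq : (0 : ℝ) ≤ (m + 1) / x := by positivity
      set w := u x - v x
      set p := deriv u x - deriv v x
      set g := f (u x) - f (v x)
      have h2 : 2 * w * p ≤ w ^ 2 + p ^ 2 := two_mul_le_add_sq w p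
      have h3 : -(p * g) ≤ K * (|p| * |w|) := by
        calc -(p * g) ≤ |p * g| := neg_le_abs _
          _ = |p| * |g| := abs_mul _ _
          _ ≤ |p| * (K * |w|) := by gcongr
          _ = _ := by ring
      have h4 : 2 * (|p| * |w|) ≤ w ^ 2 + p ^ 2 := by
        have := two_mul_le_add_sq |p| |w|
        rw [sq_abs, sq_abs] at this
        linarith
      have h5 : 0 ≤ (m + 1) / x * p ^ 2 := by positivity
      have h6 := mul_le_mul_of_nonneg_left h4 hK0
      nlinarith)
    (fun x _ => by positivity)
    (by
      have := ((hu0.sub hv0).pow 2).add ((hu1.sub hv1).pow 2)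
      simpa using this) s hs
  have h1 := sq_nonneg (u s - v s)
  have h2 := sq_nonneg (deriv u s - deriv v s)
  have h3 : (u s - v s) ^ 2 = 0 := le_antisymm (by linarith) h1
  exact sub_eq_zero.1 (pow_eq_zero_iff two_ne_zero |>.1 h3)

theorem eventuallyEq_of_ne_zero (H : Nonlinearity m f β) (hu : DecaySol m f u)
    (hv : DecaySol m f v) (ha : 0 ≤ a) (hc : c ≠ 0)
    (hu0 : Tendsto u (nhdsWithin a (Ioi a)) (nhds c))
    (hv0 : Tendsto v (nhdsWithin a (Ioi a)) (nhds c))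
    (hu1 : Tendsto (deriv u) (nhdsWithin a (Ioi a)) (nhds d))
    (hv1 : Tendsto (deriv v) (nhdsWithin a (Ioi a)) (nhds d)) :
    ∃ b, a < b ∧ ∀ s ∈ Ioo a b, u s = v s := by
  rcases hc.lt_or_gt with hc | hc
  · obtain ⟨b, hab, hb⟩ := eventuallyEq_of_pos (c := -c) (d := -d) H (hu.neg H) (hv.neg H) ha
      (neg_pos.2 hc) hu0.neg hv0.neg (by rw [deriv_neg_fun]; exact hu1.neg)
      (by rw [deriv_neg_fun]; exact hv1.neg)
    exact ⟨b, hab, fun s hs => neg_injective (hb s hs)⟩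
  · exact eventuallyEq_of_pos H hu hv ha hc hu0 hv0 hu1 hv1

theorem eventuallyEq_of_deriv_ne_zero (H : Nonlinearity m f β) (hu : DecaySol m f u)
    (hv : DecaySol m f v) (ha : 0 < a) (h0 : u a = v a) (h1 : deriv u a = deriv v a)
    (hd : deriv u a ≠ 0) :
    ∃ b, a < b ∧ ∀ s ∈ Ioo a b, u s = v s := by
  obtain ⟨L, hL0, t, ht, hL⟩ := exists_lipschitz_of_continuousAt_deriv (g := Fint f) (g' := f)
    (c := u a) (Eventually.of_forall H.F_deriv) H.cont.continuousAt
  have hu0 : Tendsto u (nhdsWithin a (Ioi a)) (nhds (u a)) :=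
    (hu.du a ha).continuousAt.mono_left nhdsWithin_le_nhds
  have hv0 : Tendsto v (nhdsWithin a (Ioi a)) (nhds (u a)) :=
    h0 ▸ (hv.du a ha).continuousAt.mono_left nhdsWithin_le_nhds
  have hS : Tendsto (fun x => |deriv u x + deriv v x|) (nhdsWithin a (Ioi a))
      (nhds |deriv u a + deriv v a|) :=
    ((hu.ddu a ha).continuousAt.add (hv.ddu a ha).continuousAt).abs.mono_left nhdsWithin_le_nhds
  have hpos : 0 < |deriv u a| := abs_pos.2 hd
  have hlt : |deriv u a| < |deriv u a + deriv v a| := by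
    rw [← h1, ← two_mul, abs_mul, abs_two]
    linarith
  obtain ⟨b, hab, hb⟩ := exists_forall_Ioo_of_eventually
    (((hu0.eventually ht).and (hv0.eventually ht)).and (hS.eventually (lt_mem_nhds hlt)))
  refine ⟨b, hab, fun s hs => ?_⟩
  set δ := |deriv u a|
  have key := eq_zero_of_deriv_le_mul (a := a) (c := b)
    (C := (2 / δ + 4 * (m + 1) / a) * (1 + 2 * L))
    (N := fun x => (u x - v x) ^ 2 + (totalEnergy f u x - totalEnergy f v x) ^ 2)
    (N' := fun x => 2 * (u x - v x) * (deriv u x - deriv v x)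
      + 2 * (totalEnergy f u x - totalEnergy f v x)
        * (-(2 * (m + 1) / x * (deriv u x ^ 2 - deriv v x ^ 2))))
    (fun x hx => by
      have hx0 : 0 < x := ha.trans hx.1
      refine ((((hu.du x hx0).sub (hv.du x hx0)).pow 2).add
        (((hu.totalEnergy_deriv H hx0).sub (hv.totalEnergy_deriv H hx0)).pow 2)).congr_deriv ?_
      simp only [Pi.sub_apply]
      push_cast
      ring)
    (fun x hx => by
      have hx0 : 0 < x := ha.trans hx.1
      have hF : |Fint f (u x) - Fint f (v x)| ≤ L * |u x - v x| :=
        hL _ (hb x hx).1.1 _ (hb x hx).1.2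
      have hSx : δ ≤ |deriv u x + deriv v x| := (hb x hx).2.le
      have hp : deriv u x ^ 2 - deriv v x ^ 2 = totalEnergy f u x - totalEnergy f v x
          - 2 * (Fint f (u x) - Fint f (v x)) := by
        unfold totalEnergy
        ring
      have hD : |deriv u x - deriv v x| * δ ≤ |deriv u x ^ 2 - deriv v x ^ 2| := by
        calc |deriv u x - deriv v x| * δ ≤ |deriv u x - deriv v x| * |deriv u x + deriv v x| := by
              gcongr
          _ = |deriv u x ^ 2 - deriv v x ^ 2| := by
              rw [← abs_mul]
              ring_nf
      set w := u x - v x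
      set g := totalEnergy f u x - totalEnergy f v x
      set D := deriv u x - deriv v x
      set p := deriv u x ^ 2 - deriv v x ^ 2
      have hp1 : |p| ≤ |g| + 2 * L * |w| := by
        rw [hp]
        refine (abs_sub _ _).trans ?_
        rw [abs_mul, abs_two]
        linarith
      have hgw : 2 * (|g| * |w|) ≤ w ^ 2 + g ^ 2 := by
        have := two_mul_le_add_sq |g| |w|
        rw [sq_abs, sq_abs] at this
        linarith
      have hw2 := sq_abs w
      have hg2 := sq_abs g
      have hwp : |w| * |p| ≤ (1 + 2 * L) * (w ^ 2 + g ^ 2) := by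
        have h2 := mul_le_mul_of_nonneg_left hp1 (abs_nonneg w)
        nlinarith [mul_nonneg hL0 (sq_nonneg g), sq_nonneg w, sq_nonneg g]
      have hgp : |g| * |p| ≤ (1 + 2 * L) * (w ^ 2 + g ^ 2) := by
        have h2 := mul_le_mul_of_nonneg_left hp1 (abs_nonneg g)
        have h3 := mul_le_mul_of_nonneg_left hgw hL0
        nlinarith [mul_nonneg hL0 (add_nonneg (sq_nonneg w) (sq_nonneg g)), sq_nonneg w]
      have hD' : |D| ≤ |p| / δ := (le_div_iff₀ hpos).2 hD
      have t1 : 2 * w * D ≤ 2 / δ * ((1 + 2 * L) * (w ^ 2 + g ^ 2)) := by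
        calc 2 * w * D = 2 * (w * D) := by ring
          _ ≤ 2 * (|w| * |D|) := by rw [← abs_mul]; gcongr; exact le_abs_self _
          _ ≤ 2 * (|w| * (|p| / δ)) := by gcongr
          _ = 2 / δ * (|w| * |p|) := by ring
          _ ≤ _ := by gcongr
      have t2 : 2 * g * (-(2 * (m + 1) / x * p))
          ≤ 4 * (m + 1) / a * ((1 + 2 * L) * (w ^ 2 + g ^ 2)) := by
        calc 2 * g * (-(2 * (m + 1) / x * p)) = 4 * (m + 1) / x * (-(g * p)) := by ring
          _ ≤ 4 * (m + 1) / x * (|g| * |p|) := by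
              rw [← abs_mul]; gcongr; exact neg_le_abs _
          _ ≤ 4 * (m + 1) / a * (|g| * |p|) := by
              have := hx.1.le
              gcongr
          _ ≤ _ := by gcongr
      calc _ ≤ _ := add_le_add t1 t2
        _ = _ := by ring)
    (fun x _ => by positivity)
    (by
      have hE : totalEnergy f u a = totalEnergy f v a := by
        unfold totalEnergy
        rw [h0, h1]
      have := (((hu.du a ha).continuousAt.sub (hv.du a ha).continuousAt).pow 2).add
        (((hu.totalEnergy_deriv H ha).continuousAt.sub
          (hv.totalEnergy_deriv H ha).continuousAt).pow 2)
      have := this.tendsto.mono_left (nhdsWithin_le_nhds (s := Ioi a))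
      simp only [Pi.sub_apply, Pi.pow_apply, Pi.add_apply, h0, hE, sub_self, ne_eq,
        OfNat.ofNat_ne_zero, not_false_eq_true, zero_pow, add_zero] at this
      exact this) s hs
  have h1 := sq_nonneg (u s - v s)
  have h2 := sq_nonneg (totalEnergy f u s - totalEnergy f v s)
  have h3 : (u s - v s) ^ 2 = 0 := le_antisymm (by linarith) h1
  exact sub_eq_zero.1 (pow_eq_zero_iff two_ne_zero |>.1 h3)

/-- Agreement on `[0, a]` continues slightly past `a`. -/
theorem exists_eq_right (H : Nonlinearity m f β) (hu : DecaySol m f u) (hv : DecaySol m f v)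
    (hpos : 0 < u 0) (ha : 0 ≤ a) (heq : ∀ s ∈ Icc 0 a, u s = v s) :
    ∃ b, a < b ∧ ∀ s ∈ Ioo a b, u s = v s := by
  rcases ha.eq_or_lt with rfl | ha
  · have h0 := heq 0 ⟨le_rfl, le_rfl⟩
    exact eventuallyEq_of_pos H hu hv le_rfl hpos hu.tendsto_zero
      (h0 ▸ hv.tendsto_zero) (hu.deriv_tendsto_zero H) (hv.deriv_tendsto_zero H)
  have h0 := heq a ⟨ha.le, le_rfl⟩
  have h1 : deriv u a = deriv v a := by
    have huniq := uniqueDiffOn_Icc ha a ⟨ha.le, le_rfl⟩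
    exact huniq.eq_deriv _ (hu.du a ha).hasDerivWithinAt
      ((hv.du a ha).hasDerivWithinAt.congr heq h0)
  by_cases hd : deriv u a = 0
  · by_cases hc : u a = 0
    · have hEu : totalEnergy f u a = 0 := by simp [totalEnergy, hd, hc, H.F_zero]
      have hEv : totalEnergy f v a = 0 := by simp [totalEnergy, ← h1, hd, ← h0, hc, H.F_zero]
      exact ⟨a + 1, by linarith, fun s hs => by
        rw [hu.eq_zero_of_totalEnergy H ha hEu hs.1.le, hv.eq_zero_of_totalEnergy H ha hEv hs.1.le]⟩
    · refine eventuallyEq_of_ne_zero (d := deriv u a) H hu hv ha.le hc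
        ((hu.du a ha).continuousAt.mono_left nhdsWithin_le_nhds) ?_
        ((hu.ddu a ha).continuousAt.mono_left nhdsWithin_le_nhds) ?_
      · rw [h0]
        exact (hv.du a ha).continuousAt.mono_left nhdsWithin_le_nhds
      · rw [h1]
        exact (hv.ddu a ha).continuousAt.mono_left nhdsWithin_le_nhds
  · exact eventuallyEq_of_deriv_ne_zero H hu hv ha h0 h1 hd

/-- Decaying solutions with the same positive initial value coincide. -/
theorem eqOn_of_initial_eq (H : Nonlinearity m f β) (hu : DecaySol m f u) (hv : DecaySol m f v)
    (hpos : 0 < u 0) (h0 : u 0 = v 0) : EqOn u v (Ici 0) := by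
  by_contra hne
  obtain ⟨x, hx0, hx⟩ : ∃ x, 0 ≤ x ∧ u x ≠ v x := by
    simp only [EqOn, mem_Ici] at hne
    push Not at hne
    exact hne
  set T : Set ℝ := {r | 0 ≤ r ∧ ∀ s ∈ Icc 0 r, u s = v s} with hT
  have hT0 : (0 : ℝ) ∈ T := ⟨le_rfl, fun s hs => by rwa [le_antisymm hs.2 hs.1]⟩
  have hTb : BddAbove T := ⟨x, fun r hr => by
    by_contra hlt
    exact hx (hr.2 x ⟨hx0, (not_le.1 hlt).le⟩)⟩
  set a := sSup T
  have ha : 0 ≤ a := le_csSup hTb hT0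
  have hlt : ∀ s ∈ Ico 0 a, u s = v s := fun s hs => by
    obtain ⟨r, hr, hsr⟩ := exists_lt_of_lt_csSup ⟨0, hT0⟩ hs.2
    exact hr.2 s ⟨hs.1, hsr.le⟩
  have haa : u a = v a := by
    rcases ha.eq_or_lt with ha' | ha'
    · rwa [← ha']
    · have hl : ∀ᶠ s in nhdsWithin a (Iio a), u s = v s := by
        filter_upwards [Ioo_mem_nhdsLT ha'] with s hs using hlt s ⟨hs.1.le, hs.2⟩
      exact tendsto_nhds_unique_of_eventuallyEq
        ((hu.du a ha').continuousAt.mono_left nhdsWithin_le_nhds)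
        ((hv.du a ha').continuousAt.mono_left nhdsWithin_le_nhds) hl
  have hle : ∀ s ∈ Icc 0 a, u s = v s := fun s hs => by
    rcases hs.2.eq_or_lt with h | h
    · rwa [h]
    · exact hlt s ⟨hs.1, h⟩
  obtain ⟨b, hab, hb⟩ := exists_eq_right H hu hv hpos ha hle
  have hmem : (a + b) / 2 ∈ T := ⟨by linarith, fun s hs => by
    rcases le_or_gt s a with h | h
    · exact hle s ⟨hs.1, h⟩
    · exact hb s ⟨h, by linarith [hs.2]⟩⟩
  have := le_csSup hTb hmem
  linarith

end DecaySol

end RadialODE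

/-- **Theorem 1.2 (second part).** For `n > 2`, under (f1), (f2), (f5), (f6), problem (P)
has at most one solution with `u 0 > 0` having exactly one sign change in `(0,∞)`. -/
theorem uniqueness_second_bound_state'
    (n : ℕ) (hn : 2 < n)
    (f : ℝ → ℝ) (b β : ℝ) (hf : Continuous f)
    (h1 : Hf1 f b β) (h2 : Hf2 f) (h5 : Hf5 f β) (h6 : Hf6 n f β)
    (u₁ u₂ : ℝ → ℝ) (hs₁ : BoundState n f u₁) (hs₂ : BoundState n f u₂)
    (hp₁ : 0 < u₁ 0) (hp₂ : 0 < u₂ 0)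
    (hc₁ : ExactSignChanges u₁ 1) (hc₂ : ExactSignChanges u₂ 1) :
    u₁ 0 = u₂ 0 ∧ EqOn u₁ u₂ (Ici 0) := by
  obtain ⟨m, rfl⟩ := Nat.exists_eq_add_of_le' hn.le
  have H := RadialODE.Nonlinearity.of_hypotheses (by omega) hf h1 h2 h5 h6
  have hd₁ := RadialODE.DecaySol.of_boundState hs₁
  have hd₂ := RadialODE.DecaySol.of_boundState hs₂
  obtain ⟨P₁⟩ := hd₁.exists_profile H hp₁ hc₁
  obtain ⟨P₂⟩ := hd₂.exists_profile H hp₂ hc₂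
  have h0 : u₁ 0 = u₂ 0 :=
    le_antisymm (not_lt.1 (P₂.not_lt H P₁)) (not_lt.1 (P₁.not_lt H P₂))
  exact ⟨h0, hd₁.eqOn_of_initial_eq H hd₂ hp₁ h0⟩
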